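/- In G(𝒜): suppose x = g f₁^m g⁻¹ and y = h f₂^n h⁻¹ for some g, h ∈ G(𝒜) and integers m, n with p₁ ∤ m and p₂ ∤ n, and suppose v(x,y) = e and v(y,x) = e. Then there exists z ∈ G(𝒜) such that x = z f₁ z⁻¹ and y = z f₂ z⁻¹. -/

import Mathlib

/-!
Common setup: an `L`-structure `𝒜` for a language whose symbols are enumerated
(`m`-th symbol, `m ≥ 1`, each a function or relation symbol of arity ≥ 1), and the
presented group `G(𝒜)` of Harrison-Trainor and Ho.
-/

/-- A first-order language with symbols enumerated by `ℕ` (the `m`-th symbol, for `m ≥ 1`,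
is a function symbol if `isFunc m`, and a relation symbol otherwise, of arity `arity m ≥ 1`),
together with an interpretation on a domain `A`: `funcInterp m` interprets the `m`-th symbol
when it is a function symbol, and `relInterp m` when it is a relation symbol. -/
structure IndexedStructure where
  A : Type
  arity : ℕ → ℕ
  arity_pos : ∀ m, 1 ≤ m → 1 ≤ arity m
  isFunc : ℕ → Prop
  funcInterp : ∀ m, (Fin (arity m) → A) → A
  relInterp : ∀ m, (Fin (arity m) → A) → Prop

/-- The generating set of `G(𝒜)`: one generator for each element of the domain `A`,
plus five further generators `b`, `c`, `d`, `f₁`, `f₂`. -/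
inductive GenSym (A : Type) : Type
  | elt : A → GenSym A
  | b : GenSym A
  | c : GenSym A
  | d : GenSym A
  | f1 : GenSym A
  | f2 : GenSym A

/-- `chainProd lo x y = x y^{(lo+1)²} x y^{(lo+2)²} ⋯ x y^{(lo+1000)²}`.
So `u_A = chainProd 0`, `u_b = chainProd 1000`, `u_c = chainProd 2000`,
`u_d = chainProd 3000`, and `v = chainProd 4000`. -/
def chainProd {G : Type*} [Group G] (lo : ℕ) (x y : G) : G :=
  ((List.range 1000).map fun k => x * y ^ ((lo + k + 1) ^ 2)).prod

/-- `wProd m xs y = x₁⋯xₙ y^{100m+1} x₁⋯xₙ y^{100m+2} ⋯ x₁⋯xₙ y^{100m+100}`,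
i.e. the word `w_m(x₁,…,xₙ,y)`. -/
def wProd {G : Type*} [Group G] (m : ℕ) {n : ℕ} (xs : Fin n → G) (y : G) : G :=
  ((List.range 100).map fun k => (List.ofFn xs).prod * y ^ (100 * m + k + 1)).prod

/-- The set of relators of the presentation of `G(𝒜)`. -/
def grpRels (S : IndexedStructure) (p₁ p₂ : ℕ) : Set (FreeGroup (GenSym S.A)) :=
  {FreeGroup.of GenSym.f1 ^ p₁, FreeGroup.of GenSym.f2 ^ p₂,
    chainProd 4000 (FreeGroup.of GenSym.f1) (FreeGroup.of GenSym.f2),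
    chainProd 4000 (FreeGroup.of GenSym.f2) (FreeGroup.of GenSym.f1),
    chainProd 1000 (FreeGroup.of GenSym.b) (FreeGroup.of GenSym.f1),
    chainProd 1000 (FreeGroup.of GenSym.b) (FreeGroup.of GenSym.f2),
    chainProd 2000 (FreeGroup.of GenSym.c) (FreeGroup.of GenSym.f1),
    chainProd 2000 (FreeGroup.of GenSym.c) (FreeGroup.of GenSym.f2),
    chainProd 3000 (FreeGroup.of GenSym.d) (FreeGroup.of GenSym.f1),
    chainProd 3000 (FreeGroup.of GenSym.d) (FreeGroup.of GenSym.f2)}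
  ∪ {r | ∃ a : S.A,
      r = chainProd 0 (FreeGroup.of (GenSym.elt a)) (FreeGroup.of GenSym.c) ∨
      r = chainProd 0 (FreeGroup.of (GenSym.elt a)) (FreeGroup.of GenSym.d)}
  ∪ {r | ∃ m, 1 ≤ m ∧ S.isFunc m ∧ ∃ as : Fin (S.arity m) → S.A,
      r = wProd m (fun i => FreeGroup.of (GenSym.elt (as i))) (FreeGroup.of GenSym.b) *
        (FreeGroup.of (GenSym.elt (S.funcInterp m as)))⁻¹}
  ∪ {r | ∃ m, 1 ≤ m ∧ ¬ S.isFunc m ∧ ∃ as : Fin (S.arity m) → S.A,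
      S.relInterp m as ∧
      r = wProd m (fun i => FreeGroup.of (GenSym.elt (as i))) (FreeGroup.of GenSym.b)}

/-- The group `G(𝒜)`, presented on the generators `GenSym A` with relators `grpRels`. -/
abbrev GA (S : IndexedStructure) (p₁ p₂ : ℕ) : Type :=
  PresentedGroup (grpRels S p₁ p₂)

/-- The image in `G(𝒜)` of a generator. -/
def gen (S : IndexedStructure) (p₁ p₂ : ℕ) (g : GenSym S.A) : GA S p₁ p₂ :=
  PresentedGroup.of g

/-!
In the free group on the generators, a cyclically reduced relator translates along an axis, the
bi-infinite path in the Cayley tree which reads the relator periodically. The translates of these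
axes overlap in less than a twelfth of a period. Start from a point of the tree and repeatedly
adjoin all axes meeting the convex set built so far, together with the images of the result under
the translations along them. The sets obtained (windmills) stay convex, and following a geodesic
through them proves Greendlinger's lemma: a nonempty reduced word that is trivial in `G(𝒜)`
contains about three quarters of a relator.

Let `H` be a shortest word spelling an element of the double coset `⟨f₁⟩ g⁻¹ h ⟨f₂⟩`. Up to
conjugation, `v(x, y)` is spelled by the reduced word `∏ f₁ ^ M H f₂ ^ Nᵢ H⁻¹`, where `M` and `Nᵢ`
are the residues of least absolute value of `m` mod `p₁` and of `n i²` mod `p₂`. If `H` is nonempty,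
the long piece of a relator in this word covers more than half of the relator inside one copy of
`H` or `H⁻¹`, so that `H` could be shortened. If `H` is empty, the piece comes from `v(f₁, f₂)`, so
`M = ±1` and two consecutive `Nᵢ` are consecutive squares up to sign. Eliminating `n` from the two
resulting congruences leaves only `m ≡ 1` and `n ≡ 1`.
-/

open scoped Pointwise

/-! ### Trees -/

/-- A left-invariant metric with values in `ℕ` on a group, behaving like the vertex metric of a
simplicial tree: triples have medians (`exists_median`), and geodesics sharing a nontrivial
segment concatenate (`dist_glue`). -/
structure TreeMetric (G : Type*) [Group G] where
  dist : G → G → ℕ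
  dist_self : ∀ x, dist x x = 0
  dist_comm : ∀ x y, dist x y = dist y x
  dist_triangle : ∀ x y z, dist x z ≤ dist x y + dist y z
  eq_of_dist_eq_zero : ∀ x y, dist x y = 0 → x = y
  dist_mul_left : ∀ g x y, dist (g * x) (g * y) = dist x y
  exists_median : ∀ x y z, ∃ m, dist x m + dist m y = dist x y ∧
    dist y m + dist m z = dist y z ∧ dist x m + dist m z = dist x z
  dist_glue : ∀ x p q y, dist x p + dist p q = dist x q → dist p q + dist q y = dist p y →
    p ≠ q → dist x y = dist x p + dist p q + dist q y

namespace TreeMetric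
variable {G : Type*} [Group G] (T : TreeMetric G)

/-- `m` lies on the geodesic from `x` to `y`. -/
def Btw (x m y : G) : Prop := T.dist x m + T.dist m y = T.dist x y

/-- `C` contains the geodesic between any two of its points. -/
def IsConvex (C : Set G) : Prop := ∀ x ∈ C, ∀ y ∈ C, ∀ z, T.Btw x z y → z ∈ C

/-- The closed `1`-neighbourhood of `Q`. -/
def thickening (Q : Set G) : Set G := {x | ∃ q ∈ Q, T.dist q x ≤ 1}

theorem subset_thickening (Q : Set G) : Q ⊆ T.thickening Q :=
  fun x hx => ⟨x, hx, by simp only [T.dist_self, zero_le]⟩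

variable {T}

theorem Btw.symm {x m y : G} (h : T.Btw x m y) : T.Btw y m x := by
  unfold Btw at *
  rw [T.dist_comm y m, T.dist_comm m x, T.dist_comm y x]; omega

theorem btw_right (x y : G) : T.Btw x y y := by simp only [Btw, T.dist_self, add_zero]

theorem exists_btw_median (x y z : G) : ∃ m, T.Btw x m y ∧ T.Btw y m z ∧ T.Btw x m z :=
  T.exists_median x y z

theorem btw_of_btw_of_btw_left {x p q y : G} (h₁ : T.Btw x p q) (h₂ : T.Btw p q y) (h : p ≠ q) :
    T.Btw x p y := by
  have := T.dist_glue x p q y h₁ h₂ h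
  unfold Btw at *
  omega

theorem btw_of_btw_of_btw_right {x p q y : G} (h₁ : T.Btw x p q) (h₂ : T.Btw p q y) (h : p ≠ q) :
    T.Btw x q y := by
  have := T.dist_glue x p q y h₁ h₂ h
  unfold Btw at *
  omega

theorem Btw.trans_left {x t m y : G} (h : T.Btw x m y) (ht : T.Btw x t m) : T.Btw x t y := by
  have := T.dist_triangle x t y
  have := T.dist_triangle t m y
  unfold Btw at *
  omega

theorem Btw.right_of_trans_left {x t m y : G} (h : T.Btw x m y) (ht : T.Btw x t m) :
    T.Btw t m y := by
  have := T.dist_triangle x t y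
  have := T.dist_triangle t m y
  unfold Btw at *
  omega

theorem Btw.trans_right {x t m y : G} (h : T.Btw x m y) (ht : T.Btw m t y) : T.Btw x t y :=
  (h.symm.trans_left ht.symm).symm

theorem Btw.left_of_trans_right {x t m y : G} (h : T.Btw x m y) (ht : T.Btw m t y) :
    T.Btw x m t :=
  (h.symm.right_of_trans_left ht.symm).symm

theorem Btw.antisymm {x z m : G} (h₁ : T.Btw x z m) (h₂ : T.Btw x m z) : z = m := by
  have := T.dist_comm z m
  unfold Btw at *
  exact T.eq_of_dist_eq_zero _ _ (by omega)

theorem Btw.eq_of_self {x m : G} (h : T.Btw x m x) : m = x := by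
  unfold Btw at h
  rw [T.dist_self] at h
  exact T.eq_of_dist_eq_zero _ _ (by omega)

theorem Btw.total {x y z m : G} (hz : T.Btw x z y) (hm : T.Btw x m y) :
    T.Btw x z m ∨ T.Btw x m z := by
  obtain ⟨w, hxz, hzm, hxm⟩ := T.exists_btw_median x z m
  rcases eq_or_ne w z with rfl | hwz
  · exact Or.inl hxm
  rcases eq_or_ne w m with rfl | hwm
  · exact Or.inr hxz
  have hmz : T.Btw m z y :=
    btw_of_btw_of_btw_right hzm.symm (hz.right_of_trans_left hxz) hwz
  have hzm' : T.Btw z m y := btw_of_btw_of_btw_right hzm (hm.right_of_trans_left hxm) hwm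
  obtain rfl := hmz.symm.antisymm hzm'.symm
  exact Or.inl (btw_right x z)

theorem Btw.or_of_point {x y z : G} (h : T.Btw x z y) (w : G) : T.Btw x z w ∨ T.Btw w z y := by
  obtain ⟨m, hxy, hyw, hxw⟩ := T.exists_btw_median x y w
  rcases h.total hxy with hz | hz
  · exact Or.inl (hxw.trans_left hz)
  · exact Or.inr (hyw.symm.trans_right (h.right_of_trans_left hz))

theorem btw_mul_left_iff (g : G) {x m y : G} : T.Btw (g * x) (g * m) (g * y) ↔ T.Btw x m y := by
  simp only [Btw, T.dist_mul_left]

theorem IsConvex.smul {C : Set G} (hC : T.IsConvex C) (g : G) : T.IsConvex (g • C) := by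
  rintro _ ⟨x, hx, rfl⟩ _ ⟨y, hy, rfl⟩ z hz
  refine ⟨g⁻¹ * z, hC x hx y hy _ ?_, mul_inv_cancel_left g z⟩
  rw [← btw_mul_left_iff g, mul_inv_cancel_left]
  exact hz

theorem IsConvex.thickening {C : Set G} (hC : T.IsConvex C) : T.IsConvex (T.thickening C) := by
  rintro x ⟨q, hq, hqx⟩ y ⟨r, hr, hry⟩ z hz
  rcases hz.or_of_point q with hzq | hzq
  · refine ⟨q, hq, ?_⟩
    have := T.dist_comm x q
    have := T.dist_comm z q
    unfold Btw at hzq; omega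
  · rcases hzq.or_of_point r with hzr | hzr
    · exact T.subset_thickening _ (hC q hq r hr z hzr)
    · refine ⟨r, hr, ?_⟩
      unfold Btw at hzr; omega

end TreeMetric

section FreeGroupMetric
variable {α : Type*}

theorem exists_common_prefix {β : Type*} : ∀ a b : List β, ∃ c s t, a = c ++ s ∧ b = c ++ t ∧
    ∀ x ∈ s.head?, ∀ y ∈ t.head?, x ≠ y
  | [], b => ⟨[], [], b, by simp⟩
  | a, [] => ⟨[], a, [], by simp⟩
  | x :: a, y :: b => by
    by_cases h : x = y
    · obtain ⟨c, s, t, ha, hb, hne⟩ := exists_common_prefix a b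
      exact ⟨x :: c, s, t, by simp [ha], by simp [hb, h], hne⟩
    · exact ⟨[], x :: a, y :: b, by simp, by simp, by simpa using h⟩

theorem isReduced_invRev {s : List (α × Bool)} (h : FreeGroup.IsReduced s) :
    FreeGroup.IsReduced (FreeGroup.invRev s) := by
  classical
  rw [FreeGroup.isReduced_iff_reduce_eq] at *
  rw [FreeGroup.reduce_invRev, h]

theorem isReduced_invRev_append {s t : List (α × Bool)} (hs : FreeGroup.IsReduced s)
    (ht : FreeGroup.IsReduced t) (h : ∀ x ∈ s.head?, ∀ y ∈ t.head?, x ≠ y) :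
    FreeGroup.IsReduced (FreeGroup.invRev s ++ t) := by
  refine List.isChain_append.2 ⟨isReduced_invRev hs, ht, ?_⟩
  rcases s with _ | ⟨a, s⟩
  · simp [FreeGroup.invRev]
  · intro x hx y hy hxy
    obtain rfl : (a.1, !a.2) = x := by simpa [FreeGroup.invRev] using hx
    have hay := h a (by simp) y hy
    rw [Ne, Prod.ext_iff, not_and] at hay
    have := hay hxy
    revert this
    cases a.2 <;> cases y.2 <;> simp

variable [DecidableEq α]

theorem toWord_mk_of_isReduced {l : List (α × Bool)} (h : FreeGroup.IsReduced l) :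
    (FreeGroup.mk l).toWord = l := by
  rw [FreeGroup.toWord_mk, h.reduce_eq]

theorem norm_mk_of_isReduced {l : List (α × Bool)} (h : FreeGroup.IsReduced l) :
    (FreeGroup.mk l).norm = l.length := by
  rw [FreeGroup.norm, toWord_mk_of_isReduced h]

theorem norm_mul_eq_add_iff {u v : FreeGroup α} :
    (u * v).norm = u.norm + v.norm ↔ (u * v).toWord = u.toWord ++ v.toWord := by
  constructor
  · exact fun h => (FreeGroup.toWord_mul_sublist u v).eq_of_length
      (by rw [List.length_append]; exact h)
  · exact fun h => by rw [FreeGroup.norm, h, List.length_append]; rfl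

theorem exists_norm_median (u v : FreeGroup α) : ∃ m : FreeGroup α,
    m.norm + (m⁻¹ * u).norm = u.norm ∧ m.norm + (m⁻¹ * v).norm = v.norm ∧
    (u⁻¹ * m).norm + (m⁻¹ * v).norm = (u⁻¹ * v).norm := by
  obtain ⟨c, s, t, hu, hv, hne⟩ := exists_common_prefix u.toWord v.toWord
  have hcs : FreeGroup.IsReduced (c ++ s) := hu ▸ FreeGroup.isReduced_toWord
  have hct : FreeGroup.IsReduced (c ++ t) := hv ▸ FreeGroup.isReduced_toWord
  have hc : FreeGroup.IsReduced c := hcs.infix (List.prefix_append _ _).isInfix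
  have hs : FreeGroup.IsReduced s := hcs.infix (List.suffix_append _ _).isInfix
  have ht : FreeGroup.IsReduced t := hct.infix (List.suffix_append _ _).isInfix
  obtain rfl : u = FreeGroup.mk (c ++ s) := by rw [← hu, FreeGroup.mk_toWord]
  obtain rfl : v = FreeGroup.mk (c ++ t) := by rw [← hv, FreeGroup.mk_toWord]
  have hcu : (FreeGroup.mk c)⁻¹ * FreeGroup.mk (c ++ s) = FreeGroup.mk s := by
    rw [← FreeGroup.mul_mk, inv_mul_cancel_left]
  have hcv : (FreeGroup.mk c)⁻¹ * FreeGroup.mk (c ++ t) = FreeGroup.mk t := by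
    rw [← FreeGroup.mul_mk, inv_mul_cancel_left]
  have huc : (FreeGroup.mk (c ++ s))⁻¹ * FreeGroup.mk c = FreeGroup.mk (FreeGroup.invRev s) := by
    rw [← FreeGroup.mul_mk, ← FreeGroup.inv_mk, mul_inv_rev, inv_mul_cancel_right]
  have huv : (FreeGroup.mk (c ++ s))⁻¹ * FreeGroup.mk (c ++ t)
      = FreeGroup.mk (FreeGroup.invRev s ++ t) := by
    rw [← FreeGroup.mul_mk (L₁ := FreeGroup.invRev s), ← huc, mul_assoc, ← hcv,
      mul_inv_cancel_left]
  refine ⟨FreeGroup.mk c, ?_, ?_, ?_⟩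
  · rw [hcu, norm_mk_of_isReduced hc, norm_mk_of_isReduced hs, norm_mk_of_isReduced hcs,
      List.length_append]
  · rw [hcv, norm_mk_of_isReduced hc, norm_mk_of_isReduced ht, norm_mk_of_isReduced hct,
      List.length_append]
  · rw [huc, hcv, huv, norm_mk_of_isReduced (isReduced_invRev hs), norm_mk_of_isReduced ht,
      norm_mk_of_isReduced (isReduced_invRev_append hs ht hne), List.length_append]

/-- The word metric on a free group. -/
def TreeMetric.freeGroup (α : Type*) [DecidableEq α] : TreeMetric (FreeGroup α) where
  dist x y := (x⁻¹ * y).norm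
  dist_self x := by simp
  dist_comm x y := by
    rw [← FreeGroup.norm_inv_eq]; congr 1; group
  dist_triangle x y z := by
    rw [show x⁻¹ * z = (x⁻¹ * y) * (y⁻¹ * z) by group]
    exact FreeGroup.norm_mul_le _ _
  eq_of_dist_eq_zero x y h := by rwa [FreeGroup.norm_eq_zero, inv_mul_eq_one] at h
  dist_mul_left g x y := by congr 1; group
  exists_median x y z := by
    obtain ⟨m, hy, hz, hyz⟩ := exists_norm_median (x⁻¹ * y) (x⁻¹ * z)
    rw [show (x⁻¹ * y)⁻¹ * (x⁻¹ * z) = y⁻¹ * z by group] at hyz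
    refine ⟨x * m, ?_, ?_, ?_⟩
    · convert hy using 3 <;> group
    · convert hyz using 3 <;> group
    · convert hz using 3 <;> group
  dist_glue x p q y hxq hpy hne := by
    rw [show x⁻¹ * q = (x⁻¹ * p) * (p⁻¹ * q) by group, eq_comm, norm_mul_eq_add_iff] at hxq
    rw [show p⁻¹ * y = (p⁻¹ * q) * (q⁻¹ * y) by group, eq_comm, norm_mul_eq_add_iff] at hpy
    have hred := (hxq ▸ FreeGroup.isReduced_toWord).append_overlap
      (hpy ▸ FreeGroup.isReduced_toWord)
      (by rwa [Ne, FreeGroup.toWord_eq_nil_iff, inv_mul_eq_one])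
    rw [← hxq] at hred
    have hword := hred.reduce_eq
    rw [← FreeGroup.toWord_mul, hxq] at hword
    rw [show x⁻¹ * y = x⁻¹ * p * (p⁻¹ * q) * (q⁻¹ * y) by group]
    simp only [FreeGroup.norm, hword, List.length_append]

theorem TreeMetric.freeGroup_btw_iff {x m y : FreeGroup α} : (TreeMetric.freeGroup α).Btw x m y ↔
    (x⁻¹ * y).toWord = (x⁻¹ * m).toWord ++ (m⁻¹ * y).toWord := by
  rw [show x⁻¹ * y = (x⁻¹ * m) * (m⁻¹ * y) by group, ← norm_mul_eq_add_iff, eq_comm,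
    mul_assoc, mul_inv_cancel_left]
  rfl

end FreeGroupMetric

/-! ### Windmills -/

/-- A family of convex lines in a tree-like group, permuted by left translation. The line of
index `i` is invariant under the group element `shift i`, whose nontrivial powers move its points
by at least `period i`. Lines which do not have the same points and the same group of shifts share
at most a twelfth of a period, which is the small cancellation condition. -/
structure LineSystem {G : Type*} [Group G] (T : TreeMetric G) (I : Type*) where
  line : I → Set G
  shift : I → G
  period : I → ℕ
  act : G → I → I
  line_act : ∀ g i, line (act g i) = g • line i
  shift_act : ∀ g i, shift (act g i) = g * shift i * g⁻¹
  period_act : ∀ g i, period (act g i) = period i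
  isConvex_line : ∀ i, T.IsConvex (line i)
  line_nonempty : ∀ i, (line i).Nonempty
  zpow_shift_mul_mem : ∀ i x (e : ℤ), x ∈ line i → shift i ^ e * x ∈ line i
  period_le_dist : ∀ i x (e : ℤ), x ∈ line i → e ≠ 0 → period i ≤ T.dist x (shift i ^ e * x)
  same_or_dist_le : ∀ i j,
    (Subgroup.zpowers (shift i) = Subgroup.zpowers (shift j) ∧ line i = line j) ∨
    ∀ x y, x ∈ line i → x ∈ line j → y ∈ line i → y ∈ line j → 12 * T.dist x y ≤ period i
  four_le_period : ∀ i, 4 ≤ period i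

namespace LineSystem
open TreeMetric
variable {G : Type*} [Group G] {T : TreeMetric G} {I : Type*} (S : LineSystem T I)

/-- The indices `i` and `j` describe the same line, with the same group of shifts. -/
def Same (i j : I) : Prop :=
  Subgroup.zpowers (S.shift i) = Subgroup.zpowers (S.shift j) ∧ S.line i = S.line j

/-- The geodesic from `1` to `w` follows some line for about three quarters of a period. -/
def HasLongOverlap (w : G) : Prop := ∃ i p s, p ∈ S.line i ∧ s ∈ S.line i ∧ T.Btw 1 p w ∧
  T.Btw p s w ∧ 3 * S.period i ≤ 4 * T.dist p s + 8

/-- Every geodesic from a point of `Q` to `y` leaves `Q` by following line `i` for about three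
quarters of a period. -/
def LeavesAlong (Q : Set G) (i : I) (y : G) : Prop := ∃ p s, p ∈ Q ∧ p ∈ S.line i ∧
  s ∈ S.line i ∧ (∀ x ∈ Q, T.Btw x p s) ∧ T.Btw p s y ∧ 3 * S.period i ≤ 4 * T.dist p s + 8

/-- Every geodesic from a point of `Q` to `y` meets `Q ∩ line j` and then follows line `j`, either
up to `y` or for more than the length that two different lines can share. -/
def ExitsAlong (Q : Set G) (j : I) (y : G) : Prop := ∀ q ∈ Q, ∃ z ∈ Q, z ∈ S.line j ∧
  ∃ s ∈ S.line j, T.Btw q z y ∧ T.Btw z s y ∧ (s = y ∨ S.period j < 12 * T.dist z s)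

section Same
variable {S}

theorem mem_line_act {g : G} {i : I} {x : G} : x ∈ S.line (S.act g i) ↔ g⁻¹ * x ∈ S.line i := by
  rw [S.line_act, Set.mem_smul_set_iff_inv_smul_mem, smul_eq_mul]

theorem mul_mem_line_act {g : G} {i : I} {x : G} : g * x ∈ S.line (S.act g i) ↔ x ∈ S.line i := by
  rw [mem_line_act, inv_mul_cancel_left]

theorem Same.symm {i j : I} (h : S.Same i j) : S.Same j i := ⟨h.1.symm, h.2.symm⟩

theorem Same.trans {i j k : I} (h : S.Same i j) (h' : S.Same j k) : S.Same i k :=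
  ⟨h.1.trans h'.1, h.2.trans h'.2⟩

theorem zpowers_conj_eq {a b : G} (g : G) (h : Subgroup.zpowers a = Subgroup.zpowers b) :
    Subgroup.zpowers (g * a * g⁻¹) = Subgroup.zpowers (g * b * g⁻¹) := by
  have map_conj (c : G) : Subgroup.zpowers (g * c * g⁻¹) =
      (Subgroup.zpowers c).map (MulAut.conj g).toMonoidHom := by
    rw [MonoidHom.map_zpowers]; rfl
  rw [map_conj, map_conj, h]

theorem Same.act {i j : I} (h : S.Same i j) (g : G) : S.Same (S.act g i) (S.act g j) := by
  refine ⟨?_, by rw [S.line_act, S.line_act, h.2]⟩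
  rw [S.shift_act, S.shift_act]
  exact zpowers_conj_eq g h.1

theorem same_act_inv_act (g : G) (i : I) : S.Same (S.act g⁻¹ (S.act g i)) i := by
  refine ⟨?_, by rw [S.line_act, S.line_act, inv_smul_smul]⟩
  rw [S.shift_act, S.shift_act]; congr 1; group

theorem same_act_zpow_shift (i : I) (e : ℤ) : S.Same (S.act (S.shift i ^ e) i) i := by
  constructor
  · rw [S.shift_act]; congr 1; group
  · ext x
    rw [mem_line_act, ← zpow_neg]
    refine ⟨fun h => ?_, S.zpow_shift_mul_mem i x (-e)⟩
    simpa using S.zpow_shift_mul_mem i _ e h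

theorem same_act_iff (g : G) {i j : I} : S.Same (S.act g i) (S.act g j) ↔ S.Same i j :=
  ⟨fun h => ((same_act_inv_act g i).symm.trans (h.act g⁻¹)).trans (same_act_inv_act g j),
    fun h => h.act g⟩

theorem dist_le_left_of_not_same {i j : I} (h : ¬ S.Same i j) {x y : G} (hxi : x ∈ S.line i)
    (hxj : x ∈ S.line j) (hyi : y ∈ S.line i) (hyj : y ∈ S.line j) :
    12 * T.dist x y ≤ S.period i :=
  (S.same_or_dist_le i j).resolve_left h x y hxi hxj hyi hyj

theorem dist_le_right_of_not_same {i j : I} (h : ¬ S.Same i j) {x y : G} (hxi : x ∈ S.line i)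
    (hxj : x ∈ S.line j) (hyi : y ∈ S.line i) (hyj : y ∈ S.line j) :
    12 * T.dist x y ≤ S.period j :=
  dist_le_left_of_not_same (fun h' => h h'.symm) hxj hxi hyj hyi

end Same

section Exits
variable {S} {Q : Set G}

theorem exitsAlong_of_mem (hQ : T.IsConvex Q) {j : I} (hj : (S.line j ∩ Q).Nonempty) {y : G}
    (hy : y ∈ S.line j) : S.ExitsAlong Q j y := by
  obtain ⟨w, hwj, hwQ⟩ := hj
  intro q hq
  obtain ⟨m, hqw, hwy, hqy⟩ := T.exists_btw_median q w y
  exact ⟨m, hQ q hq w hwQ m hqw, S.isConvex_line j w hwj y hy m hwy, y, hy, hqy, btw_right _ _,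
    Or.inl rfl⟩

theorem LeavesAlong.exitsAlong {j : I} {y : G} (h : S.LeavesAlong Q j y) : S.ExitsAlong Q j y := by
  obtain ⟨p, s, hpQ, hp, hs, hQp, hpy, hlong⟩ := h
  have := S.four_le_period j
  have hne : p ≠ s := by
    rintro rfl
    rw [T.dist_self] at hlong
    omega
  exact fun q hq => ⟨p, hpQ, hp, s, hs, btw_of_btw_of_btw_left (hQp q hq) hpy hne, hpy,
    Or.inr (by omega)⟩

theorem ExitsAlong.act {j : I} {y : G} (h : S.ExitsAlong Q j y) (g : G) :
    S.ExitsAlong (g • Q) (S.act g j) (g * y) := by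
  rintro _ ⟨q, hq, rfl⟩
  obtain ⟨z, hzQ, hz, s, hs, hqz, hzs, hlong⟩ := h q hq
  refine ⟨g * z, Set.smul_mem_smul_set hzQ, mul_mem_line_act.2 hz, g * s, mul_mem_line_act.2 hs,
    (btw_mul_left_iff g).2 hqz, (btw_mul_left_iff g).2 hzs, ?_⟩
  rwa [mul_right_inj, S.period_act, T.dist_mul_left]

/- A segment `[p, q]` of line `i` meeting `Q` only in `q` can be backtracked by a geodesic leaving
`Q` along another line `j` only on the part that `i` and `j` share. -/
theorem dist_le_of_exitsAlong (hQ : T.IsConvex Q) {i j : I} (hij : ¬ S.Same i j) {p q s y : G}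
    (hq : q ∈ Q) (hgate : ∀ t, T.Btw p t q → t ∈ Q → t = q) (hp : p ∈ S.line i)
    (hqi : q ∈ S.line i) (hy : S.ExitsAlong Q j y) (hps : T.Btw p s q) (hqs : T.Btw q s y) :
    12 * T.dist s q ≤ S.period i := by
  obtain ⟨z, hzQ, hz, r, hr, hqz, hzr, hlong⟩ := hy q hq
  have hsi : s ∈ S.line i := S.isConvex_line i p hp q hqi s hps
  rcases hqz.total hqs with hzs | hsz
  · obtain rfl : z = q := hgate z (hps.symm.trans_left hzs).symm hzQ
    rcases hzr.total hqs with hrs | hsr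
    · rcases hlong with rfl | hlong
      · obtain rfl := hrs.antisymm hqs
        exact dist_le_left_of_not_same hij hsi hr hqi hz
      · have hri : r ∈ S.line i := S.isConvex_line i z hqi s hsi r hrs
        have := dist_le_right_of_not_same hij hqi hz hri hr
        omega
    · have hsj : s ∈ S.line j := S.isConvex_line j z hz r hr s hsr
      exact dist_le_left_of_not_same hij hsi hsj hqi hz
  · obtain rfl : s = q := hgate s hps (hQ q hq z hzQ s hsz)
    simp only [T.dist_self, mul_zero, zero_le]

end Exits

/-- The induction invariant of the windmill construction: a convex, `H`-invariant set `Q`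
containing `1`, such that lines with shift outside `H` meet `Q` in a short segment, and all
nontrivial elements of `H` have the long overlap claimed by Greendlinger's lemma. -/
structure Windmill (Q : Set G) (H : Subgroup G) : Prop where
  one_mem : (1 : G) ∈ Q
  isConvex : T.IsConvex Q
  mul_mem : ∀ h ∈ H, ∀ x ∈ Q, h * x ∈ Q
  dist_le : ∀ i, S.shift i ∉ H → ∀ a b, a ∈ S.line i → a ∈ Q → b ∈ S.line i → b ∈ Q →
    6 * T.dist a b ≤ S.period i + 12
  hasLongOverlap : ∀ w ∈ H, w ≠ 1 → S.HasLongOverlap w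

/-- The lines that meet `Q` and whose shift is not yet in `H`. -/
def newLines (Q : Set G) (H : Subgroup G) : Set I := {i | S.shift i ∉ H ∧ (S.line i ∩ Q).Nonempty}

/-- The points `ρ₁ ^ e₁ * ⋯ * ρₖ ^ eₖ * y₀` with `k ≥ 1`, nonzero exponents, `ρᵢ` shifts of new
lines of which consecutive ones are different, and `y₀` satisfying `P` with respect to the last
line. The index records the first line. -/
inductive Chain (Q : Set G) (H : Subgroup G) (P : I → G → Prop) : I → G → Prop
  | base (i : I) (e : ℤ) (y : G) : i ∈ S.newLines Q H → e ≠ 0 → P i y →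
      Chain Q H P i (S.shift i ^ e * y)
  | step (i j : I) (e : ℤ) (y : G) : i ∈ S.newLines Q H → e ≠ 0 → ¬ S.Same i j →
      Chain Q H P j y → Chain Q H P i (S.shift i ^ e * y)

/-- A pair of predicates, `B` for admissible starting points and `P i` for starting points at
which a chain may end with line `i`, such that `B` together with the chains ending in `P` form
a set invariant under `H` and the shifts of the new lines. -/
structure TerminalPair (Q : Set G) (H : Subgroup G) (P : I → G → Prop) (B : G → Prop) : Prop where
  of_end : ∀ i y, P i y → B y
  end_or_zpow_mul : ∀ i y, i ∈ S.newLines Q H → B y → P i y ∨ ∀ e : ℤ, B (S.shift i ^ e * y)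
  mul_mem : ∀ h ∈ H, ∀ y, B y → B (h * y)
  end_act : ∀ h ∈ H, ∀ i y, P i y → P (S.act h i) (h * y)

/-- The points of `Q` and of the new lines. -/
def IsTerminal (Q : Set G) (H : Subgroup G) (y : G) : Prop :=
  y ∈ Q ∨ ∃ j ∈ S.newLines Q H, y ∈ S.line j

/-- The points of `Q` and of the new lines different from `i`. -/
def IsTerminalFor (Q : Set G) (H : Subgroup G) (i : I) (y : G) : Prop :=
  y ∈ Q ∨ ∃ j ∈ S.newLines Q H, ¬ S.Same i j ∧ y ∈ S.line j

/-- The subgroup generated by `H` and the shifts of the new lines. -/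
def nextSubgroup (Q : Set G) (H : Subgroup G) : Subgroup G :=
  H ⊔ Subgroup.closure (S.shift '' S.newLines Q H)

/-- The union of the translates of `Q` and of the new lines under `nextSubgroup`. -/
def nextSet (Q : Set G) (H : Subgroup G) : Set G :=
  {y | S.IsTerminal Q H y ∨ ∃ i, S.Chain Q H (S.IsTerminalFor Q H) i y}

variable {S} {Q : Set G} {H : Subgroup G}

section Chain

theorem Chain.mem_newLines {P : I → G → Prop} {i : I} {y : G} (h : S.Chain Q H P i y) :
    i ∈ S.newLines Q H := by
  cases h <;> assumption

theorem Chain.mono {P P' : I → G → Prop} (hP : ∀ i y, P i y → P' i y) {i : I} {y : G}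
    (h : S.Chain Q H P i y) : S.Chain Q H P' i y := by
  induction h with
  | base i e y hi he hy => exact .base i e y hi he (hP _ _ hy)
  | step i j e y hi he hij _ ih => exact .step i j e y hi he hij ih

theorem Windmill.act_mem_newLines (hw : S.Windmill Q H) {h : G} (hh : h ∈ H) {i : I}
    (hi : i ∈ S.newLines Q H) : S.act h i ∈ S.newLines Q H := by
  obtain ⟨hρ, x, hx, hxQ⟩ := hi
  refine ⟨?_, h * x, mul_mem_line_act.2 hx, hw.mul_mem h hh x hxQ⟩
  rwa [S.shift_act, H.mul_mem_cancel_right (H.inv_mem hh), H.mul_mem_cancel_left hh]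

variable {P : I → G → Prop} {B : G → Prop}

theorem Chain.act (hw : S.Windmill Q H) (hPB : S.TerminalPair Q H P B) {h : G} (hh : h ∈ H)
    {i : I} {y : G} (hc : S.Chain Q H P i y) : S.Chain Q H P (S.act h i) (h * y) := by
  have mul_shift (i : I) (e : ℤ) (y : G) :
      h * (S.shift i ^ e * y) = S.shift (S.act h i) ^ e * (h * y) := by
    rw [S.shift_act, conj_zpow]; group
  induction hc with
  | base i e y hi he hy =>
    rw [mul_shift]
    exact .base _ e _ (hw.act_mem_newLines hh hi) he (hPB.end_act h hh _ _ hy)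
  | step i j e y hi he hij _ ih =>
    rw [mul_shift]
    exact .step _ _ e _ (hw.act_mem_newLines hh hi) he (fun hs => hij ((same_act_iff h).1 hs)) ih

theorem Chain.zpow_mul (hPB : S.TerminalPair Q H P B) {j : I} {y : G} (hc : S.Chain Q H P j y)
    (e : ℤ) : B (S.shift j ^ e * y) ∨ ∃ k, S.Chain Q H P k (S.shift j ^ e * y) := by
  cases hc with
  | base _ f y hj _ hy =>
    rw [← mul_assoc, ← zpow_add]
    rcases eq_or_ne (e + f) 0 with h0 | h0
    · exact Or.inl (by simpa [h0] using hPB.of_end _ _ hy)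
    · exact Or.inr ⟨j, .base _ _ _ hj h0 hy⟩
  | step _ k f y hj _ hjk hc =>
    rw [← mul_assoc, ← zpow_add]
    rcases eq_or_ne (e + f) 0 with h0 | h0
    · exact Or.inr ⟨k, by simpa [h0] using hc⟩
    · exact Or.inr ⟨j, .step _ _ _ _ hj h0 hjk hc⟩

theorem TerminalPair.zpow_mul (hPB : S.TerminalPair Q H P B) {i : I} (hi : i ∈ S.newLines Q H)
    (e : ℤ) {y : G} (hy : B y ∨ ∃ j, S.Chain Q H P j y) :
    B (S.shift i ^ e * y) ∨ ∃ j, S.Chain Q H P j (S.shift i ^ e * y) := by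
  rcases eq_or_ne e 0 with rfl | he
  · simpa using hy
  rcases hy with hy | ⟨j, hj⟩
  · rcases hPB.end_or_zpow_mul i y hi hy with h | h
    · exact Or.inr ⟨i, .base i e y hi he h⟩
    · exact Or.inl (h e)
  · by_cases hs : S.Same i j
    · obtain ⟨e', he'⟩ : S.shift i ^ e ∈ Subgroup.zpowers (S.shift j) := hs.1 ▸ ⟨e, rfl⟩
      rw [← he']
      exact hj.zpow_mul hPB e'
    · exact Or.inr ⟨i, .step i j e y hi he hs hj⟩

theorem TerminalPair.mul_mem_of_mem_nextSubgroup (hw : S.Windmill Q H)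
    (hPB : S.TerminalPair Q H P B) {u : G} (hu : u ∈ S.nextSubgroup Q H) {y : G}
    (hy : B y ∨ ∃ j, S.Chain Q H P j y) : B (u * y) ∨ ∃ j, S.Chain Q H P j (u * y) := by
  let X : Set G := {y | B y ∨ ∃ j, S.Chain Q H P j y}
  have mem_stabilizer (K : Subgroup G) (hK : ∀ k ∈ K, ∀ y ∈ X, k * y ∈ X) :
      K ≤ MulAction.stabilizer G X := fun k hk => MulAction.mem_stabilizer_set.2 fun y =>
    ⟨fun h => by simpa using hK k⁻¹ (K.inv_mem hk) _ h, hK k hk y⟩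
  have hH : H ≤ MulAction.stabilizer G X := by
    refine mem_stabilizer H fun h hh y hy => ?_
    rcases hy with hy | ⟨j, hj⟩
    · exact Or.inl (hPB.mul_mem h hh y hy)
    · exact Or.inr ⟨_, hj.act hw hPB hh⟩
  have hshift : Subgroup.closure (S.shift '' S.newLines Q H) ≤ MulAction.stabilizer G X := by
    rw [Subgroup.closure_le]
    rintro _ ⟨i, hi, rfl⟩
    refine mem_stabilizer (Subgroup.zpowers (S.shift i)) ?_ (Subgroup.mem_zpowers _)
    rintro _ ⟨e, rfl⟩ y hy
    exact hPB.zpow_mul hi e hy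
  exact (MulAction.mem_stabilizer_set.1 (sup_le hH hshift hu) y).2 hy

theorem isTerminal_of_isTerminalFor {i : I} {y : G} (h : S.IsTerminalFor Q H i y) :
    S.IsTerminal Q H y :=
  h.imp_right fun ⟨j, hj, _, hy⟩ => ⟨j, hj, hy⟩

theorem Windmill.terminalPair_subgroup : S.TerminalPair Q H (fun _ y => y ∈ H) (· ∈ H) where
  of_end _ _ h := h
  end_or_zpow_mul _ _ _ h := Or.inl h
  mul_mem _ hh _ hy := H.mul_mem hh hy
  end_act _ hh _ _ hy := H.mul_mem hh hy

theorem Windmill.terminalPair (hw : S.Windmill Q H) :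
    S.TerminalPair Q H (S.IsTerminalFor Q H) (S.IsTerminal Q H) where
  of_end _ _ := isTerminal_of_isTerminalFor
  end_or_zpow_mul i y hi hy := by
    rcases hy with hy | ⟨j, hj, hy⟩
    · exact Or.inl (Or.inl hy)
    · by_cases hs : S.Same i j
      · exact Or.inr fun e => Or.inr ⟨i, hi, S.zpow_shift_mul_mem i y e (hs.2 ▸ hy)⟩
      · exact Or.inl (Or.inr ⟨j, hj, hs, hy⟩)
  mul_mem h hh y hy := hy.imp (hw.mul_mem h hh y)
    fun ⟨_, hj, hy⟩ => ⟨_, hw.act_mem_newLines hh hj, mul_mem_line_act.2 hy⟩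
  end_act h hh i y hy := hy.imp (hw.mul_mem h hh y) fun ⟨_, hj, hij, hy⟩ =>
    ⟨_, hw.act_mem_newLines hh hj, fun hs => hij ((same_act_iff h).1 hs), mul_mem_line_act.2 hy⟩

end Chain

section LeavesAlong

/- Choosing `p ∈ Q` and `q ∈ ρ ^ e • Q` on the line at minimal distance. -/
theorem Windmill.exists_gap (hw : S.Windmill Q H) {i : I} (hi : i ∈ S.newLines Q H) {e : ℤ}
    (he : e ≠ 0) : ∃ p q, p ∈ Q ∧ p ∈ S.line i ∧ q ∈ S.shift i ^ e • Q ∧ q ∈ S.line i ∧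
      (∀ t, T.Btw p t q → t ∈ Q → t = p) ∧ (∀ t, T.Btw p t q → t ∈ S.shift i ^ e • Q → t = q) ∧
      5 * S.period i ≤ 6 * T.dist p q + 12 := by
  obtain ⟨hρ, x, hxi, hxQ⟩ := hi
  obtain ⟨⟨p, q⟩, ⟨hpQ, hp, hqQ, hq⟩, hmin⟩ := exists_minimalFor_of_wellFoundedLT
    (fun a : G × G => a.1 ∈ Q ∧ a.1 ∈ S.line i ∧ a.2 ∈ S.shift i ^ e • Q ∧ a.2 ∈ S.line i)
    (fun a => T.dist a.1 a.2)
    ⟨(x, S.shift i ^ e * x), hxQ, hxi, Set.smul_mem_smul_set hxQ, S.zpow_shift_mul_mem i x e hxi⟩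
  have dist_le (a b : G) (hab : a ∈ Q ∧ a ∈ S.line i ∧ b ∈ S.shift i ^ e • Q ∧ b ∈ S.line i) :
      T.dist p q ≤ T.dist a b :=
    (le_total _ _).elim id fun h => hmin (j := (a, b)) hab h
  refine ⟨p, q, hpQ, hp, hqQ, hq, fun t ht htQ => ?_, fun t ht htQ => ?_, ?_⟩
  · have := dist_le t q ⟨htQ, S.isConvex_line i p hp q hq t ht, hqQ, hq⟩
    unfold TreeMetric.Btw at ht
    exact (T.eq_of_dist_eq_zero p t (by omega)).symm
  · have := dist_le p t ⟨hpQ, hp, htQ, S.isConvex_line i p hp q hq t ht⟩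
    unfold TreeMetric.Btw at ht
    exact T.eq_of_dist_eq_zero t q (by omega)
  · obtain ⟨q', hq'Q, rfl⟩ := hqQ
    simp only [smul_eq_mul] at hq ⊢
    have hq' : q' ∈ S.line i := by simpa using S.zpow_shift_mul_mem i _ (-e) hq
    have hshort := hw.dist_le i hρ p q' hp hpQ hq' hq'Q
    have hperiod := S.period_le_dist i q' e hq' he
    have htri := T.dist_triangle q' p (S.shift i ^ e * q')
    rw [T.dist_comm q' p] at htri
    omega

theorem Windmill.leavesAlong_zpow_mul (hw : S.Windmill Q H) {i : I} (hi : i ∈ S.newLines Q H)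
    {e : ℤ} (he : e ≠ 0) {y : G} (hy : y ∈ Q ∨ ∃ j, ¬ S.Same i j ∧ S.ExitsAlong Q j y) :
    S.LeavesAlong Q i (S.shift i ^ e * y) := by
  obtain ⟨p, q, hpQ, hp, hqQ, hq, hgateQ, hgate, hgap⟩ := hw.exists_gap hi he
  obtain ⟨s, hpsq, hqsy, hpsy⟩ := T.exists_btw_median p q (S.shift i ^ e * y)
  have hconv : T.IsConvex (S.shift i ^ e • Q) := hw.isConvex.smul _
  refine ⟨p, s, hpQ, hp, S.isConvex_line i p hp q hq s hpsq, fun x hx => ?_, hpsy, ?_⟩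
  · obtain ⟨m, hxp, hpm, hxs⟩ := T.exists_btw_median x p s
    obtain rfl : m = p := hgateQ m (hpsq.trans_left hpm) (hw.isConvex x hx p hpQ m hxp)
    exact hxs
  · have hsq : 12 * T.dist s q ≤ S.period i := by
      rcases hy with hy | ⟨j, hij, hy⟩
      · obtain rfl := hgate s hpsq (hconv q hqQ _ (Set.smul_mem_smul_set hy) s hqsy)
        simp only [T.dist_self, mul_zero, zero_le]
      · refine dist_le_of_exitsAlong hconv (fun hs => hij ?_) hqQ hgate hp hq (hy.act _) hpsq hqsy
        exact (same_act_iff (S.shift i ^ e)).1 ((same_act_zpow_shift i e).trans hs)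
    unfold TreeMetric.Btw at hpsq
    omega

theorem Chain.leavesAlong (hw : S.Windmill Q H) {i : I} {y : G}
    (h : S.Chain Q H (S.IsTerminalFor Q H) i y) : S.LeavesAlong Q i y := by
  induction h with
  | base i e y hi he hy =>
    exact hw.leavesAlong_zpow_mul hi he
      (hy.imp_right fun ⟨j, hj, hij, hy⟩ => ⟨j, hij, exitsAlong_of_mem hw.isConvex hj.2 hy⟩)
  | step i j e y hi he hij _ ih =>
    exact hw.leavesAlong_zpow_mul hi he (Or.inr ⟨j, hij, ih.exitsAlong⟩)

theorem Windmill.mem_or_chain (hw : S.Windmill Q H) {w : G} (hu : w ∈ S.nextSubgroup Q H) :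
    w ∈ H ∨ ∃ i, S.Chain Q H (S.IsTerminalFor Q H) i w := by
  have := Windmill.terminalPair_subgroup.mul_mem_of_mem_nextSubgroup hw hu (y := 1)
    (Or.inl H.one_mem)
  rw [mul_one] at this
  refine this.imp_right fun ⟨i, hi⟩ => ⟨i, hi.mono fun _ y hy => Or.inl ?_⟩
  simpa using hw.mul_mem y hy 1 hw.one_mem

theorem Windmill.hasLongOverlap_of_mem_nextSubgroup (hw : S.Windmill Q H) {w : G}
    (hu : w ∈ S.nextSubgroup Q H) (hne : w ≠ 1) : S.HasLongOverlap w := by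
  rcases hw.mem_or_chain hu with h | ⟨i, h⟩
  · exact hw.hasLongOverlap w h hne
  · obtain ⟨p, s, -, hp, hs, hQp, hpw, hlong⟩ := h.leavesAlong hw
    refine ⟨i, p, s, hp, hs, btw_of_btw_of_btw_left (hQp 1 hw.one_mem) hpw ?_, hpw, hlong⟩
    rintro rfl
    have := S.four_le_period i
    rw [T.dist_self] at hlong
    omega

end LeavesAlong
end LineSystem

/-! ### Greendlinger's lemma for lines in a tree -/

namespace LineSystem
open TreeMetric
variable {G : Type*} [Group G] {T : TreeMetric G} {I : Type*} {S : LineSystem T I}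
variable {Q : Set G} {H : Subgroup G}

section NextSet

theorem zpow_shift_mem_nextSubgroup {i : I} (hi : i ∈ S.newLines Q H) (e : ℤ) :
    S.shift i ^ e ∈ S.nextSubgroup Q H :=
  Subgroup.zpow_mem _ (Subgroup.mem_sup_right
    (Subgroup.subset_closure (Set.mem_image_of_mem _ hi))) e

theorem shift_mem_nextSubgroup {i : I} {x : G} (hx : x ∈ S.line i) (hxQ : x ∈ Q) :
    S.shift i ∈ S.nextSubgroup Q H := by
  by_cases h : S.shift i ∈ H
  · exact Subgroup.mem_sup_left h
  · simpa using zpow_shift_mem_nextSubgroup (S := S) (Q := Q) (H := H) ⟨h, x, hx, hxQ⟩ 1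

theorem subset_nextSet : Q ⊆ S.nextSet Q H := fun _ hx => Or.inl (Or.inl hx)

theorem line_subset_nextSet {i : I} (hi : i ∈ S.newLines Q H) : S.line i ⊆ S.nextSet Q H :=
  fun _ hy => Or.inl (Or.inr ⟨i, hi, hy⟩)

theorem Windmill.mul_mem_nextSet (hw : S.Windmill Q H) {u : G} (hu : u ∈ S.nextSubgroup Q H)
    {y : G} (hy : y ∈ S.nextSet Q H) : u * y ∈ S.nextSet Q H :=
  hw.terminalPair.mul_mem_of_mem_nextSubgroup hw hu hy

theorem exists_isTerminal_inv_mul {y : G} (hy : y ∈ S.nextSet Q H) :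
    ∃ u ∈ S.nextSubgroup Q H, S.IsTerminal Q H (u⁻¹ * y) := by
  rcases hy with hy | ⟨i, hy⟩
  · exact ⟨1, one_mem _, by simpa using hy⟩
  · induction hy with
    | base i e y hi _ hy =>
      exact ⟨S.shift i ^ e, zpow_shift_mem_nextSubgroup hi e,
        by simpa using isTerminal_of_isTerminalFor hy⟩
    | step i _ e y hi _ _ _ ih =>
      obtain ⟨u, hu, h⟩ := ih
      exact ⟨S.shift i ^ e * u, mul_mem (zpow_shift_mem_nextSubgroup hi e) hu,
        by simpa [mul_assoc] using h⟩

theorem Windmill.mem_nextSet_of_btw_isTerminal (hw : S.Windmill Q H) {x y t : G} (hx : x ∈ Q)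
    (hy : S.IsTerminal Q H y) (ht : T.Btw x t y) : t ∈ S.nextSet Q H := by
  rcases hy with hy | ⟨j, hj, hy⟩
  · exact subset_nextSet (hw.isConvex x hx y hy t ht)
  · obtain ⟨z, hz, hzQ⟩ := hj.2
    rcases ht.or_of_point z with h | h
    · exact subset_nextSet (hw.isConvex x hx z hzQ t h)
    · exact line_subset_nextSet hj (S.isConvex_line j z hz y hy t h)

theorem Windmill.mem_nextSet_of_btw_zpow_mul (hw : S.Windmill Q H) {i : I}
    (hi : i ∈ S.newLines Q H) {e : ℤ} {y : G}
    (hy : ∀ x ∈ Q, ∀ t, T.Btw x t y → t ∈ S.nextSet Q H) {x t : G} (hx : x ∈ Q)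
    (ht : T.Btw x t (S.shift i ^ e * y)) : t ∈ S.nextSet Q H := by
  obtain ⟨z, hz, hzQ⟩ := hi.2
  rcases ht.or_of_point z with h | h
  · exact subset_nextSet (hw.isConvex x hx z hzQ t h)
  rcases h.or_of_point (S.shift i ^ e * z) with h' | h'
  · exact line_subset_nextSet hi
      (S.isConvex_line i z hz _ (S.zpow_shift_mul_mem i z e hz) t h')
  · rw [← mul_inv_cancel_left (S.shift i ^ e) t, btw_mul_left_iff] at h'
    simpa using hw.mul_mem_nextSet (zpow_shift_mem_nextSubgroup hi e) (hy z hzQ _ h')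

theorem Windmill.mem_nextSet_of_btw (hw : S.Windmill Q H) {y : G} (hy : y ∈ S.nextSet Q H) :
    ∀ x ∈ Q, ∀ t, T.Btw x t y → t ∈ S.nextSet Q H := by
  rcases hy with hy | ⟨i, hy⟩
  · exact fun x hx t => hw.mem_nextSet_of_btw_isTerminal hx hy
  induction hy with
  | base i e y hi _ hy =>
    exact fun x hx t => hw.mem_nextSet_of_btw_zpow_mul hi
      (fun x hx t => hw.mem_nextSet_of_btw_isTerminal hx (isTerminal_of_isTerminalFor hy)) hx
  | step i _ e y hi _ _ _ ih => exact fun x hx t => hw.mem_nextSet_of_btw_zpow_mul hi ih hx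

theorem Windmill.isConvex_nextSet (hw : S.Windmill Q H) : T.IsConvex (S.nextSet Q H) := by
  intro x hx y hy t ht
  obtain ⟨u, hu, hux⟩ := exists_isTerminal_inv_mul hx
  have huy := hw.mul_mem_nextSet (inv_mem hu) hy
  rw [← btw_mul_left_iff u⁻¹] at ht
  suffices h : u⁻¹ * t ∈ S.nextSet Q H by simpa using hw.mul_mem_nextSet hu h
  rcases hux with hux | ⟨j, hj, hux⟩
  · exact hw.mem_nextSet_of_btw huy _ hux _ ht
  · obtain ⟨z, hz, hzQ⟩ := hj.2
    rcases ht.or_of_point z with h | h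
    · exact line_subset_nextSet hj (S.isConvex_line j _ hux z hz _ h)
    · exact hw.mem_nextSet_of_btw huy z hzQ _ h

end NextSet

section ShortOverlaps

theorem not_same_of_shift_notMem {k i : I} (hk : S.shift k ∉ S.nextSubgroup Q H)
    (hi : i ∈ S.newLines Q H) : ¬ S.Same i k := by
  intro h
  obtain ⟨e, he⟩ : S.shift k ∈ Subgroup.zpowers (S.shift i) := h.1 ▸ Subgroup.mem_zpowers _
  exact hk (he ▸ zpow_shift_mem_nextSubgroup hi e)

theorem shift_act_notMem {K : Subgroup G} {k : I} (hk : S.shift k ∉ K) {u : G} (hu : u ∈ K) :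
    S.shift (S.act u k) ∉ K := by
  rwa [S.shift_act, K.mul_mem_cancel_right (K.inv_mem hu), K.mul_mem_cancel_left hu]

theorem Windmill.dist_le_of_mem_lines (hw : S.Windmill Q H) {k j₀ j : I}
    (hk : S.shift k ∉ S.nextSubgroup Q H) (hj₀ : j₀ ∈ S.newLines Q H) (hj : j ∈ S.newLines Q H)
    {a b : G} (ha : a ∈ S.line k) (ha₀ : a ∈ S.line j₀) (hb : b ∈ S.line k)
    (hbj : b ∈ S.line j) : 6 * T.dist a b ≤ S.period k := by
  obtain ⟨z₀, hz₀, hz₀Q⟩ := hj₀.2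
  obtain ⟨z, hz, hzQ⟩ := hj.2
  obtain ⟨m₀, hab, hbz₀, haz₀⟩ := T.exists_btw_median a b z₀
  obtain ⟨m, hbm₀, hm₀z, hbz⟩ := T.exists_btw_median b m₀ z
  have hm₀k : m₀ ∈ S.line k := S.isConvex_line k a ha b hb m₀ hab
  have ham₀ := dist_le_right_of_not_same (not_same_of_shift_notMem hk hj₀) ha₀ ha
    (S.isConvex_line j₀ a ha₀ z₀ hz₀ m₀ haz₀) hm₀k
  have hbm := dist_le_right_of_not_same (not_same_of_shift_notMem hk hj) hbj hb
    (S.isConvex_line j b hbj z hz m hbz) (S.isConvex_line k b hb m₀ hm₀k m hbm₀)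
  obtain rfl : m₀ = m := by
    by_contra hne
    have hz₀z : T.Btw z₀ m₀ z :=
      btw_of_btw_of_btw_left (hbz₀.right_of_trans_left hbm₀).symm hm₀z hne
    exact hk (shift_mem_nextSubgroup hm₀k (hw.isConvex z₀ hz₀Q z hzQ m₀ hz₀z))
  have := T.dist_comm b m₀
  unfold TreeMetric.Btw at hab
  omega

theorem Windmill.notMem_line_of_chain (hw : S.Windmill Q H) {i j k : I}
    (hk : S.shift k ∉ S.nextSubgroup Q H) (hj : j ∈ S.newLines Q H) (hij : ¬ S.Same i j) {a b : G}
    (hb : S.Chain Q H (S.IsTerminalFor Q H) i b) (ha : a ∈ S.line k) (haj : a ∈ S.line j) :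
    b ∉ S.line k := by
  intro hbk
  obtain ⟨p, s, hpQ, hp, hs, hgate, hpsb, hlong⟩ := hb.leavesAlong hw
  obtain ⟨m, ham, hpms, hams⟩ := T.exists_btw_median a p s
  have hmi : m ∈ S.line i := S.isConvex_line i p hp s hs m hpms
  have hmp : 12 * T.dist m p ≤ S.period i :=
    dist_le_of_exitsAlong hw.isConvex hij hpQ (fun t ht htQ => ht.antisymm (hgate t htQ).symm) hs hp
      (exitsAlong_of_mem hw.isConvex hj.2 haj) hpms.symm ham.symm
  have hms : S.period i < 12 * T.dist m s := by
    have := S.four_le_period i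
    have := T.dist_comm p m
    unfold TreeMetric.Btw at hpms
    omega
  have hne : m ≠ s := by
    rintro rfl
    rw [T.dist_self] at hms
    omega
  have hmsb : T.Btw m s b := hpsb.right_of_trans_left hpms
  have hmk := S.isConvex_line k a ha b hbk m (btw_of_btw_of_btw_left hams hmsb hne)
  have hsk := S.isConvex_line k a ha b hbk s (btw_of_btw_of_btw_right hams hmsb hne)
  have := dist_le_left_of_not_same (not_same_of_shift_notMem hk hb.mem_newLines) hmi hmk hs hsk
  omega

theorem dist_le_zpow_mul {i j : I} (hi : i ∈ S.newLines Q H) (hij : S.Same i j) {y : G}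
    (hy : ∀ k a, S.shift k ∉ S.nextSubgroup Q H → a ∈ S.line k → a ∈ S.line j → y ∈ S.line k →
      6 * T.dist a y ≤ S.period k) (e : ℤ) {k : I} {a : G} (hk : S.shift k ∉ S.nextSubgroup Q H)
    (ha : a ∈ S.line k) (haj : a ∈ S.line j) (hyk : S.shift i ^ e * y ∈ S.line k) :
    6 * T.dist a (S.shift i ^ e * y) ≤ S.period k := by
  have haj' : (S.shift i ^ e)⁻¹ * a ∈ S.line j := by
    rw [← hij.2] at haj ⊢
    rw [← zpow_neg]
    exact S.zpow_shift_mul_mem i a (-e) haj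
  have h := hy (S.act (S.shift i ^ e)⁻¹ k) ((S.shift i ^ e)⁻¹ * a)
    (shift_act_notMem hk (inv_mem (zpow_shift_mem_nextSubgroup hi e)))
    (mul_mem_line_act.2 ha) haj' (by rwa [mem_line_act, inv_inv])
  rwa [S.period_act, ← T.dist_mul_left (S.shift i ^ e), mul_inv_cancel_left] at h

theorem Windmill.dist_le_of_chain (hw : S.Windmill Q H) {i j : I} (hj : j ∈ S.newLines Q H)
    {b : G} (hb : S.Chain Q H (S.IsTerminalFor Q H) i b) (k : I) (a : G)
    (hk : S.shift k ∉ S.nextSubgroup Q H) (ha : a ∈ S.line k) (haj : a ∈ S.line j)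
    (hbk : b ∈ S.line k) : 6 * T.dist a b ≤ S.period k := by
  induction hb generalizing k a with
  | base i e y hi he hy =>
    by_cases hij : S.Same i j
    · refine dist_le_zpow_mul hi hij (fun k a hk ha haj hyk => ?_) e hk ha haj hbk
      rcases isTerminal_of_isTerminalFor hy with h | ⟨j', hj', h⟩
      · exact absurd (shift_mem_nextSubgroup hyk h) hk
      · exact hw.dist_le_of_mem_lines hk hj hj' ha haj hyk h
    · exact absurd hbk (hw.notMem_line_of_chain hk hj hij (.base i e y hi he hy) ha haj)
  | step i j' e y hi he hij' hc ih =>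
    by_cases hij : S.Same i j
    · exact dist_le_zpow_mul hi hij ih e hk ha haj hbk
    · exact absurd hbk (hw.notMem_line_of_chain hk hj hij (.step i j' e y hi he hij' hc) ha haj)

theorem Windmill.dist_le_of_mem_nextSet (hw : S.Windmill Q H) {k : I}
    (hk : S.shift k ∉ S.nextSubgroup Q H) {a b : G} (ha : a ∈ S.line k) (haQ : a ∈ S.nextSet Q H)
    (hb : b ∈ S.line k) (hbQ : b ∈ S.nextSet Q H) : 6 * T.dist a b ≤ S.period k := by
  obtain ⟨u, hu, h⟩ := exists_isTerminal_inv_mul haQ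
  have hk' := shift_act_notMem hk (inv_mem hu)
  have ha' : u⁻¹ * a ∈ S.line (S.act u⁻¹ k) := mul_mem_line_act.2 ha
  have hb' : u⁻¹ * b ∈ S.line (S.act u⁻¹ k) := mul_mem_line_act.2 hb
  rw [← T.dist_mul_left u⁻¹, ← S.period_act u⁻¹ k]
  rcases h with h | ⟨j₀, hj₀, h⟩
  · exact absurd (shift_mem_nextSubgroup ha' h) hk'
  · rcases hw.mul_mem_nextSet (inv_mem hu) hbQ with (hbT | ⟨j, hj, hbT⟩) | ⟨i, hbT⟩
    · exact absurd (shift_mem_nextSubgroup hb' hbT) hk'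
    · exact hw.dist_le_of_mem_lines hk' hj₀ hj ha' h hb' hbT
    · exact hw.dist_le_of_chain hj₀ hbT _ _ hk' ha' h hb'

theorem Windmill.dist_le_of_mem_thickening (hw : S.Windmill Q H) {k : I}
    (hk : S.shift k ∉ S.nextSubgroup Q H) {a b : G} (ha : a ∈ S.line k)
    (haQ : a ∈ T.thickening (S.nextSet Q H)) (hb : b ∈ S.line k)
    (hbQ : b ∈ T.thickening (S.nextSet Q H)) : 6 * T.dist a b ≤ S.period k + 12 := by
  obtain ⟨q, hqQ, hqa⟩ := haQ
  obtain ⟨r, hrQ, hrb⟩ := hbQ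
  obtain ⟨a', hqa', hab, hqb⟩ := T.exists_btw_median q a b
  obtain ⟨b', hrb', hba', hra'⟩ := T.exists_btw_median r b a'
  have ha'k := S.isConvex_line k a ha b hb a' hab
  have hb'k := S.isConvex_line k b hb a' ha'k b' hba'
  have := T.dist_triangle a a' b
  have := T.dist_triangle a' b' b
  have := T.dist_comm a' a
  have haa' : T.dist a a' ≤ 1 := by unfold TreeMetric.Btw at hqa'; omega
  have hbb' : T.dist b' b ≤ 1 := by unfold TreeMetric.Btw at hrb'; omega
  rcases eq_or_ne a' b' with rfl | hne
  · rw [T.dist_self] at *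
    omega
  · have hqb' : T.Btw q a' b' := hqb.left_of_trans_right hba'.symm
    have hconv := hw.isConvex_nextSet q hqQ r hrQ
    have := hw.dist_le_of_mem_nextSet hk ha'k
      (hconv _ (btw_of_btw_of_btw_left hqb' hra'.symm hne)) hb'k
      (hconv _ (btw_of_btw_of_btw_right hqb' hra'.symm hne))
    omega

end ShortOverlaps

section Greendlinger

theorem Windmill.next (hw : S.Windmill Q H) :
    S.Windmill (T.thickening (S.nextSet Q H)) (S.nextSubgroup Q H) where
  one_mem := T.subset_thickening _ (subset_nextSet hw.one_mem)
  isConvex := hw.isConvex_nextSet.thickening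
  mul_mem := by
    rintro h hh x ⟨q, hq, hqx⟩
    exact ⟨h * q, hw.mul_mem_nextSet hh hq, by rwa [T.dist_mul_left]⟩
  dist_le _ hk _ _ ha haQ hb hbQ := hw.dist_le_of_mem_thickening hk ha haQ hb hbQ
  hasLongOverlap _ hu hne := hw.hasLongOverlap_of_mem_nextSubgroup hu hne

variable (S) in
/-- The iterated windmill construction, starting from the trivial subgroup. -/
def windmill : ℕ → Set G × Subgroup G
  | 0 => ({1}, ⊥)
  | n + 1 => (T.thickening (S.nextSet (windmill n).1 (windmill n).2),
      S.nextSubgroup (windmill n).1 (windmill n).2)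

theorem windmill_spec (n : ℕ) : S.Windmill (S.windmill n).1 (S.windmill n).2 := by
  induction n with
  | zero =>
    refine ⟨rfl, ?_, ?_, ?_, fun w hw hne => absurd hw hne⟩
    · rintro x rfl y rfl z hz
      exact hz.eq_of_self
    · rintro _ rfl x rfl
      exact one_mul _
    · rintro i _ a b _ rfl _ rfl
      simp only [T.dist_self, mul_zero, zero_le]
  | succ n ih => exact ih.next

theorem monotone_windmill_snd : Monotone fun n => (S.windmill n).2 :=
  monotone_nat_of_le_succ fun n => (le_sup_left : _ ≤ S.nextSubgroup _ (S.windmill n).2)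

theorem mem_windmill_of_dist_le
    (hpath : ∀ x : G, x ≠ 1 → ∃ y, T.dist 1 y < T.dist 1 x ∧ T.dist y x ≤ 1) {n : ℕ} {x : G}
    (hx : T.dist 1 x ≤ n) : x ∈ (S.windmill n).1 := by
  induction n generalizing x with
  | zero => exact (T.eq_of_dist_eq_zero 1 x (by omega)).symm
  | succ n ih =>
    rcases eq_or_ne x 1 with rfl | hne
    · exact (windmill_spec (n + 1)).one_mem
    · obtain ⟨y, hy, hyx⟩ := hpath x hne
      exact ⟨y, subset_nextSet (ih (by omega)), hyx⟩

/-- The abstract form of Greendlinger's lemma. -/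
theorem hasLongOverlap_of_mem_closure
    (hpath : ∀ x : G, x ≠ 1 → ∃ y, T.dist 1 y < T.dist 1 x ∧ T.dist y x ≤ 1)
    {w : G} (hw : w ∈ Subgroup.closure (Set.range S.shift)) (hne : w ≠ 1) :
    S.HasLongOverlap w := by
  have hle : Subgroup.closure (Set.range S.shift) ≤ ⨆ n, (S.windmill n).2 := by
    rw [Subgroup.closure_le]
    rintro _ ⟨i, rfl⟩
    obtain ⟨x, hx⟩ := S.line_nonempty i
    have : S.shift i ∈ (S.windmill (T.dist 1 x + 1)).2 :=
      shift_mem_nextSubgroup hx (mem_windmill_of_dist_le hpath le_rfl)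
    exact Subgroup.mem_iSup_of_mem _ this
  obtain ⟨n, hn⟩ :=
    (Subgroup.mem_iSup_of_directed monotone_windmill_snd.directed_le).1 (hle hw)
  exact (windmill_spec n).hasLongOverlap w hn hne

end Greendlinger
end LineSystem

/-! ### Periodic words and small cancellation -/

/-- A periodic, reduced, bi-infinite word in the letters of a free group. -/
structure PeriodicWord (α : Type*) where
  letter : ℤ → α × Bool
  period : ℕ
  period_pos : 0 < period
  periodic : Function.Periodic letter period
  reduced : ∀ i, (letter i).1 = (letter (i + 1)).1 → (letter i).2 = (letter (i + 1)).2

namespace PeriodicWord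
variable {α : Type*} (A : PeriodicWord α)

/-- The finite segment of length `n` starting at position `i`. -/
def segment (i : ℤ) (n : ℕ) : List (α × Bool) := (List.range n).map fun k : ℕ => A.letter (i + k)

theorem length_segment (i : ℤ) (n : ℕ) : (A.segment i n).length = n := by
  simp only [segment, List.length_map, List.length_range]

theorem getElem_segment (i : ℤ) (n k : ℕ) (h : k < (A.segment i n).length) :
    (A.segment i n)[k] = A.letter (i + k) := by
  simp only [segment, List.getElem_map, List.getElem_range]

variable {A} in
theorem segment_eq_segment_iff {B : PeriodicWord α} {i j : ℤ} {n : ℕ} :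
    A.segment i n = B.segment j n ↔ ∀ k : ℕ, k < n → A.letter (i + k) = B.letter (j + k) := by
  simp only [segment, List.map_inj_left, List.mem_range]

theorem segment_add (i : ℤ) (m n : ℕ) :
    A.segment i (m + n) = A.segment i m ++ A.segment (i + m) n := by
  simp only [segment, List.range_add, List.map_append, List.map_map, Function.comp_def,
    Nat.cast_add, add_assoc]

theorem segment_zero (i : ℤ) : A.segment i 0 = [] := rfl

theorem segment_one (i : ℤ) : A.segment i 1 = [A.letter i] := by
  simp only [segment, List.range_one, List.map_cons, List.map_nil, Nat.cast_zero, add_zero]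

theorem segment_add_period (i : ℤ) (n : ℕ) : A.segment (i + A.period) n = A.segment i n :=
  segment_eq_segment_iff.2 fun k _ => by rw [add_right_comm, A.periodic]

theorem isReduced_segment (i : ℤ) (n : ℕ) : FreeGroup.IsReduced (A.segment i n) := by
  refine List.isChain_iff_getElem.2 fun k hk => ?_
  rw [getElem_segment, getElem_segment, Nat.cast_add, Nat.cast_one, ← add_assoc]
  exact A.reduced (i + k)

/-- The element of the free group spelled by one period. -/
def shift : FreeGroup α := FreeGroup.mk (A.segment 0 A.period)

/-- The points visited when reading the word from position `0`, in both directions. -/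
def point (i : ℤ) : FreeGroup α :=
  (FreeGroup.mk (A.segment i (-i).toNat))⁻¹ * FreeGroup.mk (A.segment 0 i.toNat)

theorem point_zero : A.point 0 = 1 := by
  simp only [point, neg_zero, Int.toNat_zero, segment_zero, inv_mul_cancel]

theorem point_succ (i : ℤ) : A.point (i + 1) = A.point i * FreeGroup.mk [A.letter i] := by
  obtain ⟨n, rfl | rfl⟩ := Int.eq_nat_or_neg i
  · rw [point, point, show (-(n : ℤ)).toNat = 0 by omega, show (-((n : ℤ) + 1)).toNat = 0 by omega,
      show ((n : ℤ) + 1).toNat = n + 1 by omega, Int.toNat_natCast, A.segment_add 0 n 1,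
      segment_one, zero_add, ← FreeGroup.mul_mk, ← mul_assoc]
    rfl
  · rcases n with _ | n
    · rw [Nat.cast_zero, neg_zero, point_zero, one_mul, point, Int.toNat_eq_zero.2 (by omega),
        segment_zero, ← FreeGroup.one_eq_mk, inv_one, one_mul]
      exact congrArg FreeGroup.mk (A.segment_one 0)
    · rw [point, point, show (-(-((n + 1 : ℕ) : ℤ))).toNat = 1 + n by omega,
        show (-(-((n + 1 : ℕ) : ℤ) + 1)).toNat = n by omega,
        show (-((n + 1 : ℕ) : ℤ)).toNat = 0 by omega,
        show (-((n + 1 : ℕ) : ℤ) + 1).toNat = 0 by omega, A.segment_add _ 1 n, segment_one,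
        ← FreeGroup.mul_mk, segment_zero, ← FreeGroup.one_eq_mk, mul_one, mul_one, mul_inv_rev,
        inv_mul_cancel_right, Nat.cast_one]

theorem point_add_natCast (i : ℤ) (n : ℕ) :
    A.point (i + n) = A.point i * FreeGroup.mk (A.segment i n) := by
  induction n with
  | zero => rw [Nat.cast_zero, add_zero, segment_zero, ← FreeGroup.one_eq_mk, mul_one]
  | succ n ih =>
    rw [Nat.cast_succ, ← add_assoc, point_succ, ih, segment_add, segment_one, mul_assoc,
      FreeGroup.mul_mk]

theorem point_add_period (i : ℤ) : A.point (i + A.period) = A.shift * A.point i := by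
  have h₀ : A.point A.period = A.shift := by
    rw [← zero_add (A.period : ℤ), point_add_natCast, point_zero, one_mul, shift]
  obtain ⟨n, rfl | rfl⟩ := Int.eq_nat_or_neg i
  · have h₁ := A.point_add_natCast (0 + A.period) n
    have h₂ := A.point_add_natCast 0 n
    rw [segment_add_period, zero_add, h₀] at h₁
    rw [zero_add, point_zero, one_mul] at h₂
    rw [add_comm, h₁, h₂]
  · have h₁ := A.point_add_natCast (-n + A.period) n
    have h₂ := A.point_add_natCast (-n) n
    rw [segment_add_period, add_right_comm, neg_add_cancel, zero_add, h₀] at h₁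
    rw [neg_add_cancel, point_zero] at h₂
    rw [h₁, mul_assoc, eq_inv_of_mul_eq_one_left h₂.symm, mul_inv_cancel, mul_one]

theorem point_add_mul_period (i e : ℤ) :
    A.point (i + e * A.period) = A.shift ^ e * A.point i := by
  induction e using Int.induction_on with
  | zero => simp
  | succ n ih => rw [add_one_mul, ← add_assoc, point_add_period, ih, add_comm, zpow_add]; group
  | pred n ih =>
    have h := A.point_add_period (i + (-n - 1) * A.period)
    rw [show i + (-n - 1) * A.period + (A.period : ℤ) = i + -n * A.period by ring, ih,
      ← inv_mul_eq_iff_eq_mul] at h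
    rw [← h]; group

theorem inv_point_mul_point_congr {A B : PeriodicWord α} {i j : ℤ}
    (h : ∀ k : ℤ, A.letter (i + k) = B.letter (j + k)) (k : ℤ) :
    (A.point i)⁻¹ * A.point (i + k) = (B.point j)⁻¹ * B.point (j + k) := by
  have segment_congr (a : ℤ) (n : ℕ) : A.segment (i + a) n = B.segment (j + a) n :=
    segment_eq_segment_iff.2 fun b _ => by rw [add_assoc, add_assoc, h]
  obtain ⟨n, rfl | rfl⟩ := Int.eq_nat_or_neg k
  · have := segment_congr 0 n
    rw [add_zero, add_zero] at this
    rw [point_add_natCast, point_add_natCast, inv_mul_cancel_left, inv_mul_cancel_left, this]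
  · have hA := A.point_add_natCast (i + -n) n
    have hB := B.point_add_natCast (j + -n) n
    rw [neg_add_cancel_right] at hA hB
    rw [hA, hB, segment_congr]; group

/-- The translate by `g` of the bi-infinite path reading the word. -/
def axis (g : FreeGroup α) : Set (FreeGroup α) := {x | ∃ i, x = g * A.point i}

theorem axis_mul (g h : FreeGroup α) : A.axis (g * h) = g • A.axis h := by
  ext x
  simp only [Set.mem_smul_set_iff_inv_smul_mem, axis, Set.mem_ofPred_eq, smul_eq_mul,
    inv_mul_eq_iff_eq_mul, mul_assoc]

theorem conj_shift_zpow_mul_point (g : FreeGroup α) (e i : ℤ) :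
    (g * A.shift * g⁻¹) ^ e * (g * A.point i) = g * A.point (i + e * A.period) := by
  rw [point_add_mul_period, conj_zpow]; group

variable [DecidableEq α]

theorem toWord_inv_point_mul_point (i : ℤ) (n : ℕ) :
    ((A.point i)⁻¹ * A.point (i + n)).toWord = A.segment i n := by
  rw [point_add_natCast, inv_mul_cancel_left, toWord_mk_of_isReduced (A.isReduced_segment i n)]

theorem dist_mul_point (g : FreeGroup α) (i j : ℤ) :
    (TreeMetric.freeGroup α).dist (g * A.point i) (g * A.point j) = (j - i).natAbs := by
  rw [TreeMetric.dist_mul_left]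
  wlog h : i ≤ j generalizing i j
  · rw [TreeMetric.dist_comm, this j i (by omega)]; omega
  obtain ⟨n, rfl⟩ := Int.le.dest h
  change ((A.point i)⁻¹ * A.point (i + n)).norm = _
  rw [FreeGroup.norm, toWord_inv_point_mul_point, length_segment]
  omega

theorem isConvex_axis (g : FreeGroup α) : (TreeMetric.freeGroup α).IsConvex (A.axis g) := by
  rintro _ ⟨i, rfl⟩ _ ⟨j, rfl⟩ z hz
  wlog h : i ≤ j generalizing i j
  · exact this j i hz.symm (by omega)
  obtain ⟨n, rfl⟩ := Int.le.dest h
  have hword := TreeMetric.freeGroup_btw_iff.1 hz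
  rw [show (g * A.point i)⁻¹ * (g * A.point (i + n)) = (A.point i)⁻¹ * A.point (i + n) by group,
    toWord_inv_point_mul_point] at hword
  set m := ((g * A.point i)⁻¹ * z).toWord.length
  obtain ⟨k, rfl⟩ : ∃ k, n = m + k := Nat.exists_eq_add_of_le (by
    rw [← A.length_segment i n, hword, List.length_append]
    exact Nat.le_add_right _ _)
  rw [segment_add] at hword
  have hz : A.segment i m = ((g * A.point i)⁻¹ * z).toWord :=
    (List.append_inj hword (by rw [length_segment])).1
  exact ⟨i + m, by rw [point_add_natCast, hz, FreeGroup.mk_toWord]; group⟩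

omit [DecidableEq α] in
theorem segment_eq_of_mul_point_eq {A B : PeriodicWord α} {g h : FreeGroup α} {i j i' j' : ℤ}
    (hi : g * A.point i = h * B.point i') (hj : g * A.point j = h * B.point j') (hij : i ≤ j) :
    ∃ n : ℕ, j = i + n ∧
      (A.segment i n = B.segment i' n ∨ A.segment i n = FreeGroup.invRev (B.segment j' n)) := by
  classical
  obtain ⟨n, rfl⟩ := Int.le.dest hij
  have hdist : (j' - i').natAbs = n := by
    rw [← B.dist_mul_point h, ← hi, ← hj, A.dist_mul_point]; omega
  have hpoints : (A.point i)⁻¹ * A.point (i + n) = (B.point i')⁻¹ * B.point j' := by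
    have : (g * A.point i)⁻¹ * (g * A.point (i + n)) = (h * B.point i')⁻¹ * (h * B.point j') := by
      rw [hi, hj]
    simpa [mul_assoc] using this
  refine ⟨n, rfl, ?_⟩
  rw [← A.toWord_inv_point_mul_point, hpoints]
  rcases le_total i' j' with hle | hle
  · obtain rfl : j' = i' + n := by omega
    exact Or.inl (B.toWord_inv_point_mul_point i' n)
  · obtain rfl : i' = j' + n := by omega
    refine Or.inr ?_
    rw [← B.toWord_inv_point_mul_point j', ← FreeGroup.toWord_inv, mul_inv_rev, inv_inv]

/-- A common segment longer than a twelfth of the period of `A` forces `A` and `B` to have the same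
period and to agree everywhere. -/
def Agrees {α : Type*} (A B : PeriodicWord α) : Prop :=
  ∀ (i i' : ℤ) (n : ℕ), A.segment i n = B.segment i' n → A.period < 12 * n →
    A.period = B.period ∧ ∀ k : ℤ, A.letter (i + k) = B.letter (i' + k)

end PeriodicWord

/-- The small cancellation condition `C'(1/12)` for a family of periodic words: a common segment
longer than a twelfth of a period forces two words to agree, and the words have no segment of this
length in common with the inverses of words of the family. -/
structure SmallCancellation {α τ : Type*} (A : τ → PeriodicWord α) : Prop where
  agrees : ∀ t t', (A t).Agrees (A t')
  le_of_eq_invRev : ∀ t t' i i' n, (A t).segment i n = FreeGroup.invRev ((A t').segment i' n) →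
    12 * n ≤ (A t).period
  four_le_period : ∀ t, 4 ≤ (A t).period

namespace SmallCancellation
open PeriodicWord
variable {α τ : Type*} {A : τ → PeriodicWord α}

theorem axis_eq_of_agree {A B : PeriodicWord α} {g h : FreeGroup α} {i j : ℤ}
    (hij : g * A.point i = h * B.point j) (hperiod : A.period = B.period)
    (hletter : ∀ k : ℤ, A.letter (i + k) = B.letter (j + k)) :
    g * A.shift * g⁻¹ = h * B.shift * h⁻¹ ∧ A.axis g = B.axis h := by
  have hpoint (k : ℤ) : g * A.point (i + k) = h * B.point (j + k) := by
    have := inv_point_mul_point_congr hletter k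
    rw [inv_mul_eq_iff_eq_mul] at this
    rw [this, ← mul_assoc, ← mul_assoc, hij]; group
  constructor
  · have hshift := hpoint A.period
    nth_rw 2 [hperiod] at hshift
    rw [point_add_period, point_add_period] at hshift
    refine mul_right_cancel (b := g * A.point i) ?_
    rw [show g * A.shift * g⁻¹ * (g * A.point i) = g * (A.shift * A.point i) by group, hshift, hij]
    group
  · ext z
    constructor
    · rintro ⟨b, rfl⟩
      exact ⟨j + (b - i), by rw [← hpoint, add_sub_cancel]⟩
    · rintro ⟨b, rfl⟩
      exact ⟨i + (b - j), by rw [hpoint, add_sub_cancel]⟩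

variable [DecidableEq α]

theorem axis_eq_or_dist_le (hA : SmallCancellation A) (g h : FreeGroup α) (t t' : τ) :
    (g * (A t).shift * g⁻¹ = h * (A t').shift * h⁻¹ ∧ (A t).axis g = (A t').axis h) ∨
      ∀ x y, x ∈ (A t).axis g → x ∈ (A t').axis h → y ∈ (A t).axis g → y ∈ (A t').axis h →
        12 * (TreeMetric.freeGroup α).dist x y ≤ (A t).period := by
  refine or_iff_not_imp_right.2 fun hlong => ?_
  push Not at hlong
  obtain ⟨x, y, ⟨i, hxi⟩, ⟨i', hxi'⟩, ⟨j, hyj⟩, ⟨j', hyj'⟩, hlt⟩ := hlong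
  wlog hij : i ≤ j generalizing x y i i' j j'
  · exact this y x j hyj j' hyj' i hxi (by rwa [TreeMetric.dist_comm]) i' hxi' (by omega)
  rw [hxi, hyj, dist_mul_point] at hlt
  obtain ⟨n, rfl, hn | hn⟩ :=
    segment_eq_of_mul_point_eq (hxi.symm.trans hxi') (hyj.symm.trans hyj') hij
  · obtain ⟨hperiod, hletter⟩ := hA.agrees t t' i i' n hn (by omega)
    exact axis_eq_of_agree (hxi.symm.trans hxi') hperiod hletter
  · have := hA.le_of_eq_invRev t t' i j' n hn
    omega

/-- The translates of the axes of a small cancellation family. -/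
def lineSystem (hA : SmallCancellation A) :
    LineSystem (TreeMetric.freeGroup α) (FreeGroup α × τ) where
  line i := (A i.2).axis i.1
  shift i := i.1 * (A i.2).shift * i.1⁻¹
  period i := (A i.2).period
  act g i := (g * i.1, i.2)
  line_act g i := (A i.2).axis_mul g i.1
  shift_act g i := by group
  period_act _ _ := rfl
  isConvex_line i := (A i.2).isConvex_axis i.1
  line_nonempty i := ⟨_, 0, rfl⟩
  zpow_shift_mul_mem := by
    rintro ⟨g, t⟩ _ e ⟨i, rfl⟩
    exact ⟨i + e * (A t).period, conj_shift_zpow_mul_point _ g e i⟩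
  period_le_dist := by
    rintro ⟨g, t⟩ _ e ⟨i, rfl⟩ he
    rw [conj_shift_zpow_mul_point, dist_mul_point, add_sub_cancel_left, Int.natAbs_mul,
      Int.natAbs_natCast]
    exact Nat.le_mul_of_pos_left _ (Int.natAbs_pos.2 he)
  same_or_dist_le i j :=
    (hA.axis_eq_or_dist_le i.1 j.1 i.2 j.2).imp_left fun ⟨hshift, haxis⟩ =>
      ⟨congrArg Subgroup.zpowers hshift, haxis⟩
  four_le_period i := hA.four_le_period i.2

theorem exists_dist_lt_of_ne_one {x : FreeGroup α} (hx : x ≠ 1) :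
    ∃ y, (TreeMetric.freeGroup α).dist 1 y < (TreeMetric.freeGroup α).dist 1 x ∧
      (TreeMetric.freeGroup α).dist y x ≤ 1 := by
  have hne : x.toWord ≠ [] := by rwa [Ne, FreeGroup.toWord_eq_nil_iff]
  refine ⟨FreeGroup.mk x.toWord.dropLast, ?_, ?_⟩
  · simp only [TreeMetric.freeGroup, inv_one, one_mul]
    refine lt_of_le_of_lt FreeGroup.norm_mk_le ?_
    rw [FreeGroup.norm, List.length_dropLast]
    have := List.length_pos_of_ne_nil hne
    omega
  · have hlast : (FreeGroup.mk x.toWord.dropLast)⁻¹ * x =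
        FreeGroup.mk [x.toWord.getLast hne] := by
      rw [inv_mul_eq_iff_eq_mul, FreeGroup.mul_mk, List.dropLast_append_getLast,
        FreeGroup.mk_toWord]
    simp only [TreeMetric.freeGroup, hlast]
    exact FreeGroup.norm_mk_le

theorem normalClosure_le_closure_shift (hA : SmallCancellation A) :
    Subgroup.normalClosure (Set.range fun t => (A t).shift) ≤
      Subgroup.closure (Set.range hA.lineSystem.shift) := by
  rw [Subgroup.normalClosure, Subgroup.closure_le]
  intro x hx
  obtain ⟨_, ⟨t, rfl⟩, hx⟩ := Group.mem_conjugatesOfSet_iff.1 hx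
  obtain ⟨c, rfl⟩ := isConj_iff.1 hx
  exact Subgroup.subset_closure ⟨(c, t), rfl⟩

/-- Greendlinger's lemma. -/
theorem exists_long_segment_isInfix (hA : SmallCancellation A) {w : FreeGroup α}
    (hw : w ∈ Subgroup.normalClosure (Set.range fun t => (A t).shift)) (hne : w ≠ 1) :
    ∃ t i n, 3 * (A t).period ≤ 4 * n + 8 ∧ ((A t).segment i n <:+: w.toWord ∨
      FreeGroup.invRev ((A t).segment i n) <:+: w.toWord) := by
  obtain ⟨⟨g, t⟩, _, _, ⟨i, rfl⟩, ⟨j, rfl⟩, hp, hs, hlong⟩ :=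
    LineSystem.hasLongOverlap_of_mem_closure (fun _ => exists_dist_lt_of_ne_one)
      (hA.normalClosure_le_closure_shift hw) hne
  have hlong : 3 * (A t).period ≤
    4 * (TreeMetric.freeGroup α).dist (g * (A t).point i) (g * (A t).point j) + 8 := hlong
  rw [dist_mul_point] at hlong
  have hinfix : (((A t).point i)⁻¹ * (A t).point j).toWord <:+: w.toWord := by
    have hp := TreeMetric.freeGroup_btw_iff.1 hp
    rw [TreeMetric.freeGroup_btw_iff.1 hs, inv_one, one_mul, one_mul] at hp
    rw [hp, show ((A t).point i)⁻¹ * (A t).point j = (g * (A t).point i)⁻¹ * (g * (A t).point j)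
      by group, ← List.append_assoc]
    exact List.infix_append _ _ _
  rcases le_total i j with h | h
  · obtain ⟨n, rfl⟩ := Int.le.dest h
    refine ⟨t, i, n, by omega, Or.inl ?_⟩
    rwa [toWord_inv_point_mul_point] at hinfix
  · obtain ⟨n, rfl⟩ := Int.le.dest h
    refine ⟨t, j, n, by omega, Or.inr ?_⟩
    rwa [← (A t).toWord_inv_point_mul_point, ← FreeGroup.toWord_inv, mul_inv_rev, inv_inv]

end SmallCancellation

namespace PeriodicWord
variable {α : Type*}

theorem letter_emod_period (A : PeriodicWord α) (i : ℤ) : A.letter (i % A.period) = A.letter i := by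
  conv_rhs => rw [← Int.emod_add_mul_ediv i A.period, mul_comm]
  exact (A.periodic.int_mul _ _).symm

theorem letter_toNat_emod_add (A : PeriodicWord α) (i k : ℤ) :
    A.letter ((i % A.period).toNat + k) = A.letter (i + k) := by
  have hpos := A.period_pos
  rw [Int.toNat_of_nonneg (Int.emod_nonneg _ (by omega)), ← A.letter_emod_period (i + k),
    ← Int.emod_add_emod, letter_emod_period]

theorem agrees_of_natCast {A B : PeriodicWord α}
    (h : ∀ i i' n : ℕ, (∀ j : ℕ, j < n → A.letter ((i + j : ℕ) : ℤ) = B.letter ((i' + j : ℕ) : ℤ)) →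
      A.period < 12 * n →
      A.period = B.period ∧ ∀ k : ℤ, A.letter (i + k) = B.letter (i' + k)) : A.Agrees B := by
  intro i i' n hseg hn
  simpa only [letter_toNat_emod_add] using
    h (i % A.period).toNat (i' % B.period).toNat n (fun j hj => by
      rw [Nat.cast_add, Nat.cast_add, letter_toNat_emod_add, letter_toNat_emod_add]
      exact segment_eq_segment_iff.1 hseg j hj) hn

/-- The periodic word with a given list as period. -/
def ofList (w : List (α × Bool)) (hne : w ≠ []) (hw : FreeGroup.IsReduced (w ++ w)) :
    PeriodicWord α where
  letter i := w[(i % w.length).toNat]'(by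
    have := List.length_pos_of_ne_nil hne
    have := Int.emod_lt_of_pos i (b := w.length) (by omega)
    omega)
  period := w.length
  period_pos := List.length_pos_of_ne_nil hne
  periodic i := by simp only [Int.add_emod_right]
  reduced i := by
    have hpos := List.length_pos_of_ne_nil hne
    obtain ⟨r, hr⟩ := Int.eq_ofNat_of_zero_le (Int.emod_nonneg i (b := w.length) (by omega))
    have hlt := Int.emod_lt_of_pos i (b := w.length) (by omega)
    have hsucc : ((i + 1) % w.length).toNat = (r + 1) % w.length := by
      rw [← Int.emod_add_emod, hr]
      exact_mod_cast Int.toNat_natCast ((r + 1) % w.length)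
    have hadj := List.isChain_iff_getElem.1 hw r (by rw [List.length_append]; omega)
    simp only [hsucc, hr, Int.toNat_natCast]
    rw [List.getElem_append_left (by omega)] at hadj
    rcases (show r + 1 ≤ w.length by omega).lt_or_eq with h | h
    · simpa only [Nat.mod_eq_of_lt h, List.getElem_append_left h] using hadj
    · rw [List.getElem_append_right h.ge] at hadj
      simpa only [h, Nat.mod_self, Nat.sub_self] using hadj

theorem segment_ofList (w : List (α × Bool)) (hne : w ≠ []) (hw : FreeGroup.IsReduced (w ++ w)) :
    (ofList w hne hw).segment 0 w.length = w := by
  refine List.ext_getElem (length_segment _ _ _) fun k hk hk' => ?_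
  rw [getElem_segment]
  simp only [ofList, zero_add, Int.emod_eq_of_lt (Int.natCast_nonneg k) (Int.ofNat_lt.2 hk'),
    Int.toNat_natCast]

end PeriodicWord

/-! ### Words made of blocks -/

/-- A reduced word which is an infinite periodic sequence of blocks. The `k`-th block is a nonempty
stem without the letter `sep`, followed by the power of `sep` with exponent `exponent k`. -/
structure BlockWord (α : Type*) where
  numBlocks : ℕ
  stem : ℕ → List (α × Bool)
  exponent : ℕ → ℕ
  sep : α
  numBlocks_pos : 0 < numBlocks
  stem_ne_nil : ∀ k, stem k ≠ []
  ne_sep_of_mem_stem : ∀ k, ∀ l ∈ stem k, l.1 ≠ sep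
  exponent_pos : ∀ k, 1 ≤ exponent k
  isReduced_stem : ∀ k, FreeGroup.IsReduced (stem k)
  stem_add_numBlocks : ∀ k, stem (k + numBlocks) = stem k
  exponent_add_numBlocks : ∀ k, exponent (k + numBlocks) = exponent k

namespace BlockWord
variable {α : Type*} (D : BlockWord α)

/-- The `k`-th block. -/
def block (k : ℕ) : List (α × Bool) := D.stem k ++ List.replicate (D.exponent k) (D.sep, true)

/-- The position at which the `k`-th block starts. -/
def start : ℕ → ℕ
  | 0 => 0
  | k + 1 => start k + ((D.stem k).length + D.exponent k)

/-- The word formed by the first `K` blocks. -/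
def word (K : ℕ) : List (α × Bool) := (List.range K).flatMap D.block

theorem start_succ (k : ℕ) : D.start (k + 1) = D.start k + ((D.stem k).length + D.exponent k) := rfl

theorem length_block (k : ℕ) : (D.block k).length = (D.stem k).length + D.exponent k := by
  simp only [block, List.length_append, List.length_replicate]

theorem word_succ (K : ℕ) : D.word (K + 1) = D.word K ++ D.block K := by
  simp only [word, List.range_succ, List.flatMap_append, List.flatMap_singleton]

theorem length_word (K : ℕ) : (D.word K).length = D.start K := by
  induction K with
  | zero => rfl
  | succ K ih => rw [word_succ, List.length_append, ih, length_block, start_succ]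

theorem block_numBlocks_add (k : ℕ) : D.block (D.numBlocks + k) = D.block k := by
  rw [block, add_comm, D.stem_add_numBlocks, D.exponent_add_numBlocks, block]

theorem word_numBlocks_add (K : ℕ) :
    D.word (D.numBlocks + K) = D.word D.numBlocks ++ D.word K := by
  induction K with
  | zero => exact (List.append_nil _).symm
  | succ K ih => rw [← add_assoc, word_succ, ih, word_succ, block_numBlocks_add, List.append_assoc]

theorem start_numBlocks_add (K : ℕ) :
    D.start (D.numBlocks + K) = D.start D.numBlocks + D.start K := by
  rw [← length_word, word_numBlocks_add, List.length_append, length_word, length_word]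

theorem start_add_mul (k q : ℕ) :
    D.start (k + q * D.numBlocks) = D.start k + q * D.start D.numBlocks := by
  induction q with
  | zero => simp only [zero_mul, add_zero]
  | succ q ih =>
    rw [show k + (q + 1) * D.numBlocks = D.numBlocks + (k + q * D.numBlocks) by ring,
      start_numBlocks_add, ih]
    ring

theorem stem_length_pos (k : ℕ) : 0 < (D.stem k).length :=
  List.length_pos_of_ne_nil (D.stem_ne_nil k)

theorem start_add_two_le (k : ℕ) : D.start k + 2 ≤ D.start (k + 1) := by
  have := D.stem_length_pos k
  have := D.exponent_pos k
  rw [start_succ]; omega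

theorem start_strictMono : StrictMono D.start :=
  strictMono_nat_of_lt_succ fun k => by have := D.start_add_two_le k; omega

theorem isReduced_block (k : ℕ) : FreeGroup.IsReduced (D.block k) := by
  refine List.isChain_append.2 ⟨D.isReduced_stem k,
    List.isChain_replicate_of_rel _ fun _ => rfl, fun x hx y hy h => ?_⟩
  rw [List.eq_of_mem_replicate (List.mem_of_mem_head? hy)] at h
  exact absurd h (D.ne_sep_of_mem_stem k x (List.mem_of_mem_getLast? hx))

theorem eq_sep_of_mem_getLast?_block (k : ℕ) {x : α × Bool} (hx : x ∈ (D.block k).getLast?) :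
    x.1 = D.sep := by
  have hpos := D.exponent_pos k
  have hne : List.replicate (D.exponent k) (D.sep, true) ≠ [] := by
    rw [Ne, List.replicate_eq_nil_iff]; omega
  rw [block, List.getLast?_append_of_ne_nil _ hne] at hx
  rw [List.eq_of_mem_replicate (List.mem_of_mem_getLast? hx)]

theorem eq_sep_of_mem_getLast?_word (K : ℕ) {x : α × Bool} (hx : x ∈ (D.word K).getLast?) :
    x.1 = D.sep := by
  cases K with
  | zero => cases hx
  | succ K =>
    have hne : D.block K ≠ [] := List.append_ne_nil_of_left_ne_nil (D.stem_ne_nil K) _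
    rw [word_succ, List.getLast?_append_of_ne_nil _ hne] at hx
    exact D.eq_sep_of_mem_getLast?_block K hx

theorem isReduced_word (K : ℕ) : FreeGroup.IsReduced (D.word K) := by
  induction K with
  | zero => exact FreeGroup.IsReduced.nil
  | succ K ih =>
    rw [word_succ]
    refine List.isChain_append.2 ⟨ih, D.isReduced_block K, fun x hx y hy h => ?_⟩
    rw [block, List.head?_append_of_ne_nil _ (D.stem_ne_nil K)] at hy
    exact absurd (h ▸ D.eq_sep_of_mem_getLast?_word K hx)
      (D.ne_sep_of_mem_stem K y (List.mem_of_mem_head? hy))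

theorem word_numBlocks_ne_nil : D.word D.numBlocks ≠ [] := by
  refine List.ne_nil_of_length_pos ?_
  rw [length_word]
  exact D.numBlocks_pos.trans_le (D.start_strictMono.id_le _)

/-- The periodic word all of whose periods read `D.word D.numBlocks`. -/
def toPeriodic : PeriodicWord α :=
  PeriodicWord.ofList (D.word D.numBlocks) D.word_numBlocks_ne_nil (by
    rw [← word_numBlocks_add]
    exact D.isReduced_word _)

theorem period_toPeriodic : D.toPeriodic.period = D.start D.numBlocks := D.length_word D.numBlocks

theorem segment_zero_start_numBlocks :
    D.toPeriodic.segment 0 (D.start D.numBlocks) = D.word D.numBlocks := by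
  rw [← length_word]
  exact PeriodicWord.segment_ofList _ _ _

theorem shift_toPeriodic : D.toPeriodic.shift = FreeGroup.mk (D.word D.numBlocks) := by
  rw [PeriodicWord.shift, period_toPeriodic, segment_zero_start_numBlocks]

theorem word_prefix_word {K L : ℕ} (h : K ≤ L) : D.word K <+: D.word L := by
  obtain ⟨j, rfl⟩ := Nat.exists_eq_add_of_le h
  rw [word, word, List.range_add, List.flatMap_append]
  exact List.prefix_append _ _

theorem segment_zero_start (K : ℕ) : D.toPeriodic.segment 0 (D.start K) = D.word K := by
  induction K using Nat.strong_induction_on with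
  | _ K ih =>
    have hperiod := D.segment_zero_start_numBlocks
    rcases le_or_gt D.numBlocks K with hK | hK
    · obtain ⟨c, rfl⟩ := Nat.exists_eq_add_of_le hK
      have := D.numBlocks_pos
      rw [start_numBlocks_add, PeriodicWord.segment_add, hperiod, word_numBlocks_add,
        ← ih c (by omega), ← period_toPeriodic, PeriodicWord.segment_add_period]
    · obtain ⟨c, hc⟩ := Nat.exists_eq_add_of_le (D.start_strictMono hK).le
      rw [hc, PeriodicWord.segment_add] at hperiod
      refine (List.prefix_of_prefix_length_le (List.prefix_append _ _)
        (hperiod ▸ D.word_prefix_word hK.le) ?_).eq_of_length ?_ <;>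
      simp only [length_word, PeriodicWord.length_segment, le_refl]

theorem segment_start (k : ℕ) :
    D.toPeriodic.segment (D.start k) ((D.stem k).length + D.exponent k) = D.block k := by
  have h := D.segment_zero_start (k + 1)
  rw [start_succ, PeriodicWord.segment_add, segment_zero_start, word_succ, zero_add] at h
  exact List.append_cancel_left h

theorem letter_start_add (k j : ℕ) (h : j < (D.block k).length) :
    D.toPeriodic.letter ((D.start k + j : ℕ) : ℤ) = (D.block k)[j] := by
  rw [Nat.cast_add]
  simp only [← D.segment_start k, PeriodicWord.getElem_segment]

theorem letter_start_add_of_lt {k j : ℕ} (h : j < (D.stem k).length) :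
    D.toPeriodic.letter ((D.start k + j : ℕ) : ℤ) = (D.stem k)[j] := by
  rw [D.letter_start_add k j (by rw [length_block]; omega)]
  exact List.getElem_append_left h

theorem letter_eq_sep {k j : ℕ} (h₁ : D.start k + (D.stem k).length ≤ j)
    (h₂ : j < D.start (k + 1)) : D.toPeriodic.letter (j : ℤ) = (D.sep, true) := by
  rw [start_succ] at h₂
  obtain ⟨c, rfl⟩ := Nat.exists_eq_add_of_le h₁
  rw [add_assoc, D.letter_start_add k _ (by rw [length_block]; omega)]
  simp only [block, List.getElem_append_right (Nat.le_add_right _ c), List.getElem_replicate]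

theorem letter_ne_sep {k j : ℕ} (h₁ : D.start k ≤ j) (h₂ : j < D.start k + (D.stem k).length) :
    (D.toPeriodic.letter (j : ℤ)).1 ≠ D.sep := by
  obtain ⟨c, rfl⟩ := Nat.exists_eq_add_of_le h₁
  rw [D.letter_start_add_of_lt (by omega : c < (D.stem k).length)]
  exact D.ne_sep_of_mem_stem k _ (List.getElem_mem _)

theorem exists_start_le_lt (j : ℕ) : ∃ k, D.start k ≤ j ∧ j < D.start (k + 1) := by
  induction j with
  | zero => exact ⟨0, le_rfl, by have := D.start_add_two_le 0; omega⟩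
  | succ j ih =>
    obtain ⟨k, h₁, h₂⟩ := ih
    rcases lt_or_ge (j + 1) (D.start (k + 1)) with h | h
    · exact ⟨k, by omega, h⟩
    · exact ⟨k + 1, h, by have := D.start_add_two_le (k + 1); omega⟩

theorem exists_eq_of_sep_run {a b : ℕ} (hab : a + 1 < b)
    (ha : (D.toPeriodic.letter (a : ℤ)).1 ≠ D.sep)
    (hrun : ∀ j : ℕ, a < j → j < b → (D.toPeriodic.letter (j : ℤ)).1 = D.sep)
    (hb : (D.toPeriodic.letter (b : ℤ)).1 ≠ D.sep) :
    ∃ k, a + 1 = D.start k + (D.stem k).length ∧ b = D.start (k + 1) := by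
  obtain ⟨k, hk₁, hk₂⟩ := D.exists_start_le_lt (a + 1)
  have hle : D.start k + (D.stem k).length ≤ a + 1 := by
    by_contra h
    exact D.letter_ne_sep hk₁ (not_le.1 h) (hrun (a + 1) (by omega) hab)
  have heq : a + 1 = D.start k + (D.stem k).length := by
    by_contra h
    exact ha (by rw [D.letter_eq_sep (k := k) (by omega) (by omega)])
  refine ⟨k, heq, ?_⟩
  rcases lt_trichotomy b (D.start (k + 1)) with h | h | h
  · exact absurd (by rw [D.letter_eq_sep (k := k) (by omega) h]) hb
  · exact h
  · have := D.stem_length_pos (k + 1)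
    exact absurd (hrun _ (by omega) h) (D.letter_ne_sep (k := k + 1) le_rfl (by omega))

theorem exists_eq_of_sep_runs {a b c d : ℕ} (hab : a + 1 < b) (hbc : b < c) (hcd : c < d)
    (ha : (D.toPeriodic.letter (a : ℤ)).1 ≠ D.sep)
    (hrun₁ : ∀ j : ℕ, a < j → j < b → (D.toPeriodic.letter (j : ℤ)).1 = D.sep)
    (hstem : ∀ j : ℕ, b ≤ j → j < c → (D.toPeriodic.letter (j : ℤ)).1 ≠ D.sep)
    (hrun₂ : ∀ j : ℕ, c ≤ j → j < d → (D.toPeriodic.letter (j : ℤ)).1 = D.sep)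
    (hd : (D.toPeriodic.letter (d : ℤ)).1 ≠ D.sep) :
    ∃ k, a + 1 = D.start k + (D.stem k).length ∧ b = D.start (k + 1) ∧
      c = D.start (k + 1) + (D.stem (k + 1)).length ∧ d = D.start (k + 2) := by
  obtain ⟨k, hk₁, hk₂⟩ := D.exists_eq_of_sep_run hab ha hrun₁ (hstem b le_rfl hbc)
  obtain ⟨k', hk₃, hk₄⟩ := D.exists_eq_of_sep_run (a := c - 1) (b := d) (by omega)
    (hstem (c - 1) (by omega) (by omega)) (fun j hj₁ hj₂ => hrun₂ j (by omega) hj₂) hd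
  have hexp := D.exponent_pos (k + 1)
  have hsucc : D.start (k + 2) = _ := D.start_succ (k + 1)
  have hc : c ≤ D.start (k + 1) + (D.stem (k + 1)).length := by
    by_contra h
    exact hstem _ (by omega) (not_le.1 h) (by
      rw [D.letter_eq_sep (k := k + 1) le_rfl (by rw [hsucc]; omega)])
  obtain rfl : k' = k + 1 := by
    have := D.stem_length_pos k'
    have hlt₁ := D.start_strictMono.lt_iff_lt.1 (show D.start k' < D.start (k + 2) by omega)
    have hlt₂ := D.start_strictMono.lt_iff_lt.1 (show D.start (k + 1) < D.start (k' + 1) by omega)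
    omega
  exact ⟨k, hk₁, hk₂, by omega, hk₄⟩

theorem letter_add_eq_of_start {i i' k k' : ℕ} (h : k % D.numBlocks = k' % D.numBlocks)
    (hstart : D.start k + i' = D.start k' + i) (t : ℤ) :
    D.toPeriodic.letter (i + t) = D.toPeriodic.letter (i' + t) := by
  have hk := D.start_add_mul (k % D.numBlocks) (k / D.numBlocks)
  have hk' := D.start_add_mul (k' % D.numBlocks) (k' / D.numBlocks)
  rw [mul_comm, Nat.mod_add_div] at hk hk'
  rw [← h] at hk'
  have hi : (i : ℤ) + t =
      i' + t + ((k / D.numBlocks : ℕ) - (k' / D.numBlocks : ℕ)) * D.toPeriodic.period := by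
    rw [period_toPeriodic]
    zify at hstart hk hk' ⊢
    linear_combination hk - hk' - hstart
  rw [hi]
  exact D.toPeriodic.periodic.int_mul _ _

/-- Four consecutive blocks cover at most a twelfth of the period. -/
structure HasShortBlocks : Prop where
  two_le_numBlocks : 2 ≤ D.numBlocks
  start_add_four_le : ∀ k, 12 * D.start (k + 4) ≤ 12 * D.start k + D.start D.numBlocks

variable {D}

-- The blocks with index divisible by `numBlocks` are avoided because they are exceptional in the
-- relators attached to functions.
theorem HasShortBlocks.exists_block (hD : D.HasShortBlocks) (i n : ℕ)
    (hn : D.toPeriodic.period < 12 * n) :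
    ∃ k, (k + 1) % D.numBlocks ≠ 0 ∧ i < D.start k ∧ D.start (k + 2) < i + n := by
  have hN := hD.two_le_numBlocks
  obtain ⟨k₀, hk₁, hk₂⟩ := D.exists_start_le_lt i
  rw [period_toPeriodic] at hn
  have hshort := hD.start_add_four_le k₀
  have inside : ∀ k, k₀ + 1 ≤ k → k ≤ k₀ + 2 → i < D.start k ∧ D.start (k + 2) < i + n := by
    intro k h₁ h₂
    have := D.start_strictMono.monotone h₁
    have := D.start_strictMono.monotone (show k + 2 ≤ k₀ + 4 by omega)
    omega
  by_cases h : (k₀ + 2) % D.numBlocks = 0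
  · refine ⟨k₀ + 2, ?_, inside _ (by omega) le_rfl⟩
    obtain ⟨q, hq⟩ := Nat.dvd_of_mod_eq_zero h
    rw [hq, Nat.mul_add_mod, Nat.mod_eq_of_lt (by omega)]
    exact one_ne_zero
  · exact ⟨k₀ + 1, h, inside _ le_rfl (by omega)⟩

variable {D' : BlockWord α}

theorem exists_corresponding_block (hsep : D.sep = D'.sep) {i i' n k : ℕ}
    (hletter : ∀ j : ℕ, j < n →
      D.toPeriodic.letter ((i + j : ℕ) : ℤ) = D'.toPeriodic.letter ((i' + j : ℕ) : ℤ))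
    (hi : i < D.start k) (hk : D.start (k + 2) < i + n) :
    ∃ k', D.start k + (D.stem k).length + i' = D'.start k' + (D'.stem k').length + i ∧
      D.start (k + 1) + i' = D'.start (k' + 1) + i ∧
      D.start (k + 1) + (D.stem (k + 1)).length + i' =
        D'.start (k' + 1) + (D'.stem (k' + 1)).length + i ∧
      D.start (k + 2) + i' = D'.start (k' + 2) + i := by
  have hstem₀ := D.stem_length_pos k
  have hstem₁ := D.stem_length_pos (k + 1)
  have hstem₂ := D.stem_length_pos (k + 2)
  have hexp₀ := D.exponent_pos k
  have hexp₁ := D.exponent_pos (k + 1)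
  have hsucc₀ := D.start_succ k
  have hsucc₁ : D.start (k + 2) = _ := D.start_succ (k + 1)
  have transfer : ∀ q : ℕ, i' ≤ q → q < i' + n →
      D'.toPeriodic.letter (q : ℤ) = D.toPeriodic.letter ((q - i' + i : ℕ) : ℤ) := by
    intro q h₁ h₂
    have := hletter (q - i') (by omega)
    rw [show i + (q - i') = q - i' + i by omega, show i' + (q - i') = q by omega] at this
    exact this.symm
  obtain ⟨k', h₁, h₂, h₃, h₄⟩ := D'.exists_eq_of_sep_runs
    (a := D.start k + (D.stem k).length - 1 - i + i') (b := D.start (k + 1) - i + i')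
    (c := D.start (k + 1) + (D.stem (k + 1)).length - i + i') (d := D.start (k + 2) - i + i')
    (by omega) (by omega) (by omega)
    (by rw [transfer _ (by omega) (by omega), ← hsep]
        exact D.letter_ne_sep (k := k) (by omega) (by omega))
    (fun j _ _ => by
      rw [transfer _ (by omega) (by omega), ← hsep,
        D.letter_eq_sep (k := k) (by omega) (by omega)])
    (fun j _ _ => by
      rw [transfer _ (by omega) (by omega), ← hsep]
      exact D.letter_ne_sep (k := k + 1) (by omega) (by omega))
    (fun j _ _ => by
      rw [transfer _ (by omega) (by omega), ← hsep,
        D.letter_eq_sep (k := k + 1) (by omega) (by rw [hsucc₁] at *; omega)])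
    (by rw [transfer _ (by omega) (by omega), ← hsep]
        exact D.letter_ne_sep (k := k + 2) (by omega) (by omega))
  exact ⟨k', by omega, by omega, by omega, by omega⟩

theorem HasShortBlocks.exists_matching_block (hD : D.HasShortBlocks) (hsep : D.sep = D'.sep)
    {i i' n : ℕ} (hn : D.toPeriodic.period < 12 * n)
    (hletter : ∀ j : ℕ, j < n →
      D.toPeriodic.letter ((i + j : ℕ) : ℤ) = D'.toPeriodic.letter ((i' + j : ℕ) : ℤ)) :
    ∃ k k', k % D.numBlocks ≠ 0 ∧ D.exponent k = D'.exponent k' ∧ D.stem k = D'.stem k' ∧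
      D.start k + i' = D'.start k' + i := by
  obtain ⟨k, hk, hi, hend⟩ := hD.exists_block i n hn
  obtain ⟨k', h₁, h₂, h₃, h₄⟩ := exists_corresponding_block hsep hletter hi hend
  have hsucc₀ := D.start_succ k
  have hsucc₁ : D.start (k + 2) = _ := D.start_succ (k + 1)
  have hsucc' : D'.start (k' + 2) = _ := D'.start_succ (k' + 1)
  refine ⟨k + 1, k' + 1, hk, by omega, ?_, h₂⟩
  refine List.ext_getElem (by omega) fun j hj hj' => ?_
  rw [← D.letter_start_add_of_lt hj, ← D'.letter_start_add_of_lt hj']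
  have := hletter (D.start (k + 1) + j - i) (by omega)
  rwa [show i + (D.start (k + 1) + j - i) = D.start (k + 1) + j by omega,
    show i' + (D.start (k + 1) + j - i) = D'.start (k' + 1) + j by omega] at this

variable (D) in
/-- Inverse letters only occur as first letters of a period. -/
def HasLeadingInverses : Prop :=
  ∀ k j (h : j < (D.stem k).length), ((D.stem k)[j]).2 = false → j = 0 ∧ k % D.numBlocks = 0

end BlockWord

namespace PeriodicWord
variable {α : Type*} {A B : PeriodicWord α}

variable (A) in
/-- Inverse letters only occur at multiples of the period. -/
def HasLeadingInverses : Prop := ∀ i : ℤ, (A.letter i).2 = false → (A.period : ℤ) ∣ i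

theorem HasLeadingInverses.letter_pos_or (hA : A.HasLeadingInverses) (hperiod : 3 ≤ A.period)
    {i j : ℤ} (hij : i < j) (hji : j < i + 3) :
    (A.letter i).2 = true ∨ (A.letter j).2 = true := by
  by_contra h
  rw [not_or, Bool.not_eq_true, Bool.not_eq_true] at h
  have := Int.le_of_dvd (by omega) (dvd_sub (hA _ h.2) (hA _ h.1))
  omega

theorem segment_ne_invRev_segment (hA : A.HasLeadingInverses) (hB : B.HasLeadingInverses)
    (hpA : 3 ≤ A.period) (hpB : 3 ≤ B.period) {i i' : ℤ} {n : ℕ} (hn : 3 ≤ n) :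
    A.segment i n ≠ FreeGroup.invRev (B.segment i' n) := by
  intro heq
  have key : ∀ j : ℕ, j < n → (A.letter (i + j)).2 = !(B.letter (i' + (n - 1 - j : ℕ))).2 := by
    intro j hj
    rw [← A.getElem_segment i n j (by rwa [length_segment]),
      ← B.getElem_segment i' n (n - 1 - j) (by rw [length_segment]; omega)]
    simp only [heq, FreeGroup.invRev, List.getElem_reverse, List.getElem_map, List.length_map,
      length_segment]
  have hA₀₁ := hA.letter_pos_or hpA (i := i + (0 : ℕ)) (j := i + (1 : ℕ)) (by simp) (by simp)
  have hA₀₂ := hA.letter_pos_or hpA (i := i + (0 : ℕ)) (j := i + (2 : ℕ)) (by simp) (by simp)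
  have hA₁₂ := hA.letter_pos_or hpA (i := i + (1 : ℕ)) (j := i + (2 : ℕ)) (by simp) (by grind)
  have hB₁₀ := hB.letter_pos_or hpB (i := i' + (n - 1 - 1 : ℕ)) (j := i' + (n - 1 - 0 : ℕ))
    (by omega) (by omega)
  have hB₂₀ := hB.letter_pos_or hpB (i := i' + (n - 1 - 2 : ℕ)) (j := i' + (n - 1 - 0 : ℕ))
    (by omega) (by omega)
  have hB₂₁ := hB.letter_pos_or hpB (i := i' + (n - 1 - 2 : ℕ)) (j := i' + (n - 1 - 1 : ℕ))
    (by omega) (by omega)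
  rw [key 0 (by omega)] at hA₀₁ hA₀₂
  rw [key 1 (by omega)] at hA₀₁ hA₁₂
  rw [key 2 (by omega)] at hA₀₂ hA₁₂
  simp only [Bool.not_eq_true'] at hA₀₁ hA₀₂ hA₁₂
  rcases hA₀₁ with h | h <;> simp_all

end PeriodicWord

theorem BlockWord.HasLeadingInverses.toPeriodic {α : Type*} {D : BlockWord α}
    (hD : D.HasLeadingInverses) : D.toPeriodic.HasLeadingInverses := by
  have hnat : ∀ i : ℕ, (D.toPeriodic.letter (i : ℤ)).2 = false → D.toPeriodic.period ∣ i := by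
    intro i hi
    obtain ⟨k, hk₁, hk₂⟩ := D.exists_start_le_lt i
    rcases le_or_gt (D.start k + (D.stem k).length) i with h | h
    · rw [D.letter_eq_sep h hk₂] at hi
      cases hi
    · obtain ⟨j, rfl⟩ := Nat.exists_eq_add_of_le hk₁
      rw [D.letter_start_add_of_lt (by omega)] at hi
      obtain ⟨rfl, hmod⟩ := hD k j _ hi
      obtain ⟨q, rfl⟩ := Nat.dvd_of_mod_eq_zero hmod
      have := D.start_add_mul 0 q
      rw [zero_add, mul_comm] at this
      rw [this, period_toPeriodic]
      exact ⟨q, by rw [start, zero_add, add_zero, mul_comm]⟩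
  intro i hi
  have hpos := D.toPeriodic.period_pos
  obtain ⟨r, hr⟩ :=
    Int.eq_ofNat_of_zero_le (Int.emod_nonneg i (b := D.toPeriodic.period) (by omega))
  rw [← PeriodicWord.letter_emod_period, hr] at hi
  rw [← Int.emod_add_mul_ediv i D.toPeriodic.period, hr]
  exact (Int.natCast_dvd_natCast.2 (hnat r hi)).add (dvd_mul_right _ _)

namespace BlockWord
variable {α : Type*}

/-- The blocks `x y ^ (lo + 1)²`, …, `x y ^ (lo + 1000)²` of `chainProd lo x y`. -/
def ofChain (lo : ℕ) {x y : α} (hxy : x ≠ y) : BlockWord α where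
  numBlocks := 1000
  stem _ := [(x, true)]
  exponent k := (lo + k % 1000 + 1) ^ 2
  sep := y
  numBlocks_pos := by norm_num
  stem_ne_nil _ := List.cons_ne_nil _ _
  ne_sep_of_mem_stem _ _ hl := by rwa [List.mem_singleton.1 hl]
  exponent_pos _ := Nat.one_le_pow _ _ (Nat.succ_pos _)
  isReduced_stem _ := FreeGroup.IsReduced.singleton
  stem_add_numBlocks _ := rfl
  exponent_add_numBlocks _ := by rw [Nat.add_mod_right]

variable {lo : ℕ} {x y : α} (hxy : x ≠ y)

theorem ofChain_start_succ (k : ℕ) :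
    (ofChain lo hxy).start (k + 1) = (ofChain lo hxy).start k + (1 + (lo + k % 1000 + 1) ^ 2) := rfl

theorem ofChain_start_succ_le (k : ℕ) :
    (ofChain lo hxy).start (k + 1) ≤ (ofChain lo hxy).start k + ((lo + 1000) ^ 2 + 1) := by
  have hk := Nat.mod_lt k (show 0 < 1000 by norm_num)
  have := Nat.pow_le_pow_left (show lo + k % 1000 + 1 ≤ lo + 1000 by omega) 2
  rw [ofChain_start_succ]
  omega

theorem le_ofChain_start {K : ℕ} (hK : K ≤ 1000) :
    K ^ 3 + 3 * lo ^ 2 * K + K ≤ 3 * (ofChain lo hxy).start K := by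
  induction K with
  | zero => simp
  | succ K ih =>
    rw [ofChain_start_succ, Nat.mod_eq_of_lt (by omega)]
    have := ih (by omega)
    nlinarith [Nat.zero_le (lo * K)]

theorem le_ofChain_start_numBlocks :
    60 * ((lo + 1000) ^ 2 + 1) ≤ (ofChain lo hxy).start 1000 := by
  have hle := le_ofChain_start (lo := lo) hxy le_rfl
  have : 3 * (60 * ((lo + 1000) ^ 2 + 1)) ≤ 1000 ^ 3 + 3 * lo ^ 2 * 1000 + 1000 := by
    zify
    nlinarith [sq_nonneg ((lo : ℤ) - 64)]
  omega

theorem ofChain_hasShortBlocks : (ofChain lo hxy).HasShortBlocks where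
  two_le_numBlocks := by norm_num [ofChain]
  start_add_four_le k := by
    change _ ≤ _ + (ofChain lo hxy).start 1000
    have := le_ofChain_start_numBlocks (lo := lo) hxy
    have : _ ≤ _ := ofChain_start_succ_le (lo := lo) hxy k
    have : (ofChain lo hxy).start (k + 2) ≤ _ := ofChain_start_succ_le hxy (k + 1)
    have : (ofChain lo hxy).start (k + 3) ≤ _ := ofChain_start_succ_le hxy (k + 2)
    have : (ofChain lo hxy).start (k + 4) ≤ _ := ofChain_start_succ_le hxy (k + 3)
    omega

theorem ofChain_hasLeadingInverses : (ofChain lo hxy).HasLeadingInverses := by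
  intro k j hj hf
  simp [ofChain] at hf

theorem ofChain_letter_eq_sep {j k : ℕ} (h₁ : (ofChain lo hxy).start k + 1 ≤ j)
    (h₂ : j < (ofChain lo hxy).start (k + 1)) :
    (ofChain lo hxy).toPeriodic.letter (j : ℤ) = (y, true) :=
  (ofChain lo hxy).letter_eq_sep h₁ h₂

theorem ofChain_letter_start (k : ℕ) :
    (ofChain lo hxy).toPeriodic.letter ((ofChain lo hxy).start k : ℤ) = (x, true) :=
  (ofChain lo hxy).letter_start_add_of_lt (j := 0) Nat.one_pos

theorem ofChain_letter_or (j : ℕ) :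
    (ofChain lo hxy).toPeriodic.letter (j : ℤ) = (y, true) ∨
      (ofChain lo hxy).toPeriodic.letter ((j + 1 : ℕ) : ℤ) = (y, true) := by
  obtain ⟨k, h₁, h₂⟩ := (ofChain lo hxy).exists_start_le_lt j
  have := (ofChain lo hxy).start_add_two_le k
  rcases h₁.lt_or_eq with h | rfl
  · exact Or.inl (ofChain_letter_eq_sep hxy h h₂)
  · exact Or.inr (ofChain_letter_eq_sep hxy le_rfl (by omega))

theorem ofChain_exists_letters (i n : ℕ) (hn : (ofChain lo hxy).toPeriodic.period < 12 * n) :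
    ∃ j, j + 2 < n ∧ (ofChain lo hxy).toPeriodic.letter ((i + j : ℕ) : ℤ) = (x, true) ∧
      (ofChain lo hxy).toPeriodic.letter ((i + (j + 1) : ℕ) : ℤ) = (y, true) ∧
      (ofChain lo hxy).toPeriodic.letter ((i + (j + 2) : ℕ) : ℤ) = (y, true) := by
  obtain ⟨k, hk, hi, hend⟩ := (ofChain_hasShortBlocks hxy).exists_block i n hn
  have hlt := (ofChain lo hxy).start_strictMono (Nat.lt_add_one k)
  obtain ⟨j, hj⟩ := Nat.exists_eq_add_of_lt (hi.trans hlt)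
  have hsucc : (ofChain lo hxy).start (k + 2) = _ := ofChain_start_succ hxy (k + 1)
  have hexp : 2 ^ 2 ≤ (lo + (k + 1) % 1000 + 1) ^ 2 := by
    have : (k + 1) % 1000 ≠ 0 := hk
    exact Nat.pow_le_pow_left (by omega) 2
  have hsep {l : ℕ} (h₁ : (ofChain lo hxy).start (k + 1) + 1 ≤ l)
      (h₂ : l < (ofChain lo hxy).start (k + 2)) := ofChain_letter_eq_sep hxy h₁ h₂
  refine ⟨j + 1, by omega, ?_, hsep (by omega) (by omega), hsep (by omega) (by omega)⟩
  rw [← add_assoc, ← hj]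
  exact ofChain_letter_start hxy (k + 1)

theorem ofChain_agrees_ofChain_of_ne {lo' : ℕ} {x' y' : α} (hxy' : x' ≠ y') (hy : y ≠ y') :
    (ofChain lo hxy).toPeriodic.Agrees (ofChain lo' hxy').toPeriodic := by
  refine PeriodicWord.agrees_of_natCast fun i i' n hletter hn => absurd ?_ hy
  obtain ⟨j, hj, -, hj₁, hj₂⟩ := ofChain_exists_letters hxy i n hn
  rw [hletter _ (by omega)] at hj₁ hj₂
  rcases ofChain_letter_or (lo := lo') hxy' (i' + (j + 1)) with h | h
  · exact congrArg Prod.fst (hj₁.symm.trans h)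
  · exact congrArg Prod.fst (hj₂.symm.trans h)

theorem ofChain_agrees_ofChain {lo' : ℕ} {x' : α} (hxy' : x' ≠ y) (hlo : x = x' → lo = lo') :
    (ofChain lo hxy).toPeriodic.Agrees (ofChain lo' hxy').toPeriodic := by
  refine PeriodicWord.agrees_of_natCast fun i i' n hletter hn => ?_
  obtain ⟨k, k', -, hexp, hstem, hstart⟩ :=
    (ofChain_hasShortBlocks hxy).exists_matching_block (D' := ofChain lo' hxy') rfl hn hletter
  obtain rfl : x = x' := congrArg Prod.fst (List.singleton_inj.1 hstem)
  obtain rfl := hlo rfl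
  have hbase : lo + k % 1000 + 1 = lo + k' % 1000 + 1 := Nat.pow_left_injective two_ne_zero hexp
  have hmod : k % 1000 = k' % 1000 := by omega
  exact ⟨rfl, (ofChain lo hxy).letter_add_eq_of_start hmod hstart⟩

end BlockWord

namespace PeriodicWord
variable {α : Type*}

/-- The constant word `f`, with period `p`. -/
def ofPow (f : α) (p : ℕ) (hp : 0 < p) : PeriodicWord α where
  letter _ := (f, true)
  period := p
  period_pos := hp
  periodic _ := rfl
  reduced _ _ := rfl

variable {f : α} {p : ℕ} (hp : 0 < p)

theorem ofPow_agrees_ofPow {f' : α} {p' : ℕ} (hp' : 0 < p') (h : f = f' → p = p') :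
    (ofPow f p hp).Agrees (ofPow f' p' hp') := by
  refine agrees_of_natCast fun i i' n hletter hn => ?_
  have hff' := hletter 0 (by omega)
  exact ⟨h (congrArg Prod.fst hff'), fun _ => hff'⟩

variable {lo : ℕ} {x y : α} (hxy : x ≠ y)

theorem ofPow_agrees_ofChain (hlo : 24 * ((lo + 1000) ^ 2 + 1) ≤ p) :
    (ofPow f p hp).Agrees (BlockWord.ofChain lo hxy).toPeriodic := by
  refine agrees_of_natCast fun i i' n hletter hn => absurd ?_ hxy
  change p < 12 * n at hn
  obtain ⟨k, hk₁, hk₂⟩ := (BlockWord.ofChain lo hxy).exists_start_le_lt i'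
  have hle := BlockWord.ofChain_start_succ_le (lo := lo) hxy k
  have hlt := (BlockWord.ofChain lo hxy).start_add_two_le (k + 1)
  obtain ⟨j, hj⟩ := Nat.exists_eq_add_of_le hk₂.le
  have h₀ := hletter j (by omega)
  have h₁ := hletter (j + 1) (by omega)
  rw [← hj, BlockWord.ofChain_letter_start] at h₀
  rw [← add_assoc i' j 1, ← hj, BlockWord.ofChain_letter_eq_sep hxy le_rfl (by omega)] at h₁
  exact congrArg Prod.fst (h₀.symm.trans h₁)

theorem ofChain_agrees_ofPow : (BlockWord.ofChain lo hxy).toPeriodic.Agrees (ofPow f p hp) := by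
  refine agrees_of_natCast fun i i' n hletter hn => absurd ?_ hxy
  obtain ⟨j, hj, hj₀, hj₁, -⟩ := BlockWord.ofChain_exists_letters hxy i n hn
  rw [hletter _ (by omega)] at hj₀ hj₁
  exact congrArg Prod.fst (hj₀.symm.trans hj₁)

end PeriodicWord

/-! ### Relators attached to symbols -/

/-- A cyclically reduced form of a relator attached to a symbol: the word
`first b ^ firstExponent` followed by the words `base b ^ (100 * index + k + 1)` for
`0 < k < numBlocks`. The stem `first` is `base` multiplied on the left by the inverse of the value
of a function symbol; if this product is trivial then the first and the last power of `b` are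
cyclically adjacent, and merge into a single one, leaving `99` blocks. -/
structure SymbolWord (A : Type) where
  index : ℕ
  base : List (GenSym A × Bool)
  first : List (GenSym A × Bool)
  numBlocks : ℕ
  firstExponent : ℕ
  index_pos : 1 ≤ index
  base_ne_nil : base ≠ []
  first_ne_nil : first ≠ []
  numBlocks_firstExponent : numBlocks = 100 ∧ firstExponent = 100 * index + 1 ∨
    numBlocks = 99 ∧ firstExponent = 200 * index + 101
  length_first_le : first.length ≤ base.length + 1
  exists_of_mem_base : ∀ l ∈ base, ∃ a, l = (GenSym.elt a, true)
  exists_of_mem_first : ∀ l ∈ first, ∃ a, l.1 = GenSym.elt a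
  snd_of_mem_tail_first : ∀ l ∈ first.tail, l.2 = true
  isReduced_first : FreeGroup.IsReduced first

theorem isReduced_of_forall_snd {α : Type*} {w : List (α × Bool)} (h : ∀ l ∈ w, l.2 = true) :
    FreeGroup.IsReduced w := by
  refine List.Pairwise.isChain (List.pairwise_of_forall_mem_list ?_)
  exact fun a ha b hb _ => (h a ha).trans (h b hb).symm

namespace SymbolWord
variable {A : Type} (W W' : SymbolWord A)

theorem exists_of_mem_ite {k : ℕ} {l : GenSym A × Bool}
    (hl : l ∈ if k % W.numBlocks = 0 then W.first else W.base) : ∃ a, l.1 = GenSym.elt a := by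
  split at hl
  · exact W.exists_of_mem_first l hl
  · obtain ⟨a, rfl⟩ := W.exists_of_mem_base l hl
    exact ⟨a, rfl⟩

/-- The block word underlying a symbol word. -/
def toBlockWord : BlockWord (GenSym A) where
  numBlocks := W.numBlocks
  stem k := if k % W.numBlocks = 0 then W.first else W.base
  exponent k := if k % W.numBlocks = 0 then W.firstExponent
    else 100 * W.index + k % W.numBlocks + 1
  sep := GenSym.b
  numBlocks_pos := by have := W.numBlocks_firstExponent; omega
  stem_ne_nil k := by
    split
    · exact W.first_ne_nil
    · exact W.base_ne_nil
  ne_sep_of_mem_stem k l hl := by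
    obtain ⟨a, ha⟩ := W.exists_of_mem_ite hl
    rw [ha]
    exact nofun
  exponent_pos k := by have := W.numBlocks_firstExponent; split <;> omega
  isReduced_stem k := by
    split
    · exact W.isReduced_first
    · exact isReduced_of_forall_snd fun l hl => by
        obtain ⟨a, rfl⟩ := W.exists_of_mem_base l hl
        rfl
  stem_add_numBlocks k := by rw [Nat.add_mod_right]
  exponent_add_numBlocks k := by rw [Nat.add_mod_right]

/-- The periodic word underlying a symbol word. -/
abbrev toPeriodic : PeriodicWord (GenSym A) := W.toBlockWord.toPeriodic

variable {W W'}

theorem stem_of_mod_ne_zero {k : ℕ} (hk : k % W.numBlocks ≠ 0) :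
    W.toBlockWord.stem k = W.base := if_neg hk

theorem stem_of_mod_eq_zero {k : ℕ} (hk : k % W.numBlocks = 0) :
    W.toBlockWord.stem k = W.first := if_pos hk

theorem exponent_of_mod_ne_zero {k : ℕ} (hk : k % W.numBlocks ≠ 0) :
    W.toBlockWord.exponent k = 100 * W.index + k % W.numBlocks + 1 := if_neg hk

theorem exponent_of_mod_eq_zero {k : ℕ} (hk : k % W.numBlocks = 0) :
    W.toBlockWord.exponent k = W.firstExponent := if_pos hk

variable (W W')

theorem start_succ_le (k : ℕ) : W.toBlockWord.start (k + 1) ≤ W.toBlockWord.start k +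
    (W.base.length + 100 * W.index + 100) ∨ k % W.numBlocks = 0 ∧
    W.toBlockWord.start (k + 1) ≤
      W.toBlockWord.start k + (W.base.length + 200 * W.index + 102) := by
  have hshape := W.numBlocks_firstExponent
  have hlength := W.length_first_le
  rw [BlockWord.start_succ]
  rcases eq_or_ne (k % W.numBlocks) 0 with hk | hk
  · rw [stem_of_mod_eq_zero hk, exponent_of_mod_eq_zero hk]
    omega
  · have := Nat.mod_lt k (show 0 < W.numBlocks by omega)
    rw [stem_of_mod_ne_zero hk, exponent_of_mod_ne_zero hk]
    omega

theorem le_start {K : ℕ} (hK : K < W.numBlocks) :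
    2 * K * (W.base.length + 100 * W.index + 1) + K * (K + 1) ≤
      2 * W.toBlockWord.start (K + 1) := by
  induction K with
  | zero => simp
  | succ K ih =>
    have hmod : (K + 1) % W.numBlocks = K + 1 := Nat.mod_eq_of_lt hK
    have hne : (K + 1) % W.numBlocks ≠ 0 := by omega
    have := ih (by omega)
    rw [BlockWord.start_succ, stem_of_mod_ne_zero hne, exponent_of_mod_ne_zero hne, hmod]
    linarith

theorem hasShortBlocks : W.toBlockWord.HasShortBlocks where
  two_le_numBlocks := by
    change 2 ≤ W.numBlocks
    have := W.numBlocks_firstExponent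
    omega
  start_add_four_le k := by
    change _ ≤ _ + W.toBlockWord.start W.numBlocks
    have hshape := W.numBlocks_firstExponent
    have hlong : 98 * W.base.length + 9800 * W.index + 4949 ≤
        W.toBlockWord.start W.numBlocks := by
      have := W.le_start (K := 98) (by omega)
      have := W.toBlockWord.start_strictMono.monotone (show 98 + 1 ≤ W.numBlocks by omega)
      omega
    have := W.index_pos
    have h₀ := W.start_succ_le k
    have h₁ := W.start_succ_le (k + 1)
    have h₂ := W.start_succ_le (k + 2)
    have h₃ := W.start_succ_le (k + 3)
    simp only [add_assoc, Nat.reduceAdd] at h₀ h₁ h₂ h₃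
    rcases hshape with ⟨hN, -⟩ | ⟨hN, -⟩ <;> rw [hN] at h₀ h₁ h₂ h₃ <;> omega

theorem hasLeadingInverses : W.toBlockWord.HasLeadingInverses := by
  intro k j hj hfalse
  change j = 0 ∧ k % W.numBlocks = 0
  rcases eq_or_ne (k % W.numBlocks) 0 with hk | hk
  · refine ⟨by_contra fun hj₀ => ?_, hk⟩
    obtain ⟨j, rfl⟩ := Nat.exists_eq_succ_of_ne_zero hj₀
    simp only [stem_of_mod_eq_zero hk] at hj hfalse
    have hmem : W.first[j + 1] ∈ W.first.tail := by
      rw [← List.getElem_tail (h := by rw [List.length_tail]; omega)]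
      exact List.getElem_mem _
    exact Bool.false_ne_true (hfalse.symm.trans (W.snd_of_mem_tail_first _ hmem))
  · simp only [stem_of_mod_ne_zero hk] at hj hfalse
    obtain ⟨a, ha⟩ := W.exists_of_mem_base _ (List.getElem_mem hj)
    rw [ha] at hfalse
    cases hfalse

theorem letter_eq_b_or_elt (j : ℕ) : (W.toPeriodic.letter (j : ℤ)).1 = GenSym.b ∨
    ∃ a, (W.toPeriodic.letter (j : ℤ)).1 = GenSym.elt a := by
  obtain ⟨k, h₁, h₂⟩ := W.toBlockWord.exists_start_le_lt j
  by_cases hj : W.toBlockWord.start k + (W.toBlockWord.stem k).length ≤ j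
  · exact Or.inl (congrArg Prod.fst (W.toBlockWord.letter_eq_sep hj h₂))
  · obtain ⟨c, rfl⟩ := Nat.exists_eq_add_of_le h₁
    rw [W.toBlockWord.letter_start_add_of_lt (by omega : c < (W.toBlockWord.stem k).length)]
    exact Or.inr (W.exists_of_mem_ite (List.getElem_mem _))

theorem agrees (h : W.index = W'.index → W.base = W'.base → W = W') :
    W.toPeriodic.Agrees W'.toPeriodic := by
  refine PeriodicWord.agrees_of_natCast fun i i' n hletter hn => ?_
  obtain ⟨k, k', hk, hexp, hstem, hstart⟩ :=
    W.hasShortBlocks.exists_matching_block (D' := W'.toBlockWord) rfl hn hletter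
  have hk : k % W.numBlocks ≠ 0 := hk
  have hshape := W.numBlocks_firstExponent
  have hshape' := W'.numBlocks_firstExponent
  have hlt := Nat.mod_lt k (show 0 < W.numBlocks by omega)
  have hlt' := Nat.mod_lt k' (show 0 < W'.numBlocks by omega)
  rw [exponent_of_mod_ne_zero hk] at hexp
  have hk' : k' % W'.numBlocks ≠ 0 := by
    intro hk'
    rw [exponent_of_mod_eq_zero hk'] at hexp
    omega
  rw [exponent_of_mod_ne_zero hk'] at hexp
  rw [stem_of_mod_ne_zero hk, stem_of_mod_ne_zero hk'] at hstem
  have hmod : k % W.numBlocks = k' % W'.numBlocks := by omega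
  obtain rfl := h (by omega) hstem
  exact ⟨rfl, W.toBlockWord.letter_add_eq_of_start hmod hstart⟩

variable {lo : ℕ} {x y f : GenSym A} {p : ℕ} (hp : 0 < p)

theorem ofPow_agrees (hb : f ≠ GenSym.b) (helt : ∀ a, f ≠ GenSym.elt a) :
    (PeriodicWord.ofPow f p hp).Agrees W.toPeriodic := by
  refine PeriodicWord.agrees_of_natCast fun i i' n hletter hn => ?_
  have hf := congrArg Prod.fst (hletter 0 (by omega))
  rcases W.letter_eq_b_or_elt (i' + 0) with h | ⟨a, h⟩
  · exact absurd (hf.trans h) hb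
  · exact absurd (hf.trans h) (helt a)

theorem agrees_ofPow (hb : f ≠ GenSym.b) (helt : ∀ a, f ≠ GenSym.elt a) :
    W.toPeriodic.Agrees (PeriodicWord.ofPow f p hp) := by
  refine PeriodicWord.agrees_of_natCast fun i i' n hletter hn => ?_
  have hf := congrArg Prod.fst (hletter 0 (by omega))
  rcases W.letter_eq_b_or_elt (i + 0) with h | ⟨a, h⟩
  · exact absurd (hf.symm.trans h) hb
  · exact absurd (hf.symm.trans h) (helt a)

variable (hxy : x ≠ y)

theorem ofChain_agrees (hb : y ≠ GenSym.b) (helt : ∀ a, y ≠ GenSym.elt a) :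
    (BlockWord.ofChain lo hxy).toPeriodic.Agrees W.toPeriodic := by
  refine PeriodicWord.agrees_of_natCast fun i i' n hletter hn => ?_
  obtain ⟨j, hj, -, hy, -⟩ := BlockWord.ofChain_exists_letters hxy i n hn
  rw [hletter _ (by omega)] at hy
  rcases W.letter_eq_b_or_elt (i' + (j + 1)) with h | ⟨a, h⟩
  · exact absurd ((congrArg Prod.fst hy).symm.trans h) hb
  · exact absurd ((congrArg Prod.fst hy).symm.trans h) (helt a)

theorem agrees_ofChain (hb : y ≠ GenSym.b) :
    W.toPeriodic.Agrees (BlockWord.ofChain lo hxy).toPeriodic := by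
  refine PeriodicWord.agrees_of_natCast fun i i' n hletter hn => absurd ?_ hb
  obtain ⟨k, hk, hi, hend⟩ := W.hasShortBlocks.exists_block i n hn
  have hexp := exponent_of_mod_ne_zero (W := W) (k := k + 1) hk
  have hsucc : W.toBlockWord.start (k + 2) = _ := W.toBlockWord.start_succ (k + 1)
  have hlt := W.toBlockWord.start_strictMono (Nat.lt_add_one k)
  have := W.index_pos
  change _ < W.toBlockWord.start (k + 1) at hlt
  obtain ⟨j, hj⟩ := Nat.exists_eq_add_of_le
    (show i ≤ W.toBlockWord.start (k + 1) + (W.toBlockWord.stem (k + 1)).length by omega)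
  have hsep (l : ℕ) (hl : l < 2) : W.toPeriodic.letter ((i + (j + l) : ℕ) : ℤ) = (.b, true) :=
    W.toBlockWord.letter_eq_sep (k := k + 1) (by omega)
      (show _ < W.toBlockWord.start (k + 2) by omega)
  have h₀ := hsep 0 (by omega)
  have h₁ := hsep 1 (by omega)
  rw [hletter _ (by omega)] at h₀ h₁
  rcases BlockWord.ofChain_letter_or (lo := lo) hxy (i' + j) with h | h
  · exact congrArg Prod.fst (h.symm.trans h₀)
  · exact congrArg Prod.fst (h.symm.trans h₁)

end SymbolWord

theorem mk_flatMap {α β : Type*} (l : List β) (f : β → List (α × Bool)) :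
    FreeGroup.mk (l.flatMap f) = (l.map fun k => FreeGroup.mk (f k)).prod := by
  induction l with
  | nil => exact FreeGroup.one_eq_mk.symm
  | cons a l ih => rw [List.flatMap_cons, ← FreeGroup.mul_mk, ih, List.map_cons, List.prod_cons]

theorem mk_replicate {α : Type*} (n : ℕ) (y : α) :
    FreeGroup.mk (List.replicate n (y, true)) = FreeGroup.of y ^ n := by
  classical rw [← FreeGroup.toWord_of_pow, FreeGroup.mk_toWord]

theorem BlockWord.shift_toPeriodic_eq_prod {α : Type*} (D : BlockWord α) : D.toPeriodic.shift =
    ((List.range D.numBlocks).map fun k =>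
      FreeGroup.mk (D.stem k) * FreeGroup.of D.sep ^ D.exponent k).prod := by
  simp only [D.shift_toPeriodic, word, mk_flatMap, block, ← FreeGroup.mul_mk, mk_replicate]

theorem PeriodicWord.shift_ofPow {α : Type*} (f : α) (p : ℕ) (hp : 0 < p) :
    (ofPow f p hp).shift = FreeGroup.of f ^ p := by
  simp only [shift, segment, ofPow, List.map_const', List.length_range, mk_replicate]

theorem BlockWord.shift_ofChain {α : Type*} (lo : ℕ) {x y : α} (hxy : x ≠ y) :
    (ofChain lo hxy).toPeriodic.shift = chainProd lo (FreeGroup.of x) (FreeGroup.of y) := by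
  rw [shift_toPeriodic_eq_prod]
  refine congrArg List.prod (List.map_congr_left fun k hk => ?_)
  change FreeGroup.of x * FreeGroup.of y ^ ((lo + k % 1000 + 1) ^ 2) = _
  rw [Nat.mod_eq_of_lt (show k < 1000 from List.mem_range.1 hk)]

theorem SymbolWord.shift_eq {A : Type} (W : SymbolWord A) {K : ℕ} (hK : W.numBlocks = K + 1) :
    W.toPeriodic.shift = FreeGroup.mk W.first * FreeGroup.of GenSym.b ^ W.firstExponent *
      ((List.range K).map fun k =>
        FreeGroup.mk W.base * FreeGroup.of GenSym.b ^ (100 * W.index + (k + 1) + 1)).prod := by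
  rw [toPeriodic, BlockWord.shift_toPeriodic_eq_prod]
  change ((List.range W.numBlocks).map _).prod = _
  rw [hK, List.prod_range_succ', stem_of_mod_eq_zero (Nat.zero_mod _),
    exponent_of_mod_eq_zero (Nat.zero_mod _)]
  refine congrArg (_ * ·) (congrArg List.prod (List.map_congr_left fun k hk => ?_))
  have hmod : (k + 1) % W.numBlocks = k + 1 :=
    Nat.mod_eq_of_lt (by have := List.mem_range.1 hk; omega)
  rw [Nat.succ_eq_add_one, stem_of_mod_ne_zero (by omega), exponent_of_mod_ne_zero (by omega),
    hmod]
  rfl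

theorem wProd_eq_mul {G : Type*} [Group G] (m : ℕ) {n : ℕ} (xs : Fin n → G) (y : G) :
    wProd m xs y = (List.ofFn xs).prod * y ^ (100 * m + 1) *
      ((List.range 99).map fun k => (List.ofFn xs).prod * y ^ (100 * m + (k + 1) + 1)).prod :=
  List.prod_range_succ' _ 99

namespace IndexedStructure
variable (S : IndexedStructure) (m : ℕ) (as : Fin (S.arity m) → S.A)

/-- The word `a₁⋯aₙ` in the generators of `G(𝒜)`. -/
def argWord : List (GenSym S.A × Bool) := List.ofFn fun i => (GenSym.elt (as i), true)

open Classical in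
/-- The inverse of the value of a function symbol, and `1` for a relation symbol. -/
noncomputable def valueInv : FreeGroup (GenSym S.A) :=
  if S.isFunc m then (FreeGroup.of (GenSym.elt (S.funcInterp m as)))⁻¹ else 1

/-- The relator which expresses that the `m`-th symbol is interpreted by a function taking the
tuple to its value, or by a relation holding at the tuple. -/
noncomputable def symbolRelator : FreeGroup (GenSym S.A) :=
  wProd m (fun i => FreeGroup.of (GenSym.elt (as i))) (FreeGroup.of GenSym.b) * S.valueInv m as

open Classical in
/-- The reduced word of `valueInv m as * a₁⋯aₙ`. -/
noncomputable def headWord : List (GenSym S.A × Bool) :=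
  if S.isFunc m then
    if (S.argWord m as).head? = some (GenSym.elt (S.funcInterp m as), true) then
      (S.argWord m as).tail
    else (GenSym.elt (S.funcInterp m as), false) :: S.argWord m as
  else S.argWord m as

variable {S m as}

theorem argWord_ne_nil (hm : 1 ≤ m) : S.argWord m as ≠ [] := by
  refine List.ne_nil_of_length_pos ?_
  rw [argWord, List.length_ofFn]
  exact S.arity_pos m hm

theorem exists_of_mem_argWord {l : GenSym S.A × Bool} (hl : l ∈ S.argWord m as) :
    ∃ a, l = (GenSym.elt a, true) := by
  obtain ⟨i, rfl⟩ := List.mem_ofFn.1 hl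
  exact ⟨_, rfl⟩

theorem snd_of_mem_argWord {l : GenSym S.A × Bool} (hl : l ∈ S.argWord m as) : l.2 = true := by
  obtain ⟨a, rfl⟩ := exists_of_mem_argWord hl
  rfl

theorem argWord_injective {as' : Fin (S.arity m) → S.A} (h : S.argWord m as = S.argWord m as') :
    as = as' :=
  funext fun i => GenSym.elt.inj (congrArg Prod.fst (congrFun (List.ofFn_injective h) i))

theorem mk_argWord : FreeGroup.mk (S.argWord m as) =
    (List.ofFn fun i => FreeGroup.of (GenSym.elt (as i))).prod := by
  have (l : List (GenSym S.A)) :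
      FreeGroup.mk (l.map fun a => (a, true)) = (l.map FreeGroup.of).prod := by
    induction l with
    | nil => exact FreeGroup.one_eq_mk.symm
    | cons a l ih =>
      rw [List.map_cons, List.map_cons, List.prod_cons, ← ih]
      rfl
  have h := this (List.ofFn fun i => GenSym.elt (as i))
  rwa [List.map_ofFn, List.map_ofFn] at h

theorem headWord_eq_or : S.headWord m as = S.argWord m as ∨
    S.headWord m as = (S.argWord m as).tail ∨
    ∃ a, (S.argWord m as).head? ≠ some (GenSym.elt a, true) ∧
      S.headWord m as = (GenSym.elt a, false) :: S.argWord m as := by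
  unfold headWord
  split
  · split
    · exact Or.inr (Or.inl rfl)
    · exact Or.inr (Or.inr ⟨_, ‹_›, rfl⟩)
  · exact Or.inl rfl

theorem length_headWord_le : (S.headWord m as).length ≤ (S.argWord m as).length + 1 := by
  rcases S.headWord_eq_or (m := m) (as := as) with h | h | ⟨a, -, h⟩ <;> rw [h]
  · exact Nat.le_succ _
  · rw [List.length_tail]; omega
  · exact le_rfl

theorem exists_of_mem_headWord {l : GenSym S.A × Bool} (hl : l ∈ S.headWord m as) :
    ∃ a, l.1 = GenSym.elt a := by
  have harg {l} (hl : l ∈ S.argWord m as) : ∃ a, l.1 = GenSym.elt a := by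
    obtain ⟨a, rfl⟩ := exists_of_mem_argWord hl
    exact ⟨a, rfl⟩
  rcases S.headWord_eq_or (m := m) (as := as) with h | h | ⟨a, -, h⟩ <;> rw [h] at hl
  · exact harg hl
  · exact harg (List.mem_of_mem_tail hl)
  · rcases List.mem_cons.1 hl with rfl | hl
    · exact ⟨a, rfl⟩
    · exact harg hl

theorem snd_of_mem_tail_headWord {l : GenSym S.A × Bool} (hl : l ∈ (S.headWord m as).tail) :
    l.2 = true := by
  rcases S.headWord_eq_or (m := m) (as := as) with h | h | ⟨a, -, h⟩ <;> rw [h] at hl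
  · exact snd_of_mem_argWord (List.mem_of_mem_tail hl)
  · exact snd_of_mem_argWord (List.mem_of_mem_tail (List.mem_of_mem_tail hl))
  · exact snd_of_mem_argWord hl

theorem isReduced_headWord : FreeGroup.IsReduced (S.headWord m as) := by
  have harg : FreeGroup.IsReduced (S.argWord m as) :=
    isReduced_of_forall_snd fun _ => snd_of_mem_argWord
  rcases S.headWord_eq_or (m := m) (as := as) with h | h | ⟨a, hne, h⟩ <;> rw [h]
  · exact harg
  · exact List.IsChain.tail harg
  · refine List.isChain_cons.2 ⟨fun l hl hla => absurd hl ?_, harg⟩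
    obtain ⟨b, rfl⟩ := exists_of_mem_argWord (List.mem_of_mem_head? hl)
    rwa [← show GenSym.elt a = GenSym.elt b from hla]

theorem mk_headWord :
    FreeGroup.mk (S.headWord m as) = S.valueInv m as * FreeGroup.mk (S.argWord m as) := by
  unfold headWord valueInv
  split
  · split
    · next hhead =>
      rw [← List.cons_head?_tail hhead, eq_inv_mul_iff_mul_eq]
      rfl
    · rfl
  · rw [one_mul]

variable (S)

open Classical in
/-- The symbol word attached to a tuple. -/
noncomputable def symbolWord (m : ℕ) (hm : 1 ≤ m) (as : Fin (S.arity m) → S.A) :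
    SymbolWord S.A where
  index := m
  base := S.argWord m as
  first := if S.headWord m as = [] then S.argWord m as else S.headWord m as
  numBlocks := if S.headWord m as = [] then 99 else 100
  firstExponent := if S.headWord m as = [] then 200 * m + 101 else 100 * m + 1
  index_pos := hm
  base_ne_nil := argWord_ne_nil hm
  first_ne_nil := by
    split
    · exact argWord_ne_nil hm
    · assumption
  numBlocks_firstExponent := by split <;> simp
  length_first_le := by
    split
    · exact Nat.le_succ _
    · exact length_headWord_le
  exists_of_mem_base _ := exists_of_mem_argWord
  exists_of_mem_first l hl := by
    split at hl
    · obtain ⟨a, rfl⟩ := exists_of_mem_argWord hl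
      exact ⟨a, rfl⟩
    · exact exists_of_mem_headWord hl
  snd_of_mem_tail_first l hl := by
    split at hl
    · exact snd_of_mem_argWord (List.mem_of_mem_tail hl)
    · exact snd_of_mem_tail_headWord hl
  isReduced_first := by
    split
    · exact isReduced_of_forall_snd fun _ => snd_of_mem_argWord
    · exact isReduced_headWord

theorem isConj_symbolRelator (hm : 1 ≤ m) :
    IsConj (S.symbolRelator m as) (S.symbolWord m hm as).toPeriodic.shift := by
  rw [isConj_iff, symbolRelator, wProd_eq_mul, ← mk_argWord]
  by_cases hnil : S.headWord m as = []
  · have hvalue : S.valueInv m as = (FreeGroup.mk (S.argWord m as))⁻¹ :=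
      eq_inv_of_mul_eq_one_left (by rw [← mk_headWord, hnil, FreeGroup.one_eq_mk])
    rw [(S.symbolWord m hm as).shift_eq (K := 98) (if_pos hnil)]
    have hfirst : (S.symbolWord m hm as).first = S.argWord m as := if_pos hnil
    have hexp : (S.symbolWord m hm as).firstExponent = (100 * m + 100) + (100 * m + 1) :=
      (if_pos hnil).trans (by ring)
    change ∃ c, _ = _ * ((List.range 98).map fun k => FreeGroup.mk (S.argWord m as) *
      FreeGroup.of GenSym.b ^ (100 * m + (k + 1) + 1)).prod
    rw [hfirst, hexp, hvalue, List.prod_range_succ _ 98, pow_add]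
    refine ⟨FreeGroup.mk (S.argWord m as) * FreeGroup.of GenSym.b ^ (100 * m + 100) *
      (FreeGroup.mk (S.argWord m as))⁻¹, ?_⟩
    group
  · rw [(S.symbolWord m hm as).shift_eq (K := 99) (if_neg hnil)]
    have hfirst : (S.symbolWord m hm as).first = S.headWord m as := if_neg hnil
    have hexp : (S.symbolWord m hm as).firstExponent = 100 * m + 1 := if_neg hnil
    rw [hfirst, hexp, mk_headWord]
    exact ⟨S.valueInv m as, by simp only [symbolWord, mul_assoc, mul_inv_cancel, mul_one]⟩

end IndexedStructure

/-! ### The relators of `G(𝒜)` -/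

/-- The relators `f ^ p` of `G(𝒜)`. -/
inductive IsPowRelator {A : Type} (p₁ p₂ : ℕ) : GenSym A → ℕ → Prop
  | f1 : IsPowRelator p₁ p₂ .f1 p₁
  | f2 : IsPowRelator p₁ p₂ .f2 p₂

/-- The relators `chainProd lo x y` of `G(𝒜)`. -/
inductive IsChainRelator {A : Type} : ℕ → GenSym A → GenSym A → Prop
  | f1_f2 : IsChainRelator 4000 .f1 .f2
  | f2_f1 : IsChainRelator 4000 .f2 .f1
  | b_f1 : IsChainRelator 1000 .b .f1
  | b_f2 : IsChainRelator 1000 .b .f2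
  | c_f1 : IsChainRelator 2000 .c .f1
  | c_f2 : IsChainRelator 2000 .c .f2
  | d_f1 : IsChainRelator 3000 .d .f1
  | d_f2 : IsChainRelator 3000 .d .f2
  | elt_c (a : A) : IsChainRelator 0 (.elt a) .c
  | elt_d (a : A) : IsChainRelator 0 (.elt a) .d

section
variable {A : Type}

namespace IsPowRelator
variable {p₁ p₂ p p' : ℕ} {f : GenSym A} (h : IsPowRelator p₁ p₂ f p)
include h

theorem ne_b : f ≠ .b := by cases h <;> simp

theorem ne_elt (a : A) : f ≠ .elt a := by cases h <;> simp

theorem lt_of_lt {n : ℕ} (h₁ : n < p₁) (h₂ : n < p₂) : n < p := by cases h <;> assumption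

theorem pos [NeZero p₁] [NeZero p₂] : 0 < p := h.lt_of_lt (NeZero.pos p₁) (NeZero.pos p₂)

theorem eq_of_isPowRelator (h' : IsPowRelator p₁ p₂ f p') : p = p' := by
  cases h <;> cases h' <;> rfl

end IsPowRelator

namespace IsChainRelator
variable {lo lo' : ℕ} {x y y' : GenSym A} (h : IsChainRelator lo x y)
include h

theorem ne : x ≠ y := by cases h <;> simp

theorem lo_le : lo ≤ 4000 := by cases h <;> simp

theorem ne_b : y ≠ .b := by cases h <;> simp

theorem ne_elt (a : A) : y ≠ .elt a := by cases h <;> simp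

theorem lo_eq (h' : IsChainRelator lo' x y') : lo = lo' := by cases h <;> cases h' <;> rfl

end IsChainRelator
end

/-- The relators of `G(𝒜)`, up to conjugation. -/
inductive RelatorIndex (S : IndexedStructure) (p₁ p₂ : ℕ) : Type
  | pow (f : GenSym S.A) (p : ℕ) (h : IsPowRelator p₁ p₂ f p)
  | chain (lo : ℕ) (x y : GenSym S.A) (h : IsChainRelator lo x y)
  | symbol (m : ℕ) (hm : 1 ≤ m) (as : Fin (S.arity m) → S.A) (h : S.isFunc m ∨ S.relInterp m as)

namespace RelatorIndex
variable {S : IndexedStructure} {p₁ p₂ : ℕ} [NeZero p₁] [NeZero p₂]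

/-- The periodic word whose period is the cyclically reduced form of a relator. -/
noncomputable def toPeriodic : RelatorIndex S p₁ p₂ → PeriodicWord (GenSym S.A)
  | pow f p h => .ofPow f p h.pos
  | chain lo _ _ h => (BlockWord.ofChain lo h.ne).toPeriodic
  | symbol m hm as _ => (S.symbolWord m hm as).toPeriodic

theorem _root_.IsChainRelator.le_period {lo : ℕ} {x y : GenSym S.A} (h : IsChainRelator lo x y) :
    60 * ((lo + 1000) ^ 2 + 1) ≤ (chain (p₁ := p₁) (p₂ := p₂) lo x y h).toPeriodic.period := by
  rw [toPeriodic, BlockWord.period_toPeriodic]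
  exact BlockWord.le_ofChain_start_numBlocks h.ne

theorem le_period (hp₁ : 24 ≤ p₁) (hp₂ : 24 ≤ p₂) (t : RelatorIndex S p₁ p₂) :
    24 ≤ t.toPeriodic.period := by
  cases t with
  | pow f p h => exact h.lt_of_lt hp₁ hp₂
  | chain lo x y h => exact le_trans (by omega) h.le_period
  | symbol m hm as h =>
    rw [toPeriodic, SymbolWord.toPeriodic, BlockWord.period_toPeriodic]
    refine le_trans ?_ (S.symbolWord m hm as).toBlockWord.start_strictMono.le_apply
    have := (S.symbolWord m hm as).numBlocks_firstExponent
    change 24 ≤ (S.symbolWord m hm as).numBlocks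
    omega

theorem hasLeadingInverses (t : RelatorIndex S p₁ p₂) : t.toPeriodic.HasLeadingInverses := by
  cases t with
  | pow f p h => exact fun _ hi => absurd hi Bool.true_eq_false.mp
  | chain lo x y h => exact (BlockWord.ofChain_hasLeadingInverses h.ne).toPeriodic
  | symbol m hm as h => exact (S.symbolWord m hm as).hasLeadingInverses.toPeriodic

theorem agrees (hp₁ : 10 ^ 10 < p₁) (hp₂ : 10 ^ 10 < p₂) (t t' : RelatorIndex S p₁ p₂) :
    t.toPeriodic.Agrees t'.toPeriodic := by
  match t, t' with
  | pow f p h, pow f' p' h' =>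
    exact PeriodicWord.ofPow_agrees_ofPow _ _ fun hf => h.eq_of_isPowRelator (hf ▸ h')
  | pow f p h, chain lo x y h' =>
    refine PeriodicWord.ofPow_agrees_ofChain _ _ (le_trans ?_ (h.lt_of_lt hp₁ hp₂).le)
    nlinarith [h'.lo_le]
  | pow f p h, symbol m hm as _ => exact SymbolWord.ofPow_agrees _ _ h.ne_b h.ne_elt
  | chain lo x y h, pow f p h' => exact PeriodicWord.ofChain_agrees_ofPow _ _
  | chain lo x y h, chain lo' x' y' h' =>
    rcases eq_or_ne y y' with rfl | hy
    · exact BlockWord.ofChain_agrees_ofChain _ _ fun hx => h.lo_eq (hx ▸ h')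
    · exact BlockWord.ofChain_agrees_ofChain_of_ne _ _ hy
  | chain lo x y h, symbol m hm as _ => exact SymbolWord.ofChain_agrees _ _ h.ne_b h.ne_elt
  | symbol m hm as _, pow f p h' => exact SymbolWord.agrees_ofPow _ _ h'.ne_b h'.ne_elt
  | symbol m hm as _, chain lo x y h' => exact SymbolWord.agrees_ofChain _ _ h'.ne_b
  | symbol m hm as _, symbol m' hm' as' _ =>
    refine SymbolWord.agrees _ _ fun hindex hbase => ?_
    obtain rfl : m = m' := hindex
    rw [IndexedStructure.argWord_injective hbase]

theorem smallCancellation (hp₁ : 10 ^ 10 < p₁) (hp₂ : 10 ^ 10 < p₂) :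
    SmallCancellation (toPeriodic : RelatorIndex S p₁ p₂ → _) where
  agrees := agrees hp₁ hp₂
  le_of_eq_invRev t t' i i' n heq := by
    have h := t.le_period (by omega) (by omega)
    have h' := t'.le_period (by omega) (by omega)
    by_contra! hlt
    exact PeriodicWord.segment_ne_invRev_segment t.hasLeadingInverses t'.hasLeadingInverses
      (by omega) (by omega) (by omega) heq
  four_le_period t := le_trans (by norm_num) (t.le_period (by omega) (by omega))

theorem shift_mem_normalClosure (t : RelatorIndex S p₁ p₂) :
    t.toPeriodic.shift ∈ Subgroup.normalClosure (grpRels S p₁ p₂) := by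
  cases t with
  | pow f p h =>
    rw [toPeriodic, PeriodicWord.shift_ofPow]
    exact Subgroup.subset_normalClosure (by cases h <;> simp [grpRels])
  | chain lo x y h =>
    rw [toPeriodic, BlockWord.shift_ofChain]
    refine Subgroup.subset_normalClosure (Or.inl (Or.inl ?_))
    cases h
    case elt_c a => exact Or.inr ⟨a, Or.inl rfl⟩
    case elt_d a => exact Or.inr ⟨a, Or.inr rfl⟩
    all_goals exact Or.inl (by simp only [Set.mem_insert_iff, Set.mem_singleton_iff, true_or,
      or_true])
  | symbol m hm as h =>
    obtain ⟨g, hg⟩ := isConj_iff.1 (S.isConj_symbolRelator (as := as) hm)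
    rw [toPeriodic, ← hg]
    refine Subgroup.normalClosure_normal.conj_mem _ (Subgroup.subset_normalClosure ?_) _
    rw [IndexedStructure.symbolRelator, IndexedStructure.valueInv]
    split
    · next hf => exact Or.inl (Or.inr ⟨m, hm, hf, as, rfl⟩)
    · next hf => exact Or.inr ⟨m, hm, hf, as, h.resolve_left hf, mul_one _⟩

theorem grpRels_subset_normalClosure : grpRels S p₁ p₂ ⊆
    Subgroup.normalClosure (Set.range fun t : RelatorIndex S p₁ p₂ => t.toPeriodic.shift) := by
  have hshift (t : RelatorIndex S p₁ p₂) : t.toPeriodic.shift ∈ Subgroup.normalClosure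
      (Set.range fun t : RelatorIndex S p₁ p₂ => t.toPeriodic.shift) :=
    Subgroup.subset_normalClosure ⟨t, rfl⟩
  have hpow {f p} (h : IsPowRelator p₁ p₂ f p) :=
    PeriodicWord.shift_ofPow f p h.pos ▸ hshift (pow f p h)
  have hchain {lo x y} (h : IsChainRelator lo x y) :=
    BlockWord.shift_ofChain lo h.ne ▸ hshift (chain lo x y h)
  have hsymbol {m} (hm : 1 ≤ m) {as} (h : S.isFunc m ∨ S.relInterp m as) :
      S.symbolRelator m as ∈ Subgroup.normalClosure
        (Set.range fun t : RelatorIndex S p₁ p₂ => t.toPeriodic.shift) := by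
    obtain ⟨g, hg⟩ := isConj_iff.1 (S.isConj_symbolRelator (as := as) hm).symm
    exact hg ▸ Subgroup.normalClosure_normal.conj_mem _ (hshift (symbol m hm as h)) g
  rintro r (((h | ⟨a, h | h⟩) | ⟨m, hm, hf, as, h⟩) | ⟨m, hm, hf, as, hr, h⟩)
  · simp only [Set.mem_insert_iff, Set.mem_singleton_iff] at h
    rcases h with h | h | h | h | h | h | h | h | h | h <;> rw [h]
    exacts [hpow .f1, hpow .f2, hchain .f1_f2, hchain .f2_f1, hchain .b_f1, hchain .b_f2,
      hchain .c_f1, hchain .c_f2, hchain .d_f1, hchain .d_f2]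
  · exact h ▸ hchain (.elt_c a)
  · exact h ▸ hchain (.elt_d a)
  · have hmem := hsymbol hm (as := as) (.inl hf)
    rwa [IndexedStructure.symbolRelator, IndexedStructure.valueInv, if_pos hf, ← h] at hmem
  · have hmem := hsymbol hm (.inr hr)
    rwa [IndexedStructure.symbolRelator, IndexedStructure.valueInv, if_neg hf, mul_one,
      ← h] at hmem

end RelatorIndex

/-! ### Powers and segments in reduced words -/

section Lists
variable {β : Type*}

theorem exists_append_of_isInfix_append {U A B : List β} (h : U <:+: A ++ B) : ∃ U₁ U₂,
    U = U₁ ++ U₂ ∧ U₁ <:+: A ∧ U₂ <:+: B ∧ (U₁ = [] ∨ U₂ <+: B) ∧ (U₂ = [] ∨ U₁ <:+ A) := by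
  rcases List.infix_append_iff.1 h with h | h | ⟨U₁, U₂, rfl, h₁, h₂⟩
  · exact ⟨U, [], (List.append_nil U).symm, h, List.nil_infix, Or.inr List.nil_prefix, Or.inl rfl⟩
  · exact ⟨[], U, rfl, List.nil_infix, h, Or.inl rfl, Or.inr List.nil_suffix⟩
  · exact ⟨U₁, U₂, rfl, h₁.isInfix, h₂.isInfix, Or.inr h₂, Or.inr h₁⟩

theorem exists_append_of_isPrefix_append {U A B : List β} (h : U <+: A ++ B) : ∃ U₁ U₂,
    U = U₁ ++ U₂ ∧ U₁ <+: A ∧ U₂ <+: B ∧ (U₂ = [] ∨ U₁ <:+ A) := by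
  obtain ⟨t, h⟩ := h
  rcases List.append_eq_append_iff.1 h with ⟨a, hA, -⟩ | ⟨a, rfl, hB⟩
  · exact ⟨U, [], (List.append_nil U).symm, ⟨a, hA.symm⟩, List.nil_prefix, Or.inl rfl⟩
  · exact ⟨A, a, rfl, List.prefix_rfl, ⟨t, hB.symm⟩, Or.inr List.suffix_rfl⟩

theorem exists_append_of_isInfix_append_append {U A B C : List β} (h : U <:+: A ++ B ++ C) :
    ∃ U₁ U' U₂, U = U₁ ++ U' ++ U₂ ∧ U₁ <:+: A ∧ U' <:+: B ∧ U₂ <:+: C ∧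
      (U₁ = [] ∨ U' <+: B) ∧ (U₂ = [] ∨ U' <:+ B) := by
  rw [List.append_assoc] at h
  obtain ⟨U₁, V, rfl, h₁, hV, rfl | hpre, -⟩ := exists_append_of_isInfix_append h
  · obtain ⟨U', U₂, rfl, h', h₂, -, hsuf⟩ := exists_append_of_isInfix_append hV
    exact ⟨[], U', U₂, rfl, h₁, h', h₂, Or.inl rfl, hsuf⟩
  · obtain ⟨U', U₂, rfl, h', h₂, hsuf⟩ := exists_append_of_isPrefix_append hpre
    exact ⟨U₁, U', U₂, (List.append_assoc _ _ _).symm, h₁, h'.isInfix, h₂.isInfix, Or.inr h', hsuf⟩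

theorem isInfix_or_isInfix_of_not_isInfix {U P M S : List β} {c d : β}
    (h : U <:+: P ++ c :: M ++ d :: S) (hcd : ¬ c :: M ++ [d] <:+: U) :
    U <:+: P ++ c :: M ∨ U <:+: M ++ d :: S := by
  rcases List.infix_append_iff.1 h with h | h | ⟨U₁, U₂, rfl, h₁, h₂⟩
  · exact Or.inl h
  · exact Or.inr (h.trans (List.suffix_append M _).isInfix)
  have hcM : c :: M <:+ P ++ c :: M := List.suffix_append P _
  have hlong (hU₁ : c :: M <:+ U₁) : U₁ ++ U₂ <:+: P ++ c :: M := by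
    rcases List.prefix_cons_iff.1 h₂ with rfl | ⟨t, rfl, -⟩
    · rw [List.append_nil]
      exact h₁.isInfix
    · obtain ⟨s, rfl⟩ := hU₁
      exact absurd ⟨s, t, by simp only [List.append_assoc, List.singleton_append]⟩ hcd
  rcases List.suffix_or_suffix_of_suffix h₁ hcM with hU₁ | hU₁
  · rcases List.suffix_cons_iff.1 hU₁ with rfl | hU₁
    · exact Or.inl (hlong List.suffix_rfl)
    · exact Or.inr (List.infix_append_iff.2 (Or.inr (Or.inr ⟨U₁, U₂, rfl, hU₁, h₂⟩)))
  · exact Or.inl (hlong hU₁)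

theorem append_inj_of_head?_not {p : β → Prop} {X Y R T : List β} (hX : ∀ x ∈ X, p x)
    (hY : ∀ x ∈ Y, p x) (hR : ∀ x ∈ R.head?, ¬ p x) (hT : ∀ x ∈ T.head?, ¬ p x)
    (h : X ++ R = Y ++ T) : X = Y ∧ R = T := by
  have key {X Y R T : List β} (hY : ∀ x ∈ Y, p x) (hR : ∀ x ∈ R.head?, ¬ p x) (a : List β)
      (h₁ : Y = X ++ a) (h₂ : R = a ++ T) : X = Y ∧ R = T := by
    rcases a with _ | ⟨c, a⟩
    · exact ⟨(h₁.trans (List.append_nil X)).symm, h₂⟩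
    · exact absurd (hY c (h₁ ▸ List.mem_append_right X List.mem_cons_self)) (hR c (h₂ ▸ rfl))
  rcases List.append_eq_append_iff.1 h with ⟨a, h₁, h₂⟩ | ⟨a, h₁, h₂⟩
  · exact key hY hR a h₁ h₂
  · exact (key hX hT a h₁ h₂).imp Eq.symm Eq.symm

end Lists

section ZPowWord
variable {α : Type*}

/-- The reduced word of the power `f ^ M`. -/
def zpowWord (f : α) (M : ℤ) : List (α × Bool) := List.replicate M.natAbs (f, decide (0 ≤ M))

theorem length_zpowWord (f : α) (M : ℤ) : (zpowWord f M).length = M.natAbs := List.length_replicate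

theorem fst_of_mem_zpowWord {f : α} {M : ℤ} {l : α × Bool} (h : l ∈ zpowWord f M) : l.1 = f := by
  rw [List.eq_of_mem_replicate h]

theorem zpowWord_ne_nil {f : α} {M : ℤ} (hM : M ≠ 0) : zpowWord f M ≠ [] :=
  List.ne_nil_of_length_pos (by rwa [length_zpowWord, Int.natAbs_pos])

theorem zpowWord_injective (f : α) : Function.Injective (zpowWord f) := by
  intro M M' h
  have hlen := congrArg List.length h
  rw [length_zpowWord, length_zpowWord] at hlen
  rcases eq_or_ne M 0 with rfl | hM
  · exact (Int.natAbs_eq_zero.1 hlen.symm).symm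
  · rw [zpowWord, zpowWord, ← hlen, List.replicate_right_inj (Int.natAbs_ne_zero.2 hM)] at h
    have hsign := decide_eq_decide.1 (congrArg Prod.snd h)
    omega

theorem zpowWord_natCast (f : α) (n : ℕ) : zpowWord f n = List.replicate n (f, true) := by
  simp only [zpowWord, Int.natAbs_natCast, Int.natCast_nonneg, decide_true]

theorem zpowWord_neg {f : α} {M : ℤ} (hM : M ≠ 0) :
    zpowWord f (-M) = FreeGroup.invRev (zpowWord f M) := by
  have hsign : decide (0 ≤ -M) = !decide (0 ≤ M) := by
    rw [← decide_not, decide_eq_decide]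
    omega
  simp only [zpowWord, FreeGroup.invRev, List.map_replicate, List.reverse_replicate,
    Int.natAbs_neg, hsign]

theorem mk_zpowWord (f : α) (M : ℤ) : FreeGroup.mk (zpowWord f M) = FreeGroup.of f ^ M := by
  rcases M.eq_nat_or_neg with ⟨n, rfl | rfl⟩
  · rw [zpowWord_natCast, mk_replicate, zpow_natCast]
  · rcases eq_or_ne n 0 with rfl | hn
    · exact FreeGroup.one_eq_mk.symm
    · rw [zpowWord_neg (Int.natCast_ne_zero.2 hn), ← FreeGroup.inv_mk, zpowWord_natCast,
        mk_replicate, zpow_neg, zpow_natCast]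

theorem isReduced_replicate_append {n : ℕ} (hn : n ≠ 0) {l : α × Bool} {V : List (α × Bool)}
    (h : FreeGroup.IsReduced (l :: V)) : FreeGroup.IsReduced (List.replicate n l ++ V) := by
  induction n with
  | zero => exact absurd rfl hn
  | succ n ih =>
    rcases n with _ | n
    · exact h
    · exact List.isChain_cons_cons.2 ⟨fun _ => rfl, ih n.succ_ne_zero⟩

end ZPowWord

section SyllableWord
variable {α : Type*}

/-- The word `f₁ ^ M₁ ⋯ fₖ ^ Mₖ` given by the list of its syllables `(fᵢ, Mᵢ)`. -/
def syllableWord (K : List (α × ℤ)) : List (α × Bool) := K.flatMap fun q => zpowWord q.1 q.2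

/-- Adjacent syllables have distinct generators, and no syllable is trivial, so that the syllables
of the word are determined by the word. -/
structure IsSyllableList (K : List (α × ℤ)) : Prop where
  isChain : K.IsChain fun q q' => q.1 ≠ q'.1
  ne_zero : ∀ q ∈ K, q.2 ≠ 0

variable {f : α} {M : ℤ} {K : List (α × ℤ)}

theorem syllableWord_cons (q : α × ℤ) (K : List (α × ℤ)) :
    syllableWord (q :: K) = zpowWord q.1 q.2 ++ syllableWord K := List.flatMap_cons

theorem IsSyllableList.of_cons {q : α × ℤ} (h : IsSyllableList (q :: K)) : IsSyllableList K :=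
  ⟨h.isChain.tail, fun _ hq => h.ne_zero _ (List.mem_cons_of_mem _ hq)⟩

theorem fst_of_mem_head?_zpowWord_append (hM : M ≠ 0) {V : List (α × Bool)} {l : α × Bool}
    (hl : l ∈ (zpowWord f M ++ V).head?) : l.1 = f := by
  rw [List.head?_append_of_ne_nil _ (zpowWord_ne_nil hM)] at hl
  exact fst_of_mem_zpowWord (List.mem_of_mem_head? hl)

theorem IsSyllableList.fst_ne_of_mem_head? {q : α × ℤ} (h : IsSyllableList (q :: K))
    {l : α × Bool} (hl : l ∈ (syllableWord K).head?) : l.1 ≠ q.1 := by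
  rcases K with _ | ⟨q', K⟩
  · cases hl
  · rw [syllableWord_cons] at hl
    rw [fst_of_mem_head?_zpowWord_append (h.ne_zero q' (by simp)) hl]
    exact (List.isChain_cons_cons.1 h.isChain).1.symm

theorem IsSyllableList.exists_length_le (hK : IsSyllableList K) {U : List (α × Bool)}
    (hne : U ≠ []) (hU : ∀ l ∈ U, l.1 = f) (h : U <:+: syllableWord K) :
    ∃ M, (f, M) ∈ K ∧ U.length ≤ M.natAbs := by
  induction K with
  | nil => exact absurd (List.infix_nil.1 h) hne
  | cons q K ih =>
    have hcons (hM : ∃ M, (f, M) ∈ K ∧ U.length ≤ M.natAbs) :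
        ∃ M, (f, M) ∈ q :: K ∧ U.length ≤ M.natAbs :=
      hM.imp fun M => And.imp_left (List.mem_cons_of_mem q)
    rw [syllableWord_cons] at h
    obtain ⟨U₁, U₂, rfl, h₁, h₂, hpre, -⟩ := exists_append_of_isInfix_append h
    rcases U₁ with _ | ⟨l, U₁⟩
    · exact hcons (ih hK.of_cons h₂)
    have hl : l.1 = q.1 := fst_of_mem_zpowWord (h₁.subset List.mem_cons_self)
    have hf : q.1 = f := hl.symm.trans (hU l List.mem_cons_self)
    rcases U₂ with _ | ⟨l', U₂⟩
    · refine ⟨q.2, hf ▸ List.mem_cons_self, ?_⟩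
      rw [← length_zpowWord q.1, List.append_nil]
      exact h₁.length_le
    · obtain ⟨t, ht⟩ := hpre.resolve_left (List.cons_ne_nil _ _)
      refine absurd ?_ (hK.fst_ne_of_mem_head? (l := l') (by rw [← ht]; rfl))
      rw [hf]
      exact hU l' (by simp)

theorem IsSyllableList.isPrefix_of_isPrefix (hK : IsSyllableList K) {J : List (α × ℤ)}
    (hJ : IsSyllableList J) {d : α × Bool} (hd : ∀ q ∈ J.getLast?, q.1 ≠ d.1)
    (h : syllableWord J ++ [d] <+: syllableWord K) : J <+: K := by
  induction J generalizing K with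
  | nil => exact List.nil_prefix
  | cons q J ih =>
    have hq := hJ.ne_zero q List.mem_cons_self
    rcases K with _ | ⟨q', K⟩
    · exact absurd (List.prefix_nil.1 h) (by simp)
    obtain ⟨t, ht⟩ := h
    rw [syllableWord_cons, syllableWord_cons, List.append_assoc, List.append_assoc] at ht
    have hq' := hK.ne_zero q' List.mem_cons_self
    have hfst : q.1 = q'.1 := by
      obtain ⟨l, hl⟩ : ∃ l, l ∈ (zpowWord q.1 q.2 ++ (syllableWord J ++ ([d] ++ t))).head? :=
        ⟨_, List.head?_eq_some_head (List.append_ne_nil_of_left_ne_nil (zpowWord_ne_nil hq) _)⟩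
      exact (fst_of_mem_head?_zpowWord_append hq hl).symm.trans
        (fst_of_mem_head?_zpowWord_append hq' (ht ▸ hl))
    have hrest : ∀ l ∈ (syllableWord J ++ ([d] ++ t)).head?, ¬ l.1 = q.1 := by
      intro l hl
      rcases J with _ | ⟨r, J⟩
      · obtain rfl : d = l := Option.some.inj hl
        exact (hd q rfl).symm
      · rw [syllableWord_cons, List.append_assoc] at hl
        rw [fst_of_mem_head?_zpowWord_append (hJ.ne_zero r (by simp)) hl]
        exact (List.isChain_cons_cons.1 hJ.isChain).1.symm
    obtain ⟨hzpow, hrest⟩ := append_inj_of_head?_not (fun _ => fst_of_mem_zpowWord)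
      (fun _ h => (fst_of_mem_zpowWord h).trans hfst.symm) hrest
      (fun _ h => hfst ▸ hK.fst_ne_of_mem_head? h) ht
    rw [← hfst] at hzpow
    obtain rfl : q = q' := Prod.ext hfst (zpowWord_injective _ hzpow)
    refine (List.prefix_cons_inj q).2 (ih hK.of_cons hJ.of_cons (fun r hr => hd r ?_)
      ⟨t, by rw [List.append_assoc, hrest]⟩)
    rcases J with _ | ⟨r', J⟩
    · cases hr
    · rwa [List.getLast?_cons_cons]

theorem IsSyllableList.isInfix_of_isInfix (hK : IsSyllableList K) {J : List (α × ℤ)}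
    (hJ : IsSyllableList J) {c d : α × Bool} (hc : ∀ q ∈ J.head?, c.1 ≠ q.1)
    (hd : ∀ q ∈ J.getLast?, q.1 ≠ d.1) (h : c :: syllableWord J ++ [d] <:+: syllableWord K) :
    J <:+: K := by
  rcases J with _ | ⟨r, J⟩
  · exact List.nil_infix
  induction K with
  | nil => exact absurd (List.infix_nil.1 h) (by simp)
  | cons q K ih =>
    have htail (h : c :: syllableWord (r :: J) ++ [d] <:+: syllableWord K) : r :: J <:+: q :: K :=
      (ih hK.of_cons h).trans (List.suffix_cons q K).isInfix
    rw [syllableWord_cons q] at h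
    obtain ⟨U₁, U₂, hU, h₁, h₂, hpre, -⟩ := exists_append_of_isInfix_append h
    rcases U₁ with _ | ⟨c', U₁⟩
    · exact htail (hU ▸ h₂)
    rw [List.cons_append, List.cons_append] at hU
    obtain ⟨rfl, hUtail⟩ := List.cons.inj hU
    have hcq : c.1 = q.1 := fst_of_mem_zpowWord (h₁.subset List.mem_cons_self)
    rcases U₁ with _ | ⟨l, U₁⟩
    · have hpre := hpre.resolve_left (List.cons_ne_nil _ _)
      rw [← show syllableWord (r :: J) ++ [d] = U₂ from hUtail] at hpre
      exact ((hK.of_cons.isPrefix_of_isPrefix hJ hd hpre).isInfix).trans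
        (List.suffix_cons q K).isInfix
    · refine absurd ?_ (hc r rfl)
      rw [syllableWord_cons, List.append_assoc] at hUtail
      rw [hcq, ← fst_of_mem_head?_zpowWord_append (f := r.1) (l := l) (hJ.ne_zero r (by simp))
        (by rw [hUtail]; rfl)]
      exact (fst_of_mem_zpowWord (h₁.subset (by simp))).symm

end SyllableWord

theorem isInfix_invRev {α : Type*} {U V : List (α × Bool)} (h : U <:+: V) :
    FreeGroup.invRev U <:+: FreeGroup.invRev V := by
  obtain ⟨s, t, rfl⟩ := h
  exact ⟨FreeGroup.invRev t, FreeGroup.invRev s, by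
    rw [FreeGroup.invRev_append, FreeGroup.invRev_append, List.append_assoc]⟩

theorem mem_invRev {α : Type*} {U : List (α × Bool)} {l : α × Bool} :
    l ∈ FreeGroup.invRev U ↔ (l.1, !l.2) ∈ U := by
  simp only [FreeGroup.invRev, List.mem_reverse, List.mem_map]
  constructor
  · rintro ⟨l, hl, rfl⟩
    rwa [Bool.not_not]
  · exact fun h => ⟨_, h, by rw [Bool.not_not]⟩

namespace PeriodicWord
variable {α : Type*} {A : PeriodicWord α} {U V : List (α × Bool)}

theorem mem_segment {i : ℤ} {n : ℕ} {l : α × Bool} :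
    l ∈ A.segment i n ↔ ∃ k < n, A.letter (i + k) = l := by
  simp only [segment, List.mem_map, List.mem_range]

/-- `U` is a finite segment of `A` read forwards, or backwards with inverted letters. -/
def IsSegment (A : PeriodicWord α) (U : List (α × Bool)) : Prop :=
  ∃ i n, U = A.segment i n ∨ U = FreeGroup.invRev (A.segment i n)

theorem exists_eq_segment_of_isInfix {i : ℤ} {n : ℕ} (h : U <:+: A.segment i n) :
    ∃ j m, U = A.segment j m := by
  obtain ⟨s, t, h⟩ := h
  have hlen := congrArg List.length h
  rw [List.length_append, List.length_append, length_segment] at hlen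
  rw [← hlen, segment_add, segment_add] at h
  have hst := List.append_inj h (by simp only [List.length_append, length_segment])
  exact ⟨_, _, (List.append_inj hst.1 (length_segment ..).symm).2⟩

namespace IsSegment

theorem invRev (h : A.IsSegment U) : A.IsSegment (FreeGroup.invRev U) := by
  obtain ⟨i, n, rfl | rfl⟩ := h
  · exact ⟨i, n, Or.inr rfl⟩
  · exact ⟨i, n, Or.inl FreeGroup.invRev_invRev⟩

theorem of_isInfix (hV : A.IsSegment V) (h : U <:+: V) : A.IsSegment U := by
  obtain ⟨i, n, rfl | rfl⟩ := hV
  · obtain ⟨j, m, rfl⟩ := exists_eq_segment_of_isInfix h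
    exact ⟨j, m, Or.inl rfl⟩
  · have hinv := isInfix_invRev h
    rw [FreeGroup.invRev_invRev] at hinv
    obtain ⟨j, m, hU⟩ := exists_eq_segment_of_isInfix hinv
    exact ⟨j, m, Or.inr (by rw [← hU, FreeGroup.invRev_invRev])⟩

theorem fst_of_mem {Q : α → Prop} (hQ : ∀ i, Q (A.letter i).1) (h : A.IsSegment U) {l : α × Bool}
    (hl : l ∈ U) : Q l.1 := by
  obtain ⟨i, n, rfl | rfl⟩ := h
  · obtain ⟨k, -, rfl⟩ := mem_segment.1 hl
    exact hQ _
  · obtain ⟨k, -, hk⟩ := mem_segment.1 (mem_invRev.1 hl)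
    exact congrArg Prod.fst hk ▸ hQ _

theorem exists_snd_eq (hA : ∀ i, (A.letter i).2 = true) (h : A.IsSegment U) :
    ∃ s, ∀ l ∈ U, l.2 = s := by
  obtain ⟨i, n, rfl | rfl⟩ := h
  · refine ⟨true, fun l hl => ?_⟩
    obtain ⟨k, -, rfl⟩ := mem_segment.1 hl
    exact hA _
  · refine ⟨false, fun l hl => ?_⟩
    obtain ⟨k, -, hk⟩ := mem_segment.1 (mem_invRev.1 hl)
    exact Bool.not_inj ((congrArg Prod.snd hk).symm.trans (hA _))

theorem exists_shorter {G : Type*} [Group G] {φ : FreeGroup α →* G} (hA : φ A.shift = 1)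
    (h : A.IsSegment U) (hlt : A.period < 2 * U.length) :
    ∃ V : List (α × Bool), V.length < U.length ∧ φ (FreeGroup.mk V) = φ (FreeGroup.mk U) := by
  have hshift (i : ℤ) : φ (A.point (i + A.period)) = φ (A.point i) := by
    rw [point_add_period, map_mul, hA, one_mul]
  have hsegment (i : ℤ) (n : ℕ) :
      φ (FreeGroup.mk (A.segment i n)) = (φ (A.point i))⁻¹ * φ (A.point (i + n)) := by
    rw [point_add_natCast, map_mul, inv_mul_cancel_left]
  have key (i : ℤ) (n : ℕ) (hlt : A.period < 2 * n) : ∃ V : List (α × Bool), V.length < n ∧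
      φ (FreeGroup.mk V) = φ (FreeGroup.mk (A.segment i n)) := by
    have hpos := A.period_pos
    rcases le_total n A.period with hle | hle
    · refine ⟨FreeGroup.invRev (A.segment (i + n) (A.period - n)), ?_, ?_⟩
      · rw [FreeGroup.invRev_length, length_segment]
        omega
      · rw [← FreeGroup.inv_mk, map_inv, hsegment, hsegment, mul_inv_rev, inv_inv, Nat.cast_sub hle,
          add_add_sub_cancel, hshift]
    · refine ⟨A.segment (i + A.period) (n - A.period), ?_, ?_⟩
      · rw [length_segment]
        omega
      · rw [hsegment, hsegment, Nat.cast_sub hle, add_add_sub_cancel, hshift]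
  obtain ⟨i, n, rfl | rfl⟩ := h
  · rw [length_segment] at hlt ⊢
    exact key i n hlt
  · rw [FreeGroup.invRev_length, length_segment] at hlt ⊢
    obtain ⟨V, hV, hVU⟩ := key i n hlt
    refine ⟨FreeGroup.invRev V, FreeGroup.invRev_length.trans_lt hV, ?_⟩
    rw [← FreeGroup.inv_mk, ← FreeGroup.inv_mk, map_inv, map_inv, hVU]

end IsSegment

end PeriodicWord

/-- `H` is reduced, does not begin with a power of `x` and does not end with a power of `y`. -/
structure IsTrimmed {α : Type*} (x y : α) (H : List (α × Bool)) : Prop where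
  isReduced : FreeGroup.IsReduced H
  head_ne : ∀ l ∈ H.head?, l.1 ≠ x
  last_ne : ∀ l ∈ H.getLast?, l.1 ≠ y

/-- The reduced word of `∏ x ^ M * h * y ^ N * h⁻¹` over `N ∈ L`, where `H` spells `h`. -/
def alternatingWord {α : Type*} (x y : α) (M : ℤ) (H : List (α × Bool)) (L : List ℤ) :
    List (α × Bool) :=
  L.flatMap fun N => zpowWord x M ++ H ++ zpowWord y N ++ FreeGroup.invRev H

section Alternating
variable {α : Type*} {x y : α} {H U V : List (α × Bool)} {M N : ℤ} {L : List ℤ}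

theorem IsTrimmed.invRev (h : IsTrimmed x y H) : IsTrimmed y x (FreeGroup.invRev H) where
  isReduced := isReduced_invRev h.isReduced
  head_ne l hl := by
    rw [FreeGroup.invRev, List.head?_reverse, List.getLast?_map, Option.mem_map] at hl
    obtain ⟨q, hq, rfl⟩ := hl
    exact h.last_ne q hq
  last_ne l hl := by
    rw [FreeGroup.invRev, List.getLast?_reverse, List.head?_map, Option.mem_map] at hl
    obtain ⟨q, hq, rfl⟩ := hl
    exact h.head_ne q hq

theorem IsTrimmed.isReduced_cons_append_singleton (h : IsTrimmed x y H) (hxy : x ≠ y)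
    (s t : Bool) : FreeGroup.IsReduced ((x, s) :: (H ++ [(y, t)])) := by
  refine List.isChain_cons.2 ⟨fun l hl hx => ?_, List.isChain_append.2
    ⟨h.isReduced, List.isChain_singleton _, fun l hl l' hl' hy => ?_⟩⟩
  · rcases H with _ | ⟨l', H⟩
    · obtain rfl : (y, t) = l := Option.some.inj hl
      exact absurd hx hxy
    · obtain rfl : l' = l := Option.some.inj hl
      exact absurd hx.symm (h.head_ne _ rfl)
  · obtain rfl : (y, t) = l' := Option.some.inj hl'
    exact absurd hy (h.last_ne l hl)

theorem IsTrimmed.isReduced_zpowWord_append (h : IsTrimmed x y H) (hxy : x ≠ y) (hM : M ≠ 0)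
    (hN : N ≠ 0) (hV : FreeGroup.IsReduced (zpowWord y N ++ V)) :
    FreeGroup.IsReduced (zpowWord x M ++ (H ++ (zpowWord y N ++ V))) := by
  obtain ⟨l, Y, hY⟩ := List.exists_cons_of_ne_nil (zpowWord_ne_nil (f := y) hN)
  obtain ⟨y', t⟩ := l
  obtain rfl : y' = y := fst_of_mem_zpowWord (hY ▸ List.mem_cons_self)
  rw [hY, List.cons_append] at hV ⊢
  refine isReduced_replicate_append (Int.natAbs_ne_zero.2 hM) ?_
  rw [← List.cons_append]
  exact List.isChain_split.2 ⟨h.isReduced_cons_append_singleton hxy _ t, hV⟩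

theorem alternatingWord_cons_append : alternatingWord x y M H (N :: L) ++ V = zpowWord x M ++
    (H ++ (zpowWord y N ++ (FreeGroup.invRev H ++ (alternatingWord x y M H L ++ V)))) := by
  simp only [alternatingWord, List.flatMap_cons, List.append_assoc]

theorem exists_alternatingWord_append_eq :
    ∃ V, alternatingWord x y M H L ++ zpowWord x M = zpowWord x M ++ V := by
  rcases L with _ | ⟨N, L⟩
  · exact ⟨[], (List.append_nil _).symm⟩
  · exact ⟨_, alternatingWord_cons_append⟩

theorem IsTrimmed.isReduced_alternatingWord (h : IsTrimmed x y H) (hxy : x ≠ y) (hM : M ≠ 0)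
    (hL : ∀ N ∈ L, N ≠ 0) : FreeGroup.IsReduced (alternatingWord x y M H L) := by
  suffices hred : FreeGroup.IsReduced (alternatingWord x y M H L ++ zpowWord x M) from
    hred.infix (List.prefix_append _ _).isInfix
  induction L with
  | nil =>
    have hred := isReduced_replicate_append (V := []) (Int.natAbs_ne_zero.2 hM)
      (FreeGroup.IsReduced.singleton (a := (x, decide (0 ≤ M))))
    rwa [List.append_nil] at hred
  | cons N L ih =>
    have hN := hL N List.mem_cons_self
    obtain ⟨V, hV⟩ := exists_alternatingWord_append_eq (x := x) (y := y) (M := M) (H := H) (L := L)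
    rw [alternatingWord_cons_append, hV]
    refine h.isReduced_zpowWord_append hxy hM hN
      (h.invRev.isReduced_zpowWord_append hxy.symm hN hM ?_)
    rw [← hV]
    exact ih fun N hN => hL N (List.mem_cons_of_mem _ hN)

theorem isInfix_or_isInfix_of_no_turn {P Q S : List (α × Bool)} (hH : H ≠ [])
    (hQ : ∀ l : α × Bool, ¬ l :: Q ++ [(l.1, !l.2)] <:+: U)
    (h : U <:+: P ++ (H ++ (Q ++ (FreeGroup.invRev H ++ S)))) :
    U <:+: P ++ H ++ Q ∨ U <:+: Q ++ FreeGroup.invRev H ++ S := by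
  obtain ⟨H₀, z, rfl⟩ : ∃ H₀ z, H = H₀ ++ [z] := ⟨_, _, (List.dropLast_append_getLast hH).symm⟩
  have hinv : FreeGroup.invRev (H₀ ++ [z]) = (z.1, !z.2) :: FreeGroup.invRev H₀ := by
    rw [FreeGroup.invRev_append]
    rfl
  have hcut : U <:+: (P ++ H₀) ++ z :: Q ++ (z.1, !z.2) :: (FreeGroup.invRev H₀ ++ S) := by
    rw [hinv] at h
    simpa only [List.append_assoc, List.cons_append, List.nil_append] using h
  rw [hinv]
  simpa only [List.append_assoc, List.cons_append, List.nil_append] using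
    isInfix_or_isInfix_of_not_isInfix hcut (hQ z)

theorem exists_isInfix_of_isInfix_alternatingWord (hH : H ≠ []) (hL : L ≠ [])
    (hx : ∀ l : α × Bool, ¬ l :: zpowWord x M ++ [(l.1, !l.2)] <:+: U)
    (hy : ∀ N ∈ L, ∀ l : α × Bool, ¬ l :: zpowWord y N ++ [(l.1, !l.2)] <:+: U)
    (h : U <:+: alternatingWord x y M H L ++ zpowWord x M) :
    ∃ N ∈ L, U <:+: zpowWord x M ++ H ++ zpowWord y N ∨
      U <:+: zpowWord y N ++ FreeGroup.invRev H ++ zpowWord x M := by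
  have hH' : FreeGroup.invRev H ≠ [] := by
    rw [Ne, ← List.length_eq_zero_iff, FreeGroup.invRev_length, List.length_eq_zero_iff]
    exact hH
  induction L with
  | nil => exact absurd rfl hL
  | cons N L ih =>
    rw [alternatingWord_cons_append] at h
    rcases isInfix_or_isInfix_of_no_turn hH (hy N List.mem_cons_self) h with h | h
    · exact ⟨N, List.mem_cons_self, Or.inl h⟩
    rcases L with _ | ⟨N', L⟩
    · exact ⟨N, List.mem_cons_self, Or.inr h⟩
    rw [alternatingWord_cons_append, List.append_assoc, ← FreeGroup.invRev_invRev (L₁ := H),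
      FreeGroup.invRev_invRev (L₁ := FreeGroup.invRev H)] at h
    rcases isInfix_or_isInfix_of_no_turn hH' hx h with h | h
    · exact ⟨N, List.mem_cons_self, Or.inr h⟩
    · rw [FreeGroup.invRev_invRev, List.append_assoc, ← alternatingWord_cons_append] at h
      obtain ⟨N'', hN'', h⟩ :=
        ih (List.cons_ne_nil _ _) (fun N hN => hy N (List.mem_cons_of_mem _ hN)) h
      exact ⟨N'', List.mem_cons_of_mem _ hN'', h⟩

end Alternating

namespace BlockWord
variable {α : Type*}

theorem HasShortBlocks.exists_blocks_isInfix {D : BlockWord α} (hD : D.HasShortBlocks) {i : ℤ}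
    {n : ℕ} (hn : D.toPeriodic.period < 12 * n) : ∃ k, (k + 1) % D.numBlocks ≠ 0 ∧
      D.block k ++ D.block (k + 1) ++ [D.toPeriodic.letter (D.start (k + 2))] <:+:
        D.toPeriodic.segment i n := by
  set i₀ := (i % D.toPeriodic.period).toNat
  obtain ⟨k, hk, hi, hend⟩ := hD.exists_block i₀ n hn
  refine ⟨k, hk, ?_⟩
  have hstart (k : ℕ) : D.start (k + 1) = D.start k + ((D.stem k).length + D.exponent k) := rfl
  have hsegment : D.toPeriodic.segment i n = D.toPeriodic.segment i₀ n :=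
    PeriodicWord.segment_eq_segment_iff.2 fun j _ =>
      (PeriodicWord.letter_toNat_emod_add ..).symm
  have h₁ := hstart k
  have h₂ : D.start (k + 2) = _ := hstart (k + 1)
  obtain ⟨r, hr⟩ := Nat.exists_eq_add_of_lt hend
  have hn' : n = (D.start k - i₀) + (((D.stem k).length + D.exponent k) +
      ((D.stem (k + 1)).length + D.exponent (k + 1)) + 1) + r := by omega
  have e₀ : (i₀ : ℤ) + (D.start k - i₀ : ℕ) = D.start k := by omega
  have e₁ : (D.start k : ℤ) + ((D.stem k).length + D.exponent k : ℕ) = D.start (k + 1) := by omega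
  have e₂ : (D.start k : ℤ) + (((D.stem k).length + D.exponent k) +
      ((D.stem (k + 1)).length + D.exponent (k + 1)) : ℕ) = D.start (k + 2) := by omega
  rw [hsegment, hn', PeriodicWord.segment_add, PeriodicWord.segment_add _ _ (D.start k - i₀), e₀,
    PeriodicWord.segment_add, PeriodicWord.segment_add, e₁, e₂, segment_start, segment_start,
    PeriodicWord.segment_one]
  exact ⟨_, _, rfl⟩

section Chain
variable {lo : ℕ} {x y : α} (hxy : x ≠ y)

theorem length_le_of_ofChain_segment {f : α} {i : ℤ} {n : ℕ}
    (h : ∀ l ∈ (ofChain lo hxy).toPeriodic.segment i n, l.1 = f) : n ≤ (lo + 1000) ^ 2 + 1 := by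
  by_contra! hn
  set i₀ := (i % (ofChain lo hxy).toPeriodic.period).toNat with hi₀
  have hletter (j : ℕ) (h₁ : i₀ ≤ j) (h₂ : j < i₀ + n) :
      ((ofChain lo hxy).toPeriodic.letter (j : ℤ)).1 = f := by
    obtain ⟨k, rfl⟩ := Nat.exists_eq_add_of_le h₁
    rw [Nat.cast_add, hi₀, PeriodicWord.letter_toNat_emod_add]
    exact h _ (PeriodicWord.mem_segment.2 ⟨k, by omega, rfl⟩)
  obtain ⟨k, h₁, h₂⟩ := (ofChain lo hxy).exists_start_le_lt i₀
  have hle := ofChain_start_succ_le (lo := lo) hxy k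
  have hlt := (ofChain lo hxy).start_add_two_le k
  have hx := hletter _ h₂.le (by omega)
  have hy := hletter ((ofChain lo hxy).start (k + 1) - 1) (by omega) (by omega)
  rw [ofChain_letter_start] at hx
  rw [ofChain_letter_eq_sep hxy (k := k) (by omega) (by omega)] at hy
  exact hxy (hx.trans hy.symm)

end Chain
end BlockWord

/-- `y ^ a x ^ ε y ^ b` occurs between two letters `x ^ ε` in the cyclic word `chainProd lo x y`
or its inverse. -/
def IsSquareStep (lo : ℕ) (ε a b : ℤ) : Prop :=
  ∃ q : ℕ, lo + 1 ≤ q ∧ q + 1 ≤ lo + 1000 ∧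
    (ε = 1 ∧ a = q ^ 2 ∧ b = (q + 1) ^ 2 ∨ ε = -1 ∧ a = -(q + 1) ^ 2 ∧ b = -q ^ 2)

namespace IsSquareStep
variable {lo : ℕ} {ε a b : ℤ} (h : IsSquareStep lo ε a b)
include h

theorem left_ne_right : a ≠ b := by
  obtain ⟨q, -, -, ⟨-, rfl, rfl⟩ | ⟨-, rfl, rfl⟩⟩ := h
  all_goals
    intro hab
    have : (0 : ℤ) ≤ q := q.cast_nonneg
    linarith

theorem isSyllableList {α : Type*} {x y : α} (hxy : x ≠ y) :
    IsSyllableList [(y, a), (x, ε), (y, b)] := by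
  have hne : ε ≠ 0 ∧ a ≠ 0 ∧ b ≠ 0 := by
    obtain ⟨q, hq, -, ⟨rfl, rfl, rfl⟩ | ⟨rfl, rfl, rfl⟩⟩ := h
    all_goals
      refine ⟨by norm_num, ?_, ?_⟩
      all_goals
        have : (0 : ℤ) < q := by omega
        nlinarith
  exact ⟨by simp [hxy, hxy.symm], by simp [hne]⟩

theorem neg_left_right : IsSquareStep lo (-ε) (-b) (-a) := by
  obtain ⟨q, h₁, h₂, ⟨rfl, rfl, rfl⟩ | ⟨rfl, rfl, rfl⟩⟩ := h
  · exact ⟨q, h₁, h₂, Or.inr ⟨rfl, rfl, rfl⟩⟩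
  · exact ⟨q, h₁, h₂, Or.inl ⟨neg_neg _, neg_neg _, neg_neg _⟩⟩

end IsSquareStep

theorem BlockWord.exists_isSquareStep_of_ofChain_segment {α : Type*} {lo : ℕ} {x y : α}
    (hxy : x ≠ y) {i : ℤ} {n : ℕ} (hn : (ofChain lo hxy).toPeriodic.period < 12 * n) :
    ∃ ε a b, IsSquareStep lo ε a b ∧ (x, true) :: syllableWord [(y, a), (x, ε), (y, b)] ++
      [(x, true)] <:+: (ofChain lo hxy).toPeriodic.segment i n := by
  obtain ⟨k, hk, h⟩ := (ofChain_hasShortBlocks hxy).exists_blocks_isInfix (i := i) hn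
  change (k + 1) % 1000 ≠ 0 at hk
  have hsucc : lo + (k + 1) % 1000 + 1 = lo + k % 1000 + 1 + 1 := by omega
  refine ⟨1, ((lo + k % 1000 + 1 : ℕ) : ℤ) ^ 2, ((lo + k % 1000 + 1 : ℕ) + 1) ^ 2,
    ⟨lo + k % 1000 + 1, by omega, by omega, Or.inl ⟨rfl, rfl, rfl⟩⟩, ?_⟩
  rw [ofChain_letter_start] at h
  convert h using 1
  rw [syllableWord_cons, syllableWord_cons, syllableWord_cons, ← Nat.cast_succ, ← Nat.cast_pow,
    ← Nat.cast_pow, zpowWord_natCast, zpowWord_natCast, block, block]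
  change _ = ([(x, true)] ++ List.replicate ((lo + k % 1000 + 1) ^ 2) (y, true)) ++
    ([(x, true)] ++ List.replicate ((lo + (k + 1) % 1000 + 1) ^ 2) (y, true)) ++ [(x, true)]
  rw [hsucc]
  simp [syllableWord, zpowWord]

theorem PeriodicWord.IsSegment.exists_isSquareStep {α : Type*} {lo : ℕ} {x y : α} {hxy : x ≠ y}
    {U : List (α × Bool)} (hU : (BlockWord.ofChain lo hxy).toPeriodic.IsSegment U)
    (hlen : (BlockWord.ofChain lo hxy).toPeriodic.period < 12 * U.length) :
    ∃ s ε a b, IsSquareStep lo ε a b ∧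
      (x, s) :: syllableWord [(y, a), (x, ε), (y, b)] ++ [(x, s)] <:+: U := by
  obtain ⟨i, n, rfl | rfl⟩ := hU
  · rw [length_segment] at hlen
    exact ⟨true, BlockWord.exists_isSquareStep_of_ofChain_segment hxy hlen⟩
  · rw [FreeGroup.invRev_length, length_segment] at hlen
    obtain ⟨ε, a, b, hstep, h⟩ := BlockWord.exists_isSquareStep_of_ofChain_segment hxy (i := i) hlen
    refine ⟨false, -ε, -b, -a, hstep.neg_left_right, ?_⟩
    have hne := (hstep.isSyllableList hxy).ne_zero
    convert isInfix_invRev h using 1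
    simp only [syllableWord, List.flatMap_cons, List.flatMap_nil, List.append_nil,
      ← List.singleton_append (l := _ ++ _), FreeGroup.invRev_append,
      ← zpowWord_neg (hne (y, a) (by simp)), ← zpowWord_neg (hne (x, ε) (by simp)),
      ← zpowWord_neg (hne (y, b) (by simp)), List.append_assoc]
    rfl

/-! ### Long pieces of relators in `∏ f₁ ^ M H f₂ ^ N H⁻¹` -/

section Lists
variable {β : Type*} {p : β → Prop} {U X H Y : List β}

theorem isInfix_of_isInfix_append_append_left (hU : ∀ l ∈ U, p l) (hX : X.length < U.length)
    (hH : ∀ l ∈ H.head?, ¬ p l) (hY : ∀ l ∈ Y, ¬ p l) (h : U <:+: X ++ H ++ Y) : U <:+: H := by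
  obtain ⟨U₁, U', U₂, rfl, h₁, h', h₂, hpre, -⟩ := exists_append_of_isInfix_append_append h
  rcases U₂ with _ | ⟨l, U₂⟩
  · rcases hpre with rfl | hpre
    · rwa [List.append_nil]
    · rcases U' with _ | ⟨l, U'⟩
      · rw [List.append_nil, List.append_nil] at hX
        exact absurd h₁.length_le hX.not_ge
      · obtain ⟨t, rfl⟩ := hpre
        exact absurd (hU l (by simp)) (hH l rfl)
  · exact absurd (hU l (by simp)) (hY l (h₂.subset List.mem_cons_self))

theorem isInfix_of_isInfix_append_append_right (hU : ∀ l ∈ U, p l) (hY : Y.length < U.length)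
    (hH : ∀ l ∈ H.getLast?, ¬ p l) (hX : ∀ l ∈ X, ¬ p l) (h : U <:+: X ++ H ++ Y) : U <:+: H := by
  refine List.reverse_infix.1 (isInfix_of_isInfix_append_append_left (p := p) (X := Y.reverse)
    (Y := X.reverse) (by simpa only [List.mem_reverse] using hU)
    (by simpa only [List.length_reverse] using hY) (by rwa [List.head?_reverse])
    (by simpa only [List.mem_reverse] using hX) ?_)
  rw [← List.reverse_append, ← List.reverse_append, List.reverse_infix, ← List.append_assoc]
  exact h

end Lists

theorem PeriodicWord.exists_letter_natCast_eq {α : Type*} (A : PeriodicWord α) (i : ℤ) :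
    ∃ j : ℕ, A.letter (j : ℤ) = A.letter i :=
  ⟨(i % A.period).toNat, by simpa only [Nat.cast_zero, add_zero] using A.letter_toNat_emod_add i 0⟩

theorem BlockWord.ofChain_letter_snd {α : Type*} {lo : ℕ} {x y : α} (hxy : x ≠ y) (i : ℤ) :
    ((ofChain lo hxy).toPeriodic.letter i).2 = true := by
  obtain ⟨j, hj⟩ := (ofChain lo hxy).toPeriodic.exists_letter_natCast_eq i
  obtain ⟨k, h₁, h₂⟩ := (ofChain lo hxy).exists_start_le_lt j
  rw [← hj]
  rcases h₁.lt_or_eq with h | rfl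
  · rw [ofChain_letter_eq_sep hxy h h₂]
  · rw [ofChain_letter_start]

theorem alternatingWord_ne_nil {α : Type*} {x y : α} {M : ℤ} {H : List (α × Bool)} {L : List ℤ}
    (hM : M ≠ 0) (hL : L ≠ []) : alternatingWord x y M H L ≠ [] := by
  obtain ⟨N, L, rfl⟩ := List.exists_cons_of_ne_nil hL
  rw [← List.append_nil (alternatingWord ..), alternatingWord_cons_append]
  exact List.append_ne_nil_of_left_ne_nil (zpowWord_ne_nil hM) _

namespace RelatorIndex
variable {S : IndexedStructure} {p₁ p₂ : ℕ} [NeZero p₁] [NeZero p₂] {t : RelatorIndex S p₁ p₂}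
  {U H : List (GenSym S.A × Bool)} {M : ℤ} {L : List ℤ}

theorem exists_isSegment_isInfix (hp₁ : 10 ^ 10 < p₁) (hp₂ : 10 ^ 10 < p₂)
    {W : List (GenSym S.A × Bool)} (hred : FreeGroup.IsReduced W) (hne : W ≠ [])
    (hW : PresentedGroup.mk (grpRels S p₁ p₂) (FreeGroup.mk W) = 1) :
    ∃ (t : RelatorIndex S p₁ p₂) (U : List (GenSym S.A × Bool)), t.toPeriodic.IsSegment U ∧
      3 * t.toPeriodic.period ≤ 4 * U.length + 8 ∧ U <:+: W := by
  classical
  have hword := toWord_mk_of_isReduced hred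
  have hmk : FreeGroup.mk W ≠ 1 := fun h => hne (by rw [← hword, h, FreeGroup.toWord_one])
  obtain ⟨t, i, n, hlen, h⟩ := (smallCancellation hp₁ hp₂).exists_long_segment_isInfix
    (Subgroup.normalClosure_le_normal grpRels_subset_normalClosure
      (PresentedGroup.mk_eq_one_iff.1 hW)) hmk
  rw [hword] at h
  rcases h with h | h
  · exact ⟨t, _, ⟨i, n, Or.inl rfl⟩, by rwa [PeriodicWord.length_segment], h⟩
  · exact ⟨t, _, ⟨i, n, Or.inr rfl⟩,
      by rwa [FreeGroup.invRev_length, PeriodicWord.length_segment], h⟩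

theorem letter_symbol_fst_ne {m : ℕ} {hm : 1 ≤ m} {as : Fin (S.arity m) → S.A}
    {h : S.isFunc m ∨ S.relInterp m as} (i : ℤ) :
    ((symbol (p₁ := p₁) (p₂ := p₂) m hm as h).toPeriodic.letter i).1 ≠ .f1 ∧
      ((symbol (p₁ := p₁) (p₂ := p₂) m hm as h).toPeriodic.letter i).1 ≠ .f2 := by
  obtain ⟨j, hj⟩ := (S.symbolWord m hm as).toPeriodic.exists_letter_natCast_eq i
  rw [toPeriodic, ← hj]
  rcases (S.symbolWord m hm as).letter_eq_b_or_elt j with h | ⟨a, h⟩ <;> simp [h]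

theorem letter_snd_eq_true_or (t : RelatorIndex S p₁ p₂) :
    (∀ i, (t.toPeriodic.letter i).2 = true) ∨
      ∀ i, (t.toPeriodic.letter i).1 ≠ .f1 ∧ (t.toPeriodic.letter i).1 ≠ .f2 := by
  cases t with
  | pow f p h => exact Or.inl fun _ => rfl
  | chain lo x y h => exact Or.inl (BlockWord.ofChain_letter_snd h.ne)
  | symbol m hm as h => exact Or.inr letter_symbol_fst_ne

theorem not_isInfix_of_turn (hU : t.toPeriodic.IsSegment U) {f : GenSym S.A}
    (hf : f = .f1 ∨ f = .f2) (hM : M ≠ 0) (l : GenSym S.A × Bool) :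
    ¬ l :: zpowWord f M ++ [(l.1, !l.2)] <:+: U := by
  intro h
  rcases t.letter_snd_eq_true_or with ht | ht
  · obtain ⟨s, hs⟩ := hU.exists_snd_eq ht
    have h₁ : l.2 = s := hs l (h.subset (by simp))
    have h₂ : (!l.2) = s := hs _ (h.subset (List.mem_append_right _ (List.mem_singleton.2 rfl)))
    exact Bool.not_ne_self _ (h₂.trans h₁.symm)
  · obtain ⟨l', hl'⟩ := List.exists_mem_of_ne_nil _ (zpowWord_ne_nil (f := f) hM)
    have hl'U : l' ∈ U := h.subset (by simp [hl'])
    have hl'f := hU.fst_of_mem (Q := fun a => a ≠ .f1 ∧ a ≠ .f2) ht hl'U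
    rw [fst_of_mem_zpowWord hl'] at hl'f
    exact hf.elim hl'f.1 hl'f.2

theorem length_le_or_eq_pow (hU : t.toPeriodic.IsSegment U) {f : GenSym S.A}
    (hf : f = .f1 ∨ f = .f2) (hUf : ∀ l ∈ U, l.1 = f) :
    60 * U.length ≤ t.toPeriodic.period ∨ ∃ g p h, t = pow g p h := by
  cases t with
  | pow g p h => exact Or.inr ⟨g, p, h, rfl⟩
  | chain lo x y h =>
    have hper := h.le_period (p₁ := p₁) (p₂ := p₂)
    left
    obtain ⟨i, n, rfl | rfl⟩ := hU
    · have := BlockWord.length_le_of_ofChain_segment h.ne hUf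
      rw [PeriodicWord.length_segment]
      omega
    · have := BlockWord.length_le_of_ofChain_segment h.ne (f := f) (i := i) (n := n)
        fun l hl => hUf (l.1, !l.2) (mem_invRev.2 (by rwa [Bool.not_not]))
      rw [FreeGroup.invRev_length, PeriodicWord.length_segment]
      omega
  | symbol m hm as h =>
    left
    rcases U with _ | ⟨l, U⟩
    · exact Nat.zero_le _
    have hne := hU.fst_of_mem (Q := fun a => a ≠ .f1 ∧ a ≠ .f2) letter_symbol_fst_ne
      List.mem_cons_self
    rw [hUf l List.mem_cons_self] at hne
    exact absurd hf (not_or.2 hne)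

theorem isInfix_of_isSegment_pow {g : GenSym S.A} {p : ℕ} {hg : IsPowRelator p₁ p₂ g p} {N : ℤ}
    (hp₁ : 24 ≤ p₁) (hp₂ : 24 ≤ p₂) (hU : (pow g p hg).toPeriodic.IsSegment U)
    (hlen : 3 * (pow g p hg).toPeriodic.period ≤ 4 * U.length + 8) (hH : IsTrimmed .f1 .f2 H)
    (hM : 2 * M.natAbs ≤ p₁) (hN : 2 * N.natAbs ≤ p₂)
    (h : U <:+: zpowWord .f1 M ++ H ++ zpowWord .f2 N) : U <:+: H := by
  change 3 * p ≤ _ at hlen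
  have hUg : ∀ l ∈ U, l.1 = g := fun l hl => hU.fst_of_mem (Q := (· = g)) (fun _ => rfl) hl
  cases hg
  · refine isInfix_of_isInfix_append_append_left hUg ?_ hH.head_ne (fun l hl => ?_) h
    · rw [length_zpowWord]
      omega
    · simp [fst_of_mem_zpowWord hl]
  · refine isInfix_of_isInfix_append_append_right hUg ?_ hH.last_ne (fun l hl => ?_) h
    · rw [length_zpowWord]
      omega
    · simp [fst_of_mem_zpowWord hl]

theorem exists_isSegment_isInfix_of_isInfix_zpowWord {N : ℤ} (hp₁ : 24 ≤ p₁) (hp₂ : 24 ≤ p₂)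
    (hU : t.toPeriodic.IsSegment U) (hlen : 3 * t.toPeriodic.period ≤ 4 * U.length + 8)
    (hH : IsTrimmed .f1 .f2 H) (hM : 2 * M.natAbs ≤ p₁) (hN : 2 * N.natAbs ≤ p₂)
    (h : U <:+: zpowWord .f1 M ++ H ++ zpowWord .f2 N) :
    ∃ U', t.toPeriodic.IsSegment U' ∧ t.toPeriodic.period < 2 * U'.length ∧ U' <:+: H := by
  have hper := t.le_period hp₁ hp₂
  by_cases ht : ∃ g p hg, t = pow g p hg
  · obtain ⟨g, p, hg, rfl⟩ := ht
    exact ⟨U, hU, by omega, isInfix_of_isSegment_pow hp₁ hp₂ hU hlen hH hM hN h⟩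
  obtain ⟨U₁, U', U₂, rfl, h₁, h', h₂, -, -⟩ := exists_append_of_isInfix_append_append h
  have hlen₁ := (length_le_or_eq_pow (hU.of_isInfix ⟨[], U' ++ U₂, by simp⟩) (Or.inl rfl)
    fun l hl => fst_of_mem_zpowWord (h₁.subset hl)).resolve_right ht
  have hlen₂ := (length_le_or_eq_pow (hU.of_isInfix ⟨U₁ ++ U', [], by simp⟩) (Or.inr rfl)
    fun l hl => fst_of_mem_zpowWord (h₂.subset hl)).resolve_right ht
  rw [List.length_append, List.length_append] at hlen
  exact ⟨U', hU.of_isInfix ⟨U₁, U₂, rfl⟩, by omega, h'⟩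

/- No relator segment contains a power of `f₁` or `f₂` together with the mutually inverse letters on
its two sides, so a long one meets a single copy of `H` or `H⁻¹`, and lies mostly inside it. -/
theorem exists_isSegment_isInfix_of_alternatingWord (hp₁ : 10 ^ 10 < p₁) (hp₂ : 10 ^ 10 < p₂)
    (hH : IsTrimmed .f1 .f2 H) (hHne : H ≠ []) (hM : M ≠ 0) (hM' : 2 * M.natAbs ≤ p₁)
    (hLne : L ≠ []) (hL : ∀ N ∈ L, N ≠ 0 ∧ 2 * N.natAbs ≤ p₂)
    (h : PresentedGroup.mk (grpRels S p₁ p₂) (FreeGroup.mk (alternatingWord .f1 .f2 M H L)) = 1) :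
    ∃ (t : RelatorIndex S p₁ p₂) (U : List (GenSym S.A × Bool)), t.toPeriodic.IsSegment U ∧
      t.toPeriodic.period < 2 * U.length ∧ U <:+: H := by
  obtain ⟨t, U, hU, hlen, hUW⟩ := exists_isSegment_isInfix hp₁ hp₂
    (hH.isReduced_alternatingWord (by simp) hM fun N hN => (hL N hN).1)
    (alternatingWord_ne_nil hM hLne) h
  obtain ⟨N, hN, hUN | hUN⟩ := exists_isInfix_of_isInfix_alternatingWord hHne hLne
    (not_isInfix_of_turn hU (Or.inl rfl) hM)
    (fun N hN => not_isInfix_of_turn hU (Or.inr rfl) (hL N hN).1)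
    (hUW.trans (List.prefix_append _ _).isInfix)
  · exact ⟨t, exists_isSegment_isInfix_of_isInfix_zpowWord (by omega) (by omega) hU hlen hH hM'
      (hL N hN).2 hUN⟩
  · have hinv := isInfix_invRev hUN
    rw [FreeGroup.invRev_append, FreeGroup.invRev_append, FreeGroup.invRev_invRev,
      ← zpowWord_neg hM, ← zpowWord_neg (hL N hN).1, ← List.append_assoc] at hinv
    exact ⟨t, exists_isSegment_isInfix_of_isInfix_zpowWord (by omega) (by omega) hU.invRev
      (by rwa [FreeGroup.invRev_length]) hH (by rwa [Int.natAbs_neg])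
      (by rw [Int.natAbs_neg]; exact (hL N hN).2) hinv⟩

theorem exists_shorter_of_alternatingWord (hp₁ : 10 ^ 10 < p₁) (hp₂ : 10 ^ 10 < p₂)
    (hH : IsTrimmed .f1 .f2 H) (hHne : H ≠ []) (hM : M ≠ 0) (hM' : 2 * M.natAbs ≤ p₁)
    (hLne : L ≠ []) (hL : ∀ N ∈ L, N ≠ 0 ∧ 2 * N.natAbs ≤ p₂)
    (h : PresentedGroup.mk (grpRels S p₁ p₂) (FreeGroup.mk (alternatingWord .f1 .f2 M H L)) = 1) :
    ∃ V : List (GenSym S.A × Bool), V.length < H.length ∧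
      PresentedGroup.mk (grpRels S p₁ p₂) (FreeGroup.mk V) =
        PresentedGroup.mk (grpRels S p₁ p₂) (FreeGroup.mk H) := by
  obtain ⟨t, U, hU, hlen, s, r, rfl⟩ :=
    exists_isSegment_isInfix_of_alternatingWord hp₁ hp₂ hH hHne hM hM' hLne hL h
  obtain ⟨V, hVlen, hV⟩ :=
    hU.exists_shorter (PresentedGroup.mk_eq_one_iff.2 t.shift_mem_normalClosure) hlen
  refine ⟨s ++ V ++ r, ?_, ?_⟩
  · simpa only [List.length_append, add_lt_add_iff_left, add_lt_add_iff_right] using hVlen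
  · rw [← FreeGroup.mul_mk, ← FreeGroup.mul_mk, ← FreeGroup.mul_mk, ← FreeGroup.mul_mk, map_mul,
      map_mul, map_mul, map_mul, hV]

end RelatorIndex

section Syllables
variable {α : Type*} {x y : α} {M : ℤ} {L : List ℤ}

/-- The syllables of the word `alternatingWord x y M [] L`. -/
def alternatingSyllables (x y : α) (M : ℤ) (L : List ℤ) : List (α × ℤ) :=
  L.flatMap fun N => [(x, M), (y, N)]

theorem alternatingSyllables_cons (N : ℤ) : alternatingSyllables x y M (N :: L) =
    (x, M) :: (y, N) :: alternatingSyllables x y M L := rfl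

theorem mem_alternatingSyllables {q : α × ℤ} (h : q ∈ alternatingSyllables x y M L) :
    q = (x, M) ∨ ∃ N ∈ L, q = (y, N) := by
  obtain ⟨N, hN, hq⟩ := List.mem_flatMap.1 h
  rcases List.mem_pair.1 hq with rfl | rfl
  · exact Or.inl rfl
  · exact Or.inr ⟨N, hN, rfl⟩

theorem syllableWord_alternatingSyllables :
    syllableWord (alternatingSyllables x y M L) = alternatingWord x y M [] L := by
  simp [syllableWord, alternatingSyllables, alternatingWord, List.flatMap_assoc]

theorem isSyllableList_alternatingSyllables (hxy : x ≠ y) (hM : M ≠ 0) (hL : ∀ N ∈ L, N ≠ 0) :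
    IsSyllableList (alternatingSyllables x y M L) where
  isChain := by
    induction L with
    | nil => exact List.isChain_nil
    | cons N L ih =>
      have ih := ih fun N hN => hL N (List.mem_cons_of_mem _ hN)
      rw [alternatingSyllables_cons, List.isChain_cons_cons]
      refine ⟨hxy, ?_⟩
      rcases L with _ | ⟨N', L⟩
      · exact List.isChain_singleton _
      · exact List.isChain_cons_cons.2 ⟨hxy.symm, ih⟩
  ne_zero q hq := by
    rcases mem_alternatingSyllables hq with rfl | ⟨N, hN, rfl⟩
    · exact hM
    · exact hL N hN

theorem of_isInfix_alternatingSyllables (hxy : x ≠ y) {ε a b : ℤ}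
    (h : [(y, a), (x, ε), (y, b)] <:+: alternatingSyllables x y M L) :
    ε = M ∧ [a, b] <:+: L := by
  induction L with
  | nil => exact absurd (List.infix_nil.1 h) (by simp)
  | cons N L ih =>
    rw [alternatingSyllables_cons, List.infix_cons_iff, List.infix_cons_iff] at h
    rcases h with h | h | h
    · exact absurd (congrArg Prod.fst (List.cons_prefix_cons.1 h).1).symm hxy
    · obtain ⟨haN, h⟩ := List.cons_prefix_cons.1 h
      rcases L with _ | ⟨N', L⟩
      · exact absurd (List.prefix_nil.1 h) (by simp)
      rw [alternatingSyllables_cons, List.cons_prefix_cons, List.cons_prefix_cons] at h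
      obtain ⟨hε, hb, -⟩ := h
      obtain rfl : a = N := congrArg Prod.snd haN
      obtain rfl : b = N' := congrArg Prod.snd hb
      exact ⟨congrArg Prod.snd hε, [], L, rfl⟩
    · exact (ih h).imp_right fun h => h.trans (List.suffix_cons N L).isInfix

end Syllables

namespace RelatorIndex
variable {S : IndexedStructure} {p₁ p₂ : ℕ} [NeZero p₁] [NeZero p₂]
  {U : List (GenSym S.A × Bool)} {M : ℤ} {L : List ℤ}

theorem not_isInfix_of_isSegment_pow {g : GenSym S.A} {p : ℕ} {hg : IsPowRelator p₁ p₂ g p}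
    (hp₁ : 24 ≤ p₁) (hp₂ : 24 ≤ p₂) (hU : (pow g p hg).toPeriodic.IsSegment U)
    (hlen : 3 * (pow g p hg).toPeriodic.period ≤ 4 * U.length + 8) (hM : M ≠ 0)
    (hM' : 2 * M.natAbs ≤ p₁) (hL : ∀ N ∈ L, N ≠ 0 ∧ 2 * N.natAbs ≤ p₂) :
    ¬ U <:+: alternatingWord .f1 .f2 M [] L := by
  intro h
  have hp : 24 ≤ p := le_period hp₁ hp₂ (pow g p hg)
  change 3 * p ≤ _ at hlen
  have hUne : U ≠ [] := List.ne_nil_of_length_pos (by omega)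
  rw [← syllableWord_alternatingSyllables] at h
  obtain ⟨K, hK, hUK⟩ := (isSyllableList_alternatingSyllables (by simp) hM
    fun N hN => (hL N hN).1).exists_length_le hUne
    (fun l hl => hU.fst_of_mem (Q := (· = g)) (fun _ => rfl) hl) h
  have hKp : 2 * K.natAbs ≤ p := by
    rcases mem_alternatingSyllables hK with hq | ⟨N, hN, hq⟩
    all_goals
      obtain ⟨rfl, rfl⟩ := Prod.mk.inj hq
      cases hg
    · exact hM'
    · exact (hL _ hN).2
  omega

theorem isSquareStep_of_isSegment_chain {lo : ℕ} {x y : GenSym S.A} {hxy : IsChainRelator lo x y}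
    (hU : (chain (p₁ := p₁) (p₂ := p₂) lo x y hxy).toPeriodic.IsSegment U)
    (hlen : (chain (p₁ := p₁) (p₂ := p₂) lo x y hxy).toPeriodic.period < 12 * U.length)
    (hM : M ≠ 0) (hL : ∀ N ∈ L, N ≠ 0) (h : U <:+: alternatingWord .f1 .f2 M [] L) :
    ∃ a b, IsSquareStep 4000 M a b ∧ [a, b] <:+: L := by
  have hK : IsSyllableList (alternatingSyllables (.f1 : GenSym S.A) .f2 M L) :=
    isSyllableList_alternatingSyllables (by simp) hM hL
  obtain ⟨s, ε, a, b, hstep, hstepU⟩ := PeriodicWord.IsSegment.exists_isSquareStep hU hlen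
  rw [← syllableWord_alternatingSyllables] at h
  have hinfix := hK.isInfix_of_isInfix (hstep.isSyllableList hxy.ne)
    (by simpa using hxy.ne) (by simpa using hxy.ne.symm) (hstepU.trans h)
  have hmem (q : GenSym S.A × ℤ) (hq : q ∈ [(y, a), (x, ε), (y, b)]) :=
    mem_alternatingSyllables (hinfix.subset hq)
  have ha := hmem (y, a) (by simp)
  have hε := hmem (x, ε) (by simp)
  have hb := hmem (y, b) (by simp)
  cases hxy with
  | f1_f2 =>
    obtain ⟨rfl, hab⟩ := of_isInfix_alternatingSyllables (by simp) hinfix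
    exact ⟨a, b, hstep, hab⟩
  | f2_f1 =>
    simp only [Prod.mk.injEq, true_and, reduceCtorEq, false_and, and_false, exists_false,
      or_false] at ha hb
    exact absurd (ha.trans hb.symm) hstep.left_ne_right
  | _ => simp at hε ha

theorem exists_isSquareStep_of_alternatingWord_nil (hp₁ : 10 ^ 10 < p₁) (hp₂ : 10 ^ 10 < p₂)
    (hM : M ≠ 0) (hM' : 2 * M.natAbs ≤ p₁) (hLne : L ≠ [])
    (hL : ∀ N ∈ L, N ≠ 0 ∧ 2 * N.natAbs ≤ p₂)
    (h : PresentedGroup.mk (grpRels S p₁ p₂) (FreeGroup.mk (alternatingWord .f1 .f2 M [] L)) = 1) :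
    ∃ a b, IsSquareStep 4000 M a b ∧ [a, b] <:+: L := by
  have hL₀ : ∀ N ∈ L, N ≠ 0 := fun N hN => (hL N hN).1
  obtain ⟨t, U, hU, hlen, hUW⟩ := exists_isSegment_isInfix hp₁ hp₂
    (IsTrimmed.isReduced_alternatingWord ⟨FreeGroup.IsReduced.nil, by simp, by simp⟩ (by simp) hM
      hL₀) (alternatingWord_ne_nil hM hLne) h
  have hper := t.le_period (by omega) (by omega)
  cases t with
  | pow g p hg =>
    exact absurd hUW (not_isInfix_of_isSegment_pow (by omega) (by omega) hU hlen hM hM' hL)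
  | chain lo x y hxy => exact isSquareStep_of_isSegment_chain hU (by omega) hM hL₀ hUW
  | symbol m hm as h =>
    obtain ⟨l, hl⟩ := List.exists_mem_of_ne_nil U (List.ne_nil_of_length_pos (by omega))
    have hne := hU.fst_of_mem (Q := fun a => a ≠ .f1 ∧ a ≠ .f2) letter_symbol_fst_ne hl
    have hmem := hUW.subset hl
    rw [← syllableWord_alternatingSyllables] at hmem
    obtain ⟨q, hq, hlq⟩ := List.mem_flatMap.1 hmem
    rw [fst_of_mem_zpowWord hlq] at hne
    rcases mem_alternatingSyllables hq with rfl | ⟨N, -, rfl⟩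
    · exact absurd rfl hne.1
    · exact absurd rfl hne.2

end RelatorIndex

/-! ### Exponents modulo a prime -/

section Arithmetic

theorem two_mul_natAbs_bmod_le (x : ℤ) {p : ℕ} (hp : 0 < p) : 2 * (x.bmod p).natAbs ≤ p := by
  have hlower := Int.le_bmod (x := x) hp
  have hupper := Int.bmod_lt (x := x) hp
  omega

theorem zpow_eq_zpow_of_modEq {G : Type*} [Group G] {x : G} {p : ℕ} (h : x ^ p = 1) {a b : ℤ}
    (hab : a ≡ b [ZMOD p]) : x ^ a = x ^ b := by
  rw [zpow_eq_zpow_emod' a h, hab, ← zpow_eq_zpow_emod' b h]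

/- Eliminating `n` from the two congruences leaves `(q - j) * (2 * q * j + q + j)` divisible by `p`
if `ε = 1`, and `(q + j + 1) * (2 * q * j + q + j + 1)` if `ε = -1`. -/
theorem IsSquareStep.modEq_one {lo p j : ℕ} {ε a b n : ℤ} (h : IsSquareStep lo ε a b)
    (hp : p.Prime) (hlt : 2 * (lo + 1000) ^ 2 < p) (hj₀ : 0 < j) (hj : j + 1 ≤ lo + 1000)
    (ha : n * j ^ 2 ≡ a [ZMOD p]) (hb : n * (j + 1) ^ 2 ≡ b [ZMOD p]) :
    ε = 1 ∧ n ≡ 1 [ZMOD p] := by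
  have hp' : Prime (p : ℤ) := Nat.prime_iff_prime_int.1 hp
  have hab : (p : ℤ) ∣ a * (j + 1) ^ 2 - b * j ^ 2 := by
    refine Int.ModEq.dvd ((hb.symm.mul_right _).trans ?_)
    convert ha.mul_right ((j + 1 : ℤ) ^ 2) using 1
    ring
  obtain ⟨q, hq₀, hq, hεq⟩ := h
  have hqj : 2 * (q * j) + q + j + 1 < p := by nlinarith [Nat.mul_le_mul hq hj]
  zify at hqj
  have hmul : (0 : ℤ) ≤ q * j := by positivity
  rcases hεq with ⟨rfl, rfl, rfl⟩ | ⟨rfl, rfl, rfl⟩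
  · have hdvd : (p : ℤ) ∣ (q - j) * (2 * (q * j) + q + j) := by convert hab using 1; ring
    have heq : q = j := by
      rcases hp'.dvd_or_dvd hdvd with h | h
      · have := Int.eq_zero_of_abs_lt_dvd h (by rw [abs_lt]; constructor <;> omega)
        omega
      · exact absurd (Int.le_of_dvd (by omega) h) (by omega)
    subst heq
    refine ⟨rfl, (Int.modEq_of_dvd ?_).symm⟩
    have hsq : (p : ℤ) ∣ (n - 1) * q ^ 2 := by convert ha.symm.dvd using 1; ring
    refine (hp'.dvd_or_dvd hsq).resolve_right fun h => ?_
    exact absurd (Int.le_of_dvd (by omega) (hp'.dvd_of_dvd_pow h)) (by omega)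
  · have hdvd : (p : ℤ) ∣ (q + j + 1) * (2 * (q * j) + q + j + 1) :=
      (dvd_neg.2 hab).trans (dvd_of_eq (by ring))
    rcases hp'.dvd_or_dvd hdvd with h | h
    all_goals exact absurd (Int.le_of_dvd (by omega) h) (by omega)

theorem exists_eq_of_pair_isInfix_map_range {α : Type*} {f : ℕ → α} {n : ℕ} {a b : α}
    (h : [a, b] <:+: (List.range n).map f) : ∃ i, i + 1 < n ∧ f i = a ∧ f (i + 1) = b := by
  obtain ⟨L₁, L₂, h⟩ := h
  have hlen := congrArg List.length h
  simp only [List.length_append, List.length_cons, List.length_map, List.length_range] at hlen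
  have ha := congrArg (fun l => l[L₁.length]?) h
  have hb := congrArg (fun l => l[L₁.length + 1]?) h
  refine ⟨L₁.length, by omega, ?_, ?_⟩
  · simpa [List.getElem?_range (show L₁.length < n by omega)] using ha.symm
  · simpa [List.getElem?_range (show L₁.length + 1 < n by omega)] using hb.symm

end Arithmetic

section Hom
variable {α G G' : Type*} [Group G] [Group G']

theorem map_chainProd (f : G →* G') (lo : ℕ) (x y : G) :
    f (chainProd lo x y) = chainProd lo (f x) (f y) := by
  simp only [chainProd, map_list_prod, List.map_map, Function.comp_def, map_mul, map_pow]

theorem chainProd_conj (lo : ℕ) (c x y : G) :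
    chainProd lo (c * x * c⁻¹) (c * y * c⁻¹) = c * chainProd lo x y * c⁻¹ := by
  simpa only [MulEquiv.coe_toMonoidHom, MulAut.conj_apply] using
    (map_chainProd (MulAut.conj c).toMonoidHom lo x y).symm

theorem map_mk_alternatingWord (φ : FreeGroup α →* G) (x y : α) (M : ℤ) (H : List (α × Bool))
    (L : List ℤ) : φ (FreeGroup.mk (alternatingWord x y M H L)) =
      (L.map fun N => φ (FreeGroup.of x) ^ M *
        (φ (FreeGroup.mk H) * φ (FreeGroup.of y) ^ N * (φ (FreeGroup.mk H))⁻¹)).prod := by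
  induction L with
  | nil => rw [List.map_nil, List.prod_nil, ← map_one φ]; rfl
  | cons N L ih =>
    have hcons := alternatingWord_cons_append (x := x) (y := y) (M := M) (H := H) (N := N)
      (L := L) (V := [])
    rw [List.append_nil, List.append_nil] at hcons
    rw [hcons]
    simp only [← FreeGroup.mul_mk, ← FreeGroup.inv_mk, mk_zpowWord, map_mul, map_zpow, map_inv, ih,
      List.map_cons, List.prod_cons, mul_assoc]

theorem map_mk_singleton_mem {φ : FreeGroup α →* G} {x : α} {A : Subgroup G}
    (hx : φ (FreeGroup.of x) ∈ A) : ∀ s, φ (FreeGroup.mk [(x, s)]) ∈ A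
  | true => hx
  | false => map_inv φ (FreeGroup.of x) ▸ A.inv_mem hx

/- Take a shortest word spelling an element of the double coset. -/
theorem exists_isTrimmed_mem_doubleCoset {φ : FreeGroup α →* G} (hφ : Function.Surjective φ)
    {x y : α} {A B : Subgroup G} (hx : φ (FreeGroup.of x) ∈ A) (hy : φ (FreeGroup.of y) ∈ B)
    (k : G) : ∃ H : List (α × Bool), IsTrimmed x y H ∧
      φ (FreeGroup.mk H) ∈ DoubleCoset.doubleCoset k A B ∧
      ∀ V : List (α × Bool), V.length < H.length → φ (FreeGroup.mk V) ≠ φ (FreeGroup.mk H) := by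
  classical
  obtain ⟨w, hw, hmin⟩ := (measure (FreeGroup.norm (α := α))).wf.has_min
    {w | φ w ∈ DoubleCoset.doubleCoset k A B} <| by
      obtain ⟨w, rfl⟩ := hφ k
      exact ⟨w, DoubleCoset.mem_doubleCoset_self A B _⟩
  have hshort (V : List (α × Bool)) (hV : V.length < w.toWord.length) :
      φ (FreeGroup.mk V) ∉ DoubleCoset.doubleCoset k A B := fun hmem =>
    hmin _ hmem (FreeGroup.norm_mk_le.trans_lt hV)
  rw [Set.mem_ofPred_eq, ← FreeGroup.mk_toWord (x := w), DoubleCoset.mem_doubleCoset] at hw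
  obtain ⟨s, hs, t, ht, hst⟩ := hw
  refine ⟨w.toWord, ⟨FreeGroup.isReduced_toWord, ?_, ?_⟩,
    DoubleCoset.mem_doubleCoset.2 ⟨s, hs, t, ht, hst⟩, fun V hV heq => ?_⟩
  · rintro ⟨a, σ⟩ hl rfl
    obtain ⟨V, hV⟩ := List.head?_eq_some_iff.1 hl
    refine hshort V (by simp [hV]) (DoubleCoset.mem_doubleCoset.2
      ⟨_, A.mul_mem (A.inv_mem (map_mk_singleton_mem hx σ)) hs, t, ht, ?_⟩)
    rw [mul_assoc _ s, mul_assoc, ← hst, eq_inv_mul_iff_mul_eq, ← map_mul, FreeGroup.mul_mk, hV,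
      List.singleton_append]
  · rintro ⟨a, σ⟩ hl rfl
    obtain ⟨V, hV⟩ := List.getLast?_eq_some_iff.1 hl
    refine hshort V (by simp [hV]) (DoubleCoset.mem_doubleCoset.2
      ⟨s, hs, _, B.mul_mem ht (B.inv_mem (map_mk_singleton_mem hy σ)), ?_⟩)
    rw [← mul_assoc, ← hst, eq_mul_inv_iff_mul_eq, ← map_mul, FreeGroup.mul_mk, hV]
  · exact hshort V hV (heq ▸ DoubleCoset.mem_doubleCoset.2 ⟨s, hs, t, ht, hst⟩)

end Hom

section Conclusion
variable {S : IndexedStructure} {p₁ p₂ : ℕ}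

theorem gen_f1_pow : gen S p₁ p₂ .f1 ^ p₁ = 1 :=
  PresentedGroup.one_of_mem (by simp [grpRels])

theorem gen_f2_pow : gen S p₁ p₂ .f2 ^ p₂ = 1 :=
  PresentedGroup.one_of_mem (by simp [grpRels])

theorem mk_alternatingWord_bmod (m n : ℤ) (lo : ℕ) (H : List (GenSym S.A × Bool)) :
    PresentedGroup.mk (grpRels S p₁ p₂) (FreeGroup.mk (alternatingWord .f1 .f2 (m.bmod p₁) H
      ((List.range 1000).map fun i => (n * (lo + i + 1 : ℕ) ^ 2).bmod p₂))) =
    chainProd lo (gen S p₁ p₂ .f1 ^ m) (PresentedGroup.mk _ (FreeGroup.mk H) *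
      gen S p₁ p₂ .f2 ^ n * (PresentedGroup.mk _ (FreeGroup.mk H))⁻¹) := by
  rw [map_mk_alternatingWord, List.map_map, chainProd]
  refine congrArg List.prod (List.map_congr_left fun i _ => ?_)
  rw [conj_pow, ← zpow_natCast (_ ^ n), ← zpow_mul, Nat.cast_pow]
  exact congrArg₂ (fun a b => a * (_ * b * _))
    (zpow_eq_zpow_of_modEq gen_f1_pow Int.bmod_emod)
    (zpow_eq_zpow_of_modEq gen_f2_pow Int.bmod_emod)

theorem bmod_mul_sq_ne_zero {p j : ℕ} {n : ℤ} (hp : p.Prime) (hn : ¬ (p : ℤ) ∣ n) (hj₀ : 0 < j)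
    (hj : j < p) : (n * (j : ℤ) ^ 2).bmod p ≠ 0 := by
  rw [Ne, ← Int.dvd_iff_bmod_eq_zero]
  intro h
  rcases (Nat.prime_iff_prime_int.1 hp).dvd_or_dvd h with h | h
  · exact hn h
  · have := (Nat.prime_iff_prime_int.1 hp).dvd_of_dvd_pow h
    exact Nat.not_dvd_of_pos_of_lt hj₀ hj (Int.natCast_dvd_natCast.1 this)

theorem eq_nil_and_modEq_one_of_chainProd_eq_one (hp₂ : p₂.Prime) (hbig₁ : 10 ^ 10 < p₁)
    (hbig₂ : 10 ^ 10 < p₂) {m n : ℤ} (hm : ¬ (p₁ : ℤ) ∣ m) (hn : ¬ (p₂ : ℤ) ∣ n)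
    {H : List (GenSym S.A × Bool)} (hH : IsTrimmed .f1 .f2 H)
    (hmin : ∀ V : List (GenSym S.A × Bool), V.length < H.length →
      PresentedGroup.mk (grpRels S p₁ p₂) (FreeGroup.mk V) ≠
        PresentedGroup.mk (grpRels S p₁ p₂) (FreeGroup.mk H))
    (hv : chainProd 4000 (gen S p₁ p₂ .f1 ^ m) (PresentedGroup.mk _ (FreeGroup.mk H) *
      gen S p₁ p₂ .f2 ^ n * (PresentedGroup.mk _ (FreeGroup.mk H))⁻¹) = 1) :
    H = [] ∧ m ≡ 1 [ZMOD p₁] ∧ n ≡ 1 [ZMOD p₂] := by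
  have : NeZero p₁ := ⟨by omega⟩
  have : NeZero p₂ := ⟨by omega⟩
  rw [← mk_alternatingWord_bmod] at hv
  have hM := mt Int.dvd_iff_bmod_eq_zero.2 hm
  have hM' := two_mul_natAbs_bmod_le m (p := p₁) (by omega)
  have hL : ∀ N ∈ (List.range 1000).map fun i => (n * (4000 + i + 1 : ℕ) ^ 2).bmod p₂,
      N ≠ 0 ∧ 2 * N.natAbs ≤ p₂ := by
    simp only [List.forall_mem_map, List.mem_range]
    exact fun i hi => ⟨bmod_mul_sq_ne_zero hp₂ hn (by omega) (by omega),
      two_mul_natAbs_bmod_le _ (by omega)⟩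
  have hLne : (List.range 1000).map (fun i => (n * (4000 + i + 1 : ℕ) ^ 2).bmod p₂) ≠ [] := by
    simp
  obtain rfl : H = [] := by
    by_contra hHne
    obtain ⟨V, hV, hVH⟩ :=
      RelatorIndex.exists_shorter_of_alternatingWord hbig₁ hbig₂ hH hHne hM hM' hLne hL hv
    exact hmin V hV hVH
  obtain ⟨a, b, hstep, hab⟩ :=
    RelatorIndex.exists_isSquareStep_of_alternatingWord_nil hbig₁ hbig₂ hM hM' hLne hL hv
  obtain ⟨i, hi, rfl, rfl⟩ := exists_eq_of_pair_isInfix_map_range hab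
  obtain ⟨hm₁, hn₁⟩ := hstep.modEq_one (n := n) (j := 4000 + i + 1) hp₂ (by omega) (by omega)
    (by omega) Int.bmod_emod.symm (by
      rw [← Nat.cast_succ]
      exact Int.bmod_emod.symm)
  refine ⟨rfl, ?_, hn₁⟩
  rw [← hm₁]
  exact Int.bmod_emod.symm

end Conclusion

theorem stmt_6_general (S : IndexedStructure) (p₁ p₂ : ℕ) (hp₂ : p₂.Prime)
    (hbig₁ : 10 ^ 10 < p₁) (hbig₂ : 10 ^ 10 < p₂)
    (x y g h : GA S p₁ p₂) (m n : ℤ)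
    (hm : ¬ (p₁ : ℤ) ∣ m) (hn : ¬ (p₂ : ℤ) ∣ n)
    (hx : x = g * gen S p₁ p₂ GenSym.f1 ^ m * g⁻¹)
    (hy : y = h * gen S p₁ p₂ GenSym.f2 ^ n * h⁻¹)
    (hv : chainProd 4000 x y = 1) :
    ∃ z : GA S p₁ p₂,
      x = z * gen S p₁ p₂ GenSym.f1 * z⁻¹ ∧ y = z * gen S p₁ p₂ GenSym.f2 * z⁻¹ := by
  obtain ⟨H, hH, hHk, hmin⟩ := exists_isTrimmed_mem_doubleCoset
    (PresentedGroup.mk_surjective (grpRels S p₁ p₂))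
    (Subgroup.mem_zpowers (gen S p₁ p₂ .f1)) (Subgroup.mem_zpowers (gen S p₁ p₂ .f2)) (g⁻¹ * h)
  obtain ⟨_, ⟨s, rfl⟩, _, ⟨t, rfl⟩, hst⟩ := DoubleCoset.mem_doubleCoset.1 hHk
  set F₁ := gen S p₁ p₂ .f1
  set F₂ := gen S p₁ p₂ .f2
  set z := g * (F₁ ^ s)⁻¹ with hz
  set κ := PresentedGroup.mk (grpRels S p₁ p₂) (FreeGroup.mk H) with hκ
  have hxz : x = z * F₁ ^ m * z⁻¹ := by rw [hx, hz]; group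
  have hyz : y = z * (κ * F₂ ^ n * κ⁻¹) * z⁻¹ := by rw [hy, hst, hz]; group
  rw [hxz, hyz, chainProd_conj, conj_eq_one_iff] at hv
  obtain ⟨rfl, hm₁, hn₁⟩ :=
    eq_nil_and_modEq_one_of_chainProd_eq_one hp₂ hbig₁ hbig₂ hm hn hH hmin hv
  have hκ₁ : κ = 1 := map_one (PresentedGroup.mk (grpRels S p₁ p₂))
  refine ⟨z, ?_, ?_⟩
  · rw [hxz, zpow_eq_zpow_of_modEq gen_f1_pow hm₁, zpow_one]
  · rw [hyz, zpow_eq_zpow_of_modEq gen_f2_pow hn₁, zpow_one, hκ₁, one_mul, inv_one, mul_one]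

/-- Lemma `lem:vv`: in `G(𝒜)`, if `x = g f₁^m g⁻¹` and `y = h f₂^n h⁻¹`
with `p₁ ∤ m`, `p₂ ∤ n`, and `v(x,y) = v(y,x) = e`, then `x` and `y` are conjugates of `f₁`
and `f₂` by the same element. -/
theorem stmt_6 (S : IndexedStructure) (p₁ p₂ : ℕ)
    (hp₁ : p₁.Prime) (hp₂ : p₂.Prime) (hne : p₁ ≠ p₂)
    (hbig₁ : 10 ^ 10 < p₁) (hbig₂ : 10 ^ 10 < p₂)
    (x y g h : GA S p₁ p₂) (m n : ℤ)
    (hm : ¬ (p₁ : ℤ) ∣ m) (hn : ¬ (p₂ : ℤ) ∣ n)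
    (hx : x = g * gen S p₁ p₂ GenSym.f1 ^ m * g⁻¹)
    (hy : y = h * gen S p₁ p₂ GenSym.f2 ^ n * h⁻¹)
    (hv₁ : chainProd 4000 x y = 1) (hv₂ : chainProd 4000 y x = 1) :
    ∃ z : GA S p₁ p₂,
      x = z * gen S p₁ p₂ GenSym.f1 * z⁻¹ ∧ y = z * gen S p₁ p₂ GenSym.f2 * z⁻¹ :=
  stmt_6_general S p₁ p₂ hp₂ hbig₁ hbig₂ x y g h m n hm hn hx hy hv₁
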